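/- Let n ≥ 1, let K ⊆ ℂⁿ be a compact O(ℂⁿ)-convex set, let D ⊆ ℂ be an open neighborhood of the closed unit disk 𝔻̄ = {z ∈ ℂ : |z| ≤ 1}, and let g : D → ℂⁿ be an injective holomorphic map with nowhere-vanishing derivative (a holomorphic embedding of a neighborhood of the closed disk) such that g(D) ∩ K = ∅. Then the compact set K ∪ g(𝔻̄) is O(ℂⁿ)-convex, i.e. Ĥ(K ∪ g(𝔻̄)) = K ∪ g(𝔻̄). (This is the claim established in the proof of Lemma 4.4 of the paper, specialized to X = ℂⁿ.) -/

import Mathlib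

/-- The holomorphically convex hull of a set `K ⊆ ℂⁿ`: the set of points `z`
with `‖f z‖ ≤ sup_{w ∈ K} ‖f w‖` for every entire function `f : ℂⁿ → ℂ`. -/
def holomorphicHull {n : ℕ} (K : Set (EuclideanSpace ℂ (Fin n))) :
    Set (EuclideanSpace ℂ (Fin n)) :=
  {z | ∀ f : EuclideanSpace ℂ (Fin n) → ℂ, Differentiable ℂ f →
    ‖f z‖ ≤ sSup ((fun w => ‖f w‖) '' K)}

section
open Set Filter Topology MeasureTheory Metric

/-- Differentiation under the integral sign for a jointly continuous family of holomorphic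
functions. -/
theorem differentiableOn_integral_of_continuousOn {m : ℕ} {U : Set (Fin m → ℂ)} (hU : IsOpen U)
    {a b : ℝ} {h : (Fin m → ℂ) → ℝ → ℂ}
    (hc : ContinuousOn (fun q : (Fin m → ℂ) × ℝ => h q.1 q.2) (U ×ˢ uIcc a b))
    (hd : ∀ s ∈ uIcc a b, DifferentiableOn ℂ (fun x => h x s) U) :
    DifferentiableOn ℂ (fun x => ∫ s in a..b, h x s) U := by
  intro x₀ hx₀
  obtain ⟨r, hr, hrU⟩ := Metric.nhds_basis_closedBall.mem_iff.1 (hU.mem_nhds hx₀)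
  have hcs : ∀ x ∈ U, ContinuousOn (h x) (uIcc a b) := fun x hx =>
    hc.comp (f := fun s => (x, s)) (by fun_prop) (fun s hs => ⟨hx, hs⟩)
  have hcomp : IsCompact (closedBall x₀ r ×ˢ uIcc a b) :=
    (isCompact_closedBall _ _).prod isCompact_uIcc
  obtain ⟨C, hC⟩ := hcomp.exists_bound_of_continuousOn (hc.mono (prod_mono hrU subset_rfl))
  have hsub : uIoc a b ⊆ uIcc a b := uIoc_subset_uIcc
  have hfd : ∀ s ∈ uIcc a b, ∀ x ∈ ball x₀ (r / 2),
      ‖fderiv ℂ (fun x => h x s) x‖ ≤ 2 * C / (r / 2) := by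
    intro s hs x hx
    have hxr : ball x (r / 2) ⊆ closedBall x₀ r := by
      intro y hy
      rw [mem_ball] at hx hy
      rw [mem_closedBall]
      linarith [dist_triangle y x x₀]
    refine Complex.norm_fderiv_le_div_of_mapsTo_ball
      ((hd s hs).mono (hxr.trans hrU)) ?_ (by positivity)
    intro y hy
    rw [mem_closedBall, dist_eq_norm]
    have h1 := hC (y, s) ⟨hxr hy, hs⟩
    have h2 := hC (x, s) ⟨hxr (mem_ball_self (by positivity)), hs⟩
    calc _ ≤ ‖h y s‖ + ‖h x s‖ := norm_sub_le _ _
      _ ≤ _ := by linarith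
  set F' : ℝ → ((Fin m → ℂ) →L[ℂ] ℂ) := fun s => fderiv ℂ (fun x => h x s) x₀
  have hF' : ∀ s ∈ uIcc a b, HasFDerivAt (fun x => h x s) (F' s) x₀ := fun s hs =>
    ((hd s hs).differentiableAt (hU.mem_nhds hx₀)).hasFDerivAt
  have hmeas : AEStronglyMeasurable F' (volume.restrict (uIoc a b)) := by
    have hrep : F' = fun s => ∑ i, (F' s (Pi.single i 1)) •
        (ContinuousLinearMap.proj (R := ℂ) (φ := fun _ : Fin m => ℂ) i) := by
      funext s
      refine ContinuousLinearMap.ext fun v => ?_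
      conv_lhs => rw [pi_eq_sum_univ' v, map_sum]
      simp [mul_comm]
    rw [hrep]
    refine Finset.aestronglyMeasurable_fun_sum _ fun i _ => ?_
    refine AEStronglyMeasurable.smul_const ?_ _
    have hc1 : Tendsto (fun k : ℕ => ‖((k : ℂ) + 1)‖) atTop atTop := by
      have : (fun k : ℕ => ‖((k : ℂ) + 1)‖) = fun k : ℕ => ((k : ℝ) + 1) := by
        funext k
        have : ((k : ℂ) + 1) = ((k + 1 : ℕ) : ℂ) := by push_cast; ring
        rw [this, Complex.norm_natCast]; push_cast; ring
      rw [this]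
      exact tendsto_atTop_add_const_right _ _ tendsto_natCast_atTop_atTop
    have hlim : ∀ᵐ s ∂(volume.restrict (uIoc a b)), Tendsto
        (fun k : ℕ => ((k : ℂ) + 1) • (h (x₀ + ((k : ℂ) + 1)⁻¹ • Pi.single i 1) s - h x₀ s)) atTop
        (𝓝 (F' s (Pi.single i 1))) := by
      refine (ae_restrict_mem measurableSet_uIoc).mono fun s hs => ?_
      exact (hF' s (hsub hs)).lim (Pi.single i 1) hc1
    have hev : ∀ᶠ k : ℕ in atTop, x₀ + ((k : ℂ) + 1)⁻¹ • Pi.single i 1 ∈ U := by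
      have h0 : Tendsto (fun k : ℕ => x₀ + ((k : ℂ) + 1)⁻¹ • (Pi.single i 1 : Fin m → ℂ)) atTop
          (𝓝 (x₀ + (0 : ℂ) • Pi.single i 1)) :=
        tendsto_const_nhds.add (((tendsto_inv₀_cobounded).comp
          (tendsto_norm_atTop_iff_cobounded.1 hc1)).smul_const _)
      rw [zero_smul, add_zero] at h0
      exact h0 (hU.mem_nhds hx₀)
    obtain ⟨k₀, hk₀⟩ := eventually_atTop.1 hev
    refine aestronglyMeasurable_of_tendsto_ae atTop (f := fun k : ℕ => fun s =>
      (((k + k₀ : ℕ) : ℂ) + 1) •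
        (h (x₀ + (((k + k₀ : ℕ) : ℂ) + 1)⁻¹ • Pi.single i 1) s - h x₀ s)) (fun k => ?_) ?_
    · refine ContinuousOn.aestronglyMeasurable ?_ measurableSet_uIoc
      exact (ContinuousOn.const_smul ((hcs _ (hk₀ (k + k₀) (by omega))).sub (hcs _ hx₀))
        (((k + k₀ : ℕ) : ℂ) + 1)).mono hsub
    · exact hlim.mono fun s hs => (tendsto_add_atTop_iff_nat k₀).2 hs
  refine DifferentiableAt.differentiableWithinAt ?_
  refine (intervalIntegral.hasFDerivAt_integral_of_dominated_loc_of_lip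
    (μ := volume) (bound := fun _ => 2 * C / (r / 2)) (F' := F')
    (ball_mem_nhds x₀ (half_pos hr)) ?_ ?_ hmeas ?_ (by simp) ?_).2.differentiableAt
  · filter_upwards [hU.mem_nhds hx₀] with x hx
    exact ((hcs x hx).mono hsub).aestronglyMeasurable measurableSet_uIoc
  · exact (hcs x₀ hx₀).intervalIntegrable
  · refine ae_of_all _ fun s hs => ?_
    refine (convex_ball x₀ (r / 2)).lipschitzOnWith_of_nnnorm_fderiv_le (𝕜 := ℂ) ?_ ?_
    · intro x hx
      refine (hd s (hsub hs)).differentiableAt (hU.mem_nhds (hrU ?_))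
      exact ball_subset_closedBall (ball_subset_ball (by linarith) hx)
    · intro x hx
      rw [← NNReal.coe_le_coe]
      simp only [coe_nnnorm, Real.coe_nnabs]
      exact (hfd s (hsub hs) x hx).trans (le_abs_self _)
  · exact ae_of_all _ fun s hs => hF' s (hsub hs)

theorem integral_div_sub_eq_add {f : ℂ → ℂ} {U : Set ℂ} (hU : IsOpen U)
    (hf : DifferentiableOn ℂ f U) {z : ℂ} (hz : z ∈ U) {γ : ℝ → ℂ} (hγ : Continuous γ) {p q : ℝ}
    (hm : ∀ s ∈ uIcc p q, γ s ∈ U ∧ γ s ≠ z) :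
    ∫ s in p..q, f (γ s) / (γ s - z) =
      (∫ s in p..q, dslope f z (γ s)) + f z * ∫ s in p..q, 1 / (γ s - z) := by
  have hds : ContinuousOn (dslope f z) U :=
    ((Complex.differentiableOn_dslope (hU.mem_nhds hz)).2 hf).continuousOn
  rw [← intervalIntegral.integral_const_mul, ← intervalIntegral.integral_add]
  · refine intervalIntegral.integral_congr fun s hs => ?_
    have hne := sub_ne_zero.2 (hm s hs).2
    simp only [dslope_of_ne _ (hm s hs).2, slope_def_field]
    field_simp
    ring
  · exact (hds.comp hγ.continuousOn fun s hs => (hm s hs).1).intervalIntegrable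
  · refine ContinuousOn.intervalIntegrable ?_
    refine continuousOn_const.mul (continuousOn_const.div (by fun_prop) ?_)
    exact fun s hs => sub_ne_zero.2 (hm s hs).2

theorem integral_one_div_eq_log_sub {γ : ℝ → ℂ} {z γ' : ℂ} {p q : ℝ}
    (hγ : ∀ s, HasDerivAt γ γ' s) (hm : ∀ s ∈ uIcc p q, γ s - z ∈ Complex.slitPlane) :
    γ' * ∫ s in p..q, 1 / (γ s - z) = Complex.log (γ q - z) - Complex.log (γ p - z) := by
  rw [← intervalIntegral.integral_const_mul]
  have hc : Continuous γ := continuous_iff_continuousAt.2 fun s => (hγ s).continuousAt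
  refine intervalIntegral.integral_eq_sub_of_hasDerivAt (f := fun s => Complex.log (γ s - z))
    (fun s hs => ?_) ?_
  · have := ((hγ s).sub_const z).clog_real (hm s hs)
    exact this.congr_deriv (by ring)
  · refine ContinuousOn.intervalIntegrable ?_
    refine continuousOn_const.mul (continuousOn_const.div (by fun_prop) ?_)
    exact fun s hs => Complex.slitPlane_ne_zero (hm s hs)

/-- Cauchy's integral formula on a rectangle. -/
theorem cauchy_integral_formula_rect {f : ℂ → ℂ} {U : Set ℂ} (hU : IsOpen U)
    (hf : DifferentiableOn ℂ f U) {a b α β : ℝ} (hR : Icc a b ×ℂ Icc α β ⊆ U) {z : ℂ}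
    (hz : z ∈ Ioo a b ×ℂ Ioo α β) :
    (∫ x in a..b, f (x + α * Complex.I) / (x + α * Complex.I - z)) -
      (∫ x in a..b, f (x + β * Complex.I) / (x + β * Complex.I - z)) +
      Complex.I * (∫ y in α..β, f (b + y * Complex.I) / (b + y * Complex.I - z)) -
      Complex.I * (∫ y in α..β, f (a + y * Complex.I) / (a + y * Complex.I - z)) =
    2 * Real.pi * Complex.I * f z := by
  obtain ⟨⟨hza, hzb⟩, hzα, hzβ⟩ := hz
  have hab : a ≤ b := (hza.trans hzb).le
  have hαβ : α ≤ β := (hzα.trans hzβ).le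
  have hzU : z ∈ U := hR ⟨⟨hza.le, hzb.le⟩, hzα.le, hzβ.le⟩
  have hzero := Complex.integral_boundary_rect_eq_zero_of_differentiableOn (dslope f z)
    (a + α * Complex.I) (b + β * Complex.I)
    (((Complex.differentiableOn_dslope (hU.mem_nhds hzU)).2 hf).mono (by
      simpa [uIcc_of_le hab, uIcc_of_le hαβ] using hR))
  simp only [Complex.add_re, Complex.ofReal_re, Complex.mul_re, Complex.I_re, mul_zero,
    Complex.ofReal_im, Complex.I_im, mul_one, sub_self, add_zero, Complex.add_im, Complex.mul_im,
    zero_add, smul_eq_mul] at hzero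
  have e1 := integral_div_sub_eq_add hU hf hzU (γ := fun x : ℝ => x + α * Complex.I)
    (by fun_prop) (p := a) (q := b) (fun s hs => by
      rw [uIcc_of_le hab] at hs
      refine ⟨hR (by simpa [Complex.mem_reProdIm] using ⟨hs, hαβ⟩), fun h => ?_⟩
      have := congrArg Complex.im h
      simp at this; linarith)
  have e2 := integral_div_sub_eq_add hU hf hzU (γ := fun x : ℝ => x + β * Complex.I)
    (by fun_prop) (p := a) (q := b) (fun s hs => by
      rw [uIcc_of_le hab] at hs
      refine ⟨hR (by simpa [Complex.mem_reProdIm] using ⟨hs, hαβ⟩), fun h => ?_⟩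
      have := congrArg Complex.im h
      simp at this; linarith)
  have e3 := integral_div_sub_eq_add hU hf hzU (γ := fun y : ℝ => b + y * Complex.I)
    (by fun_prop) (p := α) (q := β) (fun s hs => by
      rw [uIcc_of_le hαβ] at hs
      refine ⟨hR (by simpa [Complex.mem_reProdIm] using ⟨hab, hs⟩), fun h => ?_⟩
      have := congrArg Complex.re h
      simp at this; linarith)
  have e4 := integral_div_sub_eq_add hU hf hzU (γ := fun y : ℝ => a + y * Complex.I)
    (by fun_prop) (p := α) (q := β) (fun s hs => by
      rw [uIcc_of_le hαβ] at hs
      refine ⟨hR (by simpa [Complex.mem_reProdIm] using ⟨hab, hs⟩), fun h => ?_⟩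
      have := congrArg Complex.re h
      simp at this; linarith)
  have hder1 : ∀ (c : ℂ) (s : ℝ), HasDerivAt (fun x : ℝ => (x : ℂ) + c) 1 s := fun c s =>
    (HasDerivAt.ofReal_comp (hasDerivAt_id s)).add_const c |>.congr_deriv (by simp)
  have hder2 : ∀ (c : ℂ) (s : ℝ), HasDerivAt (fun y : ℝ => c + (y : ℂ) * Complex.I) Complex.I s :=
    fun c s => (((HasDerivAt.ofReal_comp (hasDerivAt_id s)).mul_const Complex.I).const_add c)
      |>.congr_deriv (by simp)
  have l1 := integral_one_div_eq_log_sub (z := z) (p := a) (q := b) (hder1 (α * Complex.I))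
    (fun s _ => Or.inr (by simp; intro h; linarith))
  have l2 := integral_one_div_eq_log_sub (z := z) (p := a) (q := b) (hder1 (β * Complex.I))
    (fun s _ => Or.inr (by simp; intro h; linarith))
  have l3 := integral_one_div_eq_log_sub (z := z) (p := α) (q := β) (hder2 b)
    (fun s _ => Or.inl (by simp; linarith))
  have l4 := integral_one_div_eq_log_sub (z := -z) (p := α) (q := β)
    (γ := fun y : ℝ => - (a + (y : ℂ) * Complex.I)) (fun s => (hder2 a s).neg)
    (fun s _ => Or.inl (by simp; linarith))
  have l4' : (∫ y in α..β, 1 / (-(a + (y : ℂ) * Complex.I) - -z)) =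
      - ∫ y in α..β, 1 / ((a + (y : ℂ) * Complex.I) - z) := by
    rw [← intervalIntegral.integral_neg]
    refine intervalIntegral.integral_congr fun s _ => ?_
    rw [← neg_sub', one_div, one_div, ← inv_neg]
  rw [l4'] at l4
  have k1 : Complex.log (-(a + β * Complex.I) - -z) =
      Complex.log (a + β * Complex.I - z) - Real.pi * Complex.I := by
    rw [← neg_sub', Complex.log, Complex.log, norm_neg,
      Complex.arg_neg_eq_arg_sub_pi_of_im_pos (by simp; linarith)]
    push_cast; ring
  have k2 : Complex.log (-(a + α * Complex.I) - -z) =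
      Complex.log (a + α * Complex.I - z) + Real.pi * Complex.I := by
    rw [← neg_sub', Complex.log, Complex.log, norm_neg,
      Complex.arg_neg_eq_arg_add_pi_of_im_neg (by simp; linarith)]
    push_cast; ring
  rw [k1, k2] at l4
  rw [e1, e2, e3, e4]
  linear_combination hzero + f z * (l1 - l2 + l3 - l4)

/-- A holomorphic function `φ` on `U` is a difference of functions holomorphic near `A` and
near `B`, on a neighbourhood of `A ∩ B` inside `U`. -/
def SplitsAcross {m : ℕ} (U : Set (Fin m → ℂ)) (φ : (Fin m → ℂ) → ℂ)
    (A B : Set (Fin m → ℂ)) : Prop :=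
  ∃ (V₁ V₂ : Set (Fin m → ℂ)) (φ₁ φ₂ : (Fin m → ℂ) → ℂ), IsOpen V₁ ∧ IsOpen V₂ ∧
    A ⊆ V₁ ∧ B ⊆ V₂ ∧ V₁ ∩ V₂ ⊆ U ∧ DifferentiableOn ℂ φ₁ V₁ ∧ DifferentiableOn ℂ φ₂ V₂ ∧
    ∀ x ∈ V₁ ∩ V₂, φ x = φ₁ x - φ₂ x

theorem DifferentiableOn.div_of_ne {m : ℕ} {U : Set (Fin m → ℂ)} {f h : (Fin m → ℂ) → ℂ}
    (hf : DifferentiableOn ℂ f U) (hh : DifferentiableOn ℂ h U) (hne : ∀ x ∈ U, h x ≠ 0) :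
    DifferentiableOn ℂ (fun x => f x / h x) U := by
  simp only [div_eq_mul_inv]
  exact hf.mul (hh.inv hne)

theorem differentiable_update {m : ℕ} (j : Fin m) (c : ℂ) :
    Differentiable ℂ (fun x : Fin m → ℂ => Function.update x j c) := by
  refine differentiable_pi.2 fun i => ?_
  by_cases h : i = j
  · subst h; simp
  · simp only [Function.update_of_ne h]; fun_prop

theorem differentiableOn_sideIntegral {m : ℕ} (j : Fin m) (ω : ℂ) {U V : Set (Fin m → ℂ)}
    (hV : IsOpen V) {φ : (Fin m → ℂ) → ℂ} (hφ : DifferentiableOn ℂ φ U)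
    {γ : ℝ → ℂ} (hγ : Continuous γ) {p q : ℝ}
    (hm : ∀ x ∈ V, ∀ s ∈ uIcc p q, Function.update x j (ω⁻¹ * γ s) ∈ U ∧ γ s ≠ ω * x j) :
    DifferentiableOn ℂ (fun x => ∫ s in p..q,
      φ (Function.update x j (ω⁻¹ * γ s)) / (γ s - ω * x j)) V := by
  refine differentiableOn_integral_of_continuousOn hV ?_ ?_
  · refine ContinuousOn.div (hφ.continuousOn.comp (Continuous.continuousOn ?_) ?_)
      (Continuous.continuousOn (by fun_prop)) ?_
    · exact continuous_fst.update j (by fun_prop)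
    · exact fun q hq => (hm q.1 hq.1 q.2 hq.2).1
    · exact fun q hq => sub_ne_zero.2 (hm q.1 hq.1 q.2 hq.2).2
  · intro s hs
    have hden : Differentiable ℂ (fun x : Fin m → ℂ => γ s - ω * x j) := by fun_prop
    have hnum : DifferentiableOn ℂ (fun x => φ (Function.update x j (ω⁻¹ * γ s))) V :=
      hφ.comp (differentiable_update j (ω⁻¹ * γ s)).differentiableOn
        fun x hx => (hm x hx s hs).1
    exact hnum.div_of_ne hden.differentiableOn fun x hx => sub_ne_zero.2 (hm x hx s hs).2

theorem splitsAcross_of_update_mem {m : ℕ} (j : Fin m) {ω : ℂ} (hω : ω ≠ 0)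
    {S U : Set (Fin m → ℂ)} (hS : IsCompact S) (hU : IsOpen U) {φ : (Fin m → ℂ) → ℂ}
    (hφ : DifferentiableOn ℂ φ U) {c α β : ℝ}
    (hSU : ∀ x ∈ S, ∀ t ∈ Icc α β, Function.update x j (ω⁻¹ * (c + t * Complex.I)) ∈ U)
    (hSI : ∀ x ∈ S, (ω * x j).im ∈ Icc α β) :
    SplitsAcross U φ (S ∩ {x | (ω * x j).re ≤ c}) (S ∩ {x | c ≤ (ω * x j).re}) := by
  rcases S.eq_empty_or_nonempty with rfl | ⟨x₀, hx₀⟩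
  · exact ⟨∅, ∅, 0, 0, isOpen_empty, isOpen_empty, by simp, by simp, by simp, by simp, by simp,
      by simp⟩
  have hαβ : α ≤ β := (hSI x₀ hx₀).1.trans (hSI x₀ hx₀).2
  have hseg : IsCompact ((fun t : ℝ => (c : ℂ) + t * Complex.I) '' Icc α β) :=
    isCompact_Icc.image (by fun_prop)
  have hcont : Continuous (fun q : (Fin m → ℂ) × ℂ => Function.update q.1 j (ω⁻¹ * q.2)) :=
    continuous_fst.update j (by fun_prop)
  obtain ⟨W, O, hW, hO, hSW, hsegO, hWO⟩ := generalized_tube_lemma hS hseg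
    (hU.preimage hcont) (by
      rintro ⟨x, μ⟩ ⟨hx, t, ht, rfl⟩
      exact hSU x hx t ht)
  obtain ⟨ε, hε, hεO⟩ := hseg.exists_thickening_subset_open hO hsegO
  set δ := ε / 3 with hδ
  have hδ0 : 0 < δ := by positivity
  have hrect : Icc (c - δ) (c + δ) ×ℂ Icc (α - δ) (β + δ) ⊆ O := by
    intro μ hμ
    obtain ⟨⟨h1, h2⟩, h3, h4⟩ := hμ
    refine hεO (mem_thickening_iff.2 ⟨_, ⟨max α (min μ.im β), ⟨le_max_left _ _,
      max_le hαβ (min_le_right _ _)⟩, rfl⟩, ?_⟩)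
    rw [dist_eq_norm]
    refine (Complex.norm_le_abs_re_add_abs_im _).trans_lt ?_
    simp only [Complex.sub_re, Complex.add_re, Complex.ofReal_re, Complex.mul_re, Complex.I_re,
      Complex.ofReal_im, Complex.I_im, Complex.sub_im, Complex.add_im, Complex.mul_im]
    have a1 : |μ.re - (c + (max α (min μ.im β) * 0 - 0 * 1))| ≤ δ := by
      rw [abs_le]; constructor <;> linarith
    have a2 : |μ.im - (0 + (max α (min μ.im β) * 1 + 0 * 0))| ≤ δ := by
      rw [abs_le]
      rcases le_total μ.im β with h | h
      · rw [min_eq_left h]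
        rcases le_total α μ.im with h' | h'
        · rw [max_eq_right h']; constructor <;> linarith
        · rw [max_eq_left h']; constructor <;> linarith
      · rw [min_eq_right h, max_eq_right hαβ]; constructor <;> linarith
    linarith
  have hmem : ∀ x ∈ W, ∀ μ ∈ Icc (c - δ) (c + δ) ×ℂ Icc (α - δ) (β + δ),
      Function.update x j (ω⁻¹ * μ) ∈ U := fun x hx μ hμ =>
    hWO (show (x, μ) ∈ W ×ˢ O from ⟨hx, hrect hμ⟩)
  set side : (ℝ → ℂ) → ℝ → ℝ → (Fin m → ℂ) → ℂ := fun γ p q x => ∫ s in p..q,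
      φ (Function.update x j (ω⁻¹ * γ s)) / (γ s - ω * x j) with hside
  set a := c - δ
  set b := c + δ
  set α' := α - δ
  set β' := β + δ
  have hab : a ≤ b := by simp only [a, b]; linarith
  have hαβ' : α' ≤ β' := by simp only [α', β']; linarith
  set T := W ∩ ({x | α' < (ω * x j).im} ∩ {x | (ω * x j).im < β'}) with hT
  have hTo : IsOpen T := hW.inter
    ((isOpen_lt (by fun_prop) (by fun_prop)).inter (isOpen_lt (by fun_prop) (by fun_prop)))
  have hST : S ⊆ T := fun x hx => ⟨hSW hx, show α - δ < (ω * x j).im by linarith [(hSI x hx).1],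
    show (ω * x j).im < β + δ by linarith [(hSI x hx).2]⟩
  have hV₁ : IsOpen (T ∩ {x | (ω * x j).re < b}) :=
    hTo.inter (isOpen_lt (by fun_prop) (by fun_prop))
  have hV₂ : IsOpen (T ∩ {x | a < (ω * x j).re}) :=
    hTo.inter (isOpen_lt (by fun_prop) (by fun_prop))
  have hor : ∀ t : ℝ, ∀ x ∈ T, t = α' ∨ t = β' → ∀ s ∈ uIcc a b,
      Function.update x j (ω⁻¹ * (s + t * Complex.I)) ∈ U ∧ s + t * Complex.I ≠ ω * x j := by
    intro t x hx ht s hs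
    rw [uIcc_of_le hab] at hs
    refine ⟨hmem x hx.1 _ ?_, fun h => ?_⟩
    · rcases ht with rfl | rfl <;> simpa [Complex.mem_reProdIm] using ⟨hs, hαβ'⟩
    · have h1 : α' < (ω * x j).im := hx.2.1
      have h2 : (ω * x j).im < β' := hx.2.2
      have h3 : (ω * x j).im = t := by rw [← h]; simp
      rcases ht with rfl | rfl <;> linarith
  have hver : ∀ t : ℝ, ∀ x ∈ T, t ∈ Icc a b → t ≠ (ω * x j).re → ∀ s ∈ uIcc α' β',
      Function.update x j (ω⁻¹ * (t + s * Complex.I)) ∈ U ∧ t + s * Complex.I ≠ ω * x j := by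
    intro t x hx ht htx s hs
    rw [uIcc_of_le hαβ'] at hs
    refine ⟨hmem x hx.1 _ (by simpa [Complex.mem_reProdIm] using ⟨ht, hs⟩), fun h => ?_⟩
    exact htx (by rw [← h]; simp)
  refine ⟨T ∩ {x | (ω * x j).re < b}, T ∩ {x | a < (ω * x j).re},
    fun x => (2 * Real.pi * Complex.I)⁻¹ * (side (fun s => s + α' * Complex.I) a b x -
      side (fun s => s + β' * Complex.I) a b x +
      Complex.I * side (fun s => b + s * Complex.I) α' β' x),
    fun x => (2 * Real.pi * Complex.I)⁻¹ * (Complex.I * side (fun s => a + s * Complex.I) α' β' x),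
    hV₁, hV₂, ?_, ?_, ?_, ?_, ?_, ?_⟩
  · rintro x ⟨hx, hxc⟩
    exact ⟨hST hx, lt_of_le_of_lt hxc (show c < c + δ by linarith)⟩
  · rintro x ⟨hx, hxc⟩
    exact ⟨hST hx, lt_of_lt_of_le (show c - δ < c by linarith) hxc⟩
  · rintro x ⟨⟨hx, hxb⟩, -, hxa⟩
    have := hmem x hx.1 (ω * x j) ⟨⟨le_of_lt hxa, le_of_lt hxb⟩, hx.2.1.le, hx.2.2.le⟩
    rwa [inv_mul_cancel_left₀ hω, Function.update_eq_self] at this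
  · refine DifferentiableOn.const_mul (((?_ : DifferentiableOn _ _ _).sub ?_).add
      (DifferentiableOn.const_mul ?_ _)) _
    · exact differentiableOn_sideIntegral j ω hV₁ hφ (by fun_prop)
        fun x hx s hs => hor _ x hx.1 (Or.inl rfl) s hs
    · exact differentiableOn_sideIntegral j ω hV₁ hφ (by fun_prop)
        fun x hx s hs => hor _ x hx.1 (Or.inr rfl) s hs
    · exact differentiableOn_sideIntegral j ω hV₁ hφ (by fun_prop)
        fun x hx s hs => hver _ x hx.1 ⟨hab, le_rfl⟩ (ne_of_gt hx.2) s hs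
  · refine DifferentiableOn.const_mul (DifferentiableOn.const_mul ?_ _) _
    exact differentiableOn_sideIntegral j ω hV₂ hφ (by fun_prop)
      fun x hx s hs => hver _ x hx.1 ⟨le_rfl, hab⟩ (ne_of_lt hx.2) s hs
  · rintro x ⟨⟨hx, hxb⟩, -, hxa⟩
    have hcur : Continuous (fun μ : ℂ => Function.update x j (ω⁻¹ * μ)) :=
      continuous_const.update j (by fun_prop)
    have hdc : Differentiable ℂ (fun μ : ℂ => Function.update x j (ω⁻¹ * μ)) := by
      refine differentiable_pi.2 fun i => ?_
      by_cases h : i = j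
      · subst h; simp only [Function.update_self]; fun_prop
      · simp only [Function.update_of_ne h]; fun_prop
    have := cauchy_integral_formula_rect (f := fun μ => φ (Function.update x j (ω⁻¹ * μ)))
      (hU.preimage hcur) (hφ.comp hdc.differentiableOn fun μ hμ => hμ)
      (a := a) (b := b) (α := α') (β := β') (fun μ hμ => hmem x hx.1 μ hμ) (z := ω * x j)
      ⟨⟨hxa, hxb⟩, hx.2⟩
    simp only [inv_mul_cancel_left₀ hω, Function.update_eq_self] at this
    have hpi : (2 * Real.pi * Complex.I : ℂ) ≠ 0 := by
      simp [Real.pi_ne_zero, Complex.I_ne_zero]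
    simp only [hside]
    rw [← mul_sub, this, inv_mul_cancel_left₀ hpi]

theorem exists_differentiableOn_union {m : ℕ} {A B : Set (Fin m → ℂ)} (hA : IsOpen A)
    (hB : IsOpen B) {f₁ f₂ : (Fin m → ℂ) → ℂ} (h₁ : DifferentiableOn ℂ f₁ A)
    (h₂ : DifferentiableOn ℂ f₂ B) (h : ∀ x ∈ A ∩ B, f₁ x = f₂ x) :
    ∃ F : (Fin m → ℂ) → ℂ, DifferentiableOn ℂ F (A ∪ B) ∧ (∀ x ∈ A, F x = f₁ x) ∧
      ∀ x ∈ B, F x = f₂ x := by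
  classical
  have e₁ : ∀ x ∈ A, (if x ∈ A then f₁ x else f₂ x) = f₁ x := fun x hx => if_pos hx
  have e₂ : ∀ x ∈ B, (if x ∈ A then f₁ x else f₂ x) = f₂ x := fun x hx => by
    by_cases hxA : x ∈ A
    · rw [if_pos hxA, h x ⟨hxA, hx⟩]
    · rw [if_neg hxA]
  refine ⟨fun x => if x ∈ A then f₁ x else f₂ x, ?_, e₁, e₂⟩
  exact (h₁.congr e₁).union_of_isOpen (h₂.congr e₂) hA hB

theorem exists_isOpen_inter_subset {X : Type*} [TopologicalSpace X] [T2Space X] {A B U : Set X}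
    (hA : IsCompact A) (hB : IsCompact B) (hU : IsOpen U) (h : A ∩ B ⊆ U) :
    ∃ O₁ O₂ : Set X, IsOpen O₁ ∧ IsOpen O₂ ∧ A ⊆ O₁ ∧ B ⊆ O₂ ∧ O₁ ∩ O₂ ⊆ U := by
  obtain ⟨P₁, P₂, h₁, h₂, hA₁, hB₂, hd⟩ := SeparatedNhds.of_isCompact_isCompact (hA.diff hU)
    (hB.diff hU) (by
      rw [Set.disjoint_left]
      exact fun x hx hx' => hx.2 (h ⟨hx.1, hx'.1⟩))
  refine ⟨P₁ ∪ U, P₂ ∪ U, h₁.union hU, h₂.union hU, ?_, ?_, ?_⟩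
  · intro x hx
    by_cases hxU : x ∈ U
    exacts [Or.inr hxU, Or.inl (hA₁ ⟨hx, hxU⟩)]
  · intro x hx
    by_cases hxU : x ∈ U
    exacts [Or.inr hxU, Or.inl (hB₂ ⟨hx, hxU⟩)]
  · rintro x ⟨hx | hx, hx' | hx'⟩
    exacts [absurd hx' (Set.disjoint_left.1 hd hx), hx', hx, hx]

theorem splitsAcross_empty_left {m : ℕ} (U : Set (Fin m → ℂ)) (φ : (Fin m → ℂ) → ℂ)
    (B : Set (Fin m → ℂ)) : SplitsAcross U φ ∅ B :=
  ⟨∅, univ, 0, 0, isOpen_empty, isOpen_univ, by simp, by simp, by simp, by simp,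
    differentiableOn_const _, by simp⟩

theorem splitsAcross_empty_right {m : ℕ} (U : Set (Fin m → ℂ)) (φ : (Fin m → ℂ) → ℂ)
    (A : Set (Fin m → ℂ)) : SplitsAcross U φ A ∅ :=
  ⟨univ, ∅, 0, 0, isOpen_univ, isOpen_empty, by simp, by simp, by simp,
    differentiableOn_const _, by simp, by simp⟩

/-- The real coordinates on `ℂᵐ`: `(j, false)` is the real part and `(j, true)` the imaginary
part of the `j`-th coordinate. -/
def realCoord {m : ℕ} (i : Fin m × Bool) (x : Fin m → ℂ) : ℝ :=
  if i.2 then (x i.1).im else (x i.1).re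

theorem continuous_realCoord {m : ℕ} (i : Fin m × Bool) :
    Continuous (realCoord i : (Fin m → ℂ) → ℝ) := by
  unfold realCoord
  split_ifs <;> fun_prop

/-- The polyhedron cut out of a box by the conditions that the functions in `ps` take values in
the square `[-R, R]²`. -/
def polyhedron (R : ℝ) {m : ℕ} (lo hi : Fin m × Bool → ℝ) (ps : List ((Fin m → ℂ) → ℂ)) :
    Set (Fin m → ℂ) :=
  {x | (∀ i, realCoord i x ∈ Icc (lo i) (hi i)) ∧ ∀ p ∈ ps, |(p x).re| ≤ R ∧ |(p x).im| ≤ R}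

theorem norm_sub_le_of_realCoord {m : ℕ} {x y : Fin m → ℂ} {η : ℝ} (hη : 0 ≤ η)
    (h : ∀ i, |realCoord i x - realCoord i y| ≤ η) : ‖x - y‖ ≤ 2 * η := by
  refine (pi_norm_le_iff_of_nonneg (by positivity)).2 fun j => ?_
  have h1 := h (j, false)
  have h2 := h (j, true)
  simp only [realCoord, Bool.false_eq_true, if_false, if_true] at h1 h2
  refine (Complex.norm_le_abs_re_add_abs_im _).trans ?_
  simp only [Pi.sub_apply, Complex.sub_re, Complex.sub_im]
  linarith

theorem isCompact_polyhedron {R : ℝ} {m : ℕ} {lo hi : Fin m × Bool → ℝ}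
    {ps : List ((Fin m → ℂ) → ℂ)} (hps : ∀ p ∈ ps, Differentiable ℂ p) :
    IsCompact (polyhedron R lo hi ps) := by
  refine Metric.isCompact_of_isClosed_isBounded ?_ ?_
  · have : polyhedron R lo hi ps = (⋂ i, {x | realCoord i x ∈ Icc (lo i) (hi i)}) ∩
        ⋂ p ∈ ps, {x | |(p x).re| ≤ R ∧ |(p x).im| ≤ R} := by
      ext x; simp [polyhedron]
    rw [this]
    refine (isClosed_iInter fun i => isClosed_Icc.preimage (continuous_realCoord i)).inter
      (isClosed_biInter fun p hp => ?_)
    have hc := (hps p hp).continuous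
    have h1 : IsClosed {x | |(p x).re| ≤ R} := isClosed_le (by fun_prop) (by fun_prop)
    have h2 : IsClosed {x | |(p x).im| ≤ R} := isClosed_le (by fun_prop) (by fun_prop)
    exact h1.inter h2
  · refine isBounded_iff_forall_norm_le.2 ⟨2 * ∑ i, (|lo i| + |hi i|), fun x hx => ?_⟩
    have := norm_sub_le_of_realCoord (x := x) (y := 0) (η := ∑ i, (|lo i| + |hi i|))
      (Finset.sum_nonneg fun i _ => by positivity) (fun i => ?_)
    · simpa using this
    · have h0 : realCoord i (0 : Fin m → ℂ) = 0 := by simp [realCoord]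
      have h1 := Finset.single_le_sum (f := fun i => |lo i| + |hi i|)
        (fun i _ => by positivity) (Finset.mem_univ i)
      rw [h0, sub_zero]
      refine le_trans ?_ h1
      have h2 := (hx.1 i).1
      have h3 := (hx.1 i).2
      rw [abs_le]
      constructor
      · linarith [neg_abs_le (lo i), abs_nonneg (hi i)]
      · linarith [le_abs_self (hi i), abs_nonneg (lo i)]

/-- Every function holomorphic near a slice of a polyhedron by a real coordinate hyperplane is
a difference of functions holomorphic near the two halves. -/
def SlicesSplit (R : ℝ) {m : ℕ} (ps : List ((Fin m → ℂ) → ℂ)) : Prop :=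
  ∀ (lo hi : Fin m × Bool → ℝ) (i : Fin m × Bool) (c : ℝ) (U : Set (Fin m → ℂ))
    (φ : (Fin m → ℂ) → ℂ), IsOpen U → DifferentiableOn ℂ φ U →
    polyhedron R lo hi ps ∩ {x | realCoord i x = c} ⊆ U →
    SplitsAcross U φ (polyhedron R lo hi ps ∩ {x | realCoord i x ≤ c})
      (polyhedron R lo hi ps ∩ {x | c ≤ realCoord i x})

theorem splitsAcross_of_mem_Icc {R : ℝ} {m : ℕ} {ps : List ((Fin m → ℂ) → ℂ)}
    {lo hi : Fin m × Bool → ℝ} {i : Fin m × Bool} {c : ℝ} {U : Set (Fin m → ℂ)}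
    {φ : (Fin m → ℂ) → ℂ}
    (h : c ∈ Icc (lo i) (hi i) →
      SplitsAcross U φ (polyhedron R lo hi ps ∩ {x | realCoord i x ≤ c})
      (polyhedron R lo hi ps ∩ {x | c ≤ realCoord i x})) :
    SplitsAcross U φ (polyhedron R lo hi ps ∩ {x | realCoord i x ≤ c})
      (polyhedron R lo hi ps ∩ {x | c ≤ realCoord i x}) := by
  by_cases h1 : lo i ≤ c
  · by_cases h2 : c ≤ hi i
    · exact h ⟨h1, h2⟩
    · have : polyhedron R lo hi ps ∩ {x | c ≤ realCoord i x} = ∅ := by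
        ext x
        simp only [mem_inter_iff, mem_ofPred_eq, mem_empty_iff_false, iff_false, not_and, not_le]
        intro hx
        exact lt_of_le_of_lt (hx.1 i).2 (not_le.1 h2)
      rw [this]
      exact splitsAcross_empty_right _ _ _
  · have : polyhedron R lo hi ps ∩ {x | realCoord i x ≤ c} = ∅ := by
      ext x
      simp only [mem_inter_iff, mem_ofPred_eq, mem_empty_iff_false, iff_false, not_and, not_le]
      intro hx
      exact lt_of_lt_of_le (not_le.1 h1) (hx.1 i).1
    rw [this]
    exact splitsAcross_empty_left _ _ _

theorem slicesSplit_nil (R : ℝ) (m : ℕ) : SlicesSplit R ([] : List ((Fin m → ℂ) → ℂ)) := by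
  rintro lo hi ⟨j, b⟩ c U φ hU hφ hsl
  refine splitsAcross_of_mem_Icc fun hc => ?_
  have hS : IsCompact (polyhedron R lo hi []) := isCompact_polyhedron (by simp)
  cases b
  · have := splitsAcross_of_update_mem j one_ne_zero hS hU hφ (c := c) (α := lo (j, true))
      (β := hi (j, true)) ?_ ?_
    · simpa [realCoord] using this
    · rintro x hx t ht
      refine hsl ⟨⟨?_, by simp⟩, by simp [realCoord]⟩
      rintro ⟨k, b⟩
      by_cases hk : k = j
      · subst hk
        cases b
        · simpa [realCoord] using hc
        · simpa [realCoord] using ht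
      · simpa [realCoord, Function.update_of_ne hk] using hx.1 (k, b)
    · intro x hx
      simpa [realCoord] using hx.1 (j, true)
  · have := splitsAcross_of_update_mem j (neg_ne_zero.2 Complex.I_ne_zero) hS hU hφ (c := c)
      (α := - hi (j, false)) (β := - lo (j, false)) ?_ ?_
    · simpa [realCoord] using this
    · rintro x hx t ht
      refine hsl ⟨⟨?_, by simp⟩, by simp [realCoord]⟩
      rintro ⟨k, b⟩
      by_cases hk : k = j
      · subst hk
        cases b
        · simp only [mem_Icc] at ht
          simp [realCoord]
          constructor <;> linarith [ht.1, ht.2]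
        · simpa [realCoord] using hc
      · simpa [realCoord, Function.update_of_ne hk] using hx.1 (k, b)
    · intro x hx
      have := hx.1 (j, false)
      simp [realCoord] at this ⊢
      exact ⟨this.2, this.1⟩

/-- The additive Cousin problem for the pair `U₁`, `U₂` and the function `φ` is solvable near
`S`. -/
def CousinSolvable {m : ℕ} (S U₁ U₂ : Set (Fin m → ℂ)) (φ : (Fin m → ℂ) → ℂ) : Prop :=
  ∃ (V : Set (Fin m → ℂ)) (φ₁ φ₂ : (Fin m → ℂ) → ℂ), IsOpen V ∧ S ⊆ V ∧
    DifferentiableOn ℂ φ₁ (U₁ ∩ V) ∧ DifferentiableOn ℂ φ₂ (U₂ ∩ V) ∧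
    ∀ x ∈ U₁ ∩ U₂ ∩ V, φ x = φ₁ x - φ₂ x

theorem cousinSolvable_of_subset {m : ℕ} {S U₁ U₂ : Set (Fin m → ℂ)} {φ : (Fin m → ℂ) → ℂ}
    (hU₁ : IsOpen U₁) (hU₂ : IsOpen U₂) (hφ : DifferentiableOn ℂ φ (U₁ ∩ U₂))
    (h : S ⊆ U₁ ∨ S ⊆ U₂) : CousinSolvable S U₁ U₂ φ := by
  rcases h with h | h
  · refine ⟨U₁, 0, fun x => - φ x, hU₁, h, differentiableOn_const _, ?_, by simp⟩
    rw [inter_comm]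
    exact hφ.neg
  · exact ⟨U₂, φ, 0, hU₂, h, hφ, differentiableOn_const _, by simp⟩

theorem CousinSolvable.union {m : ℕ} {A B U₁ U₂ : Set (Fin m → ℂ)} {φ : (Fin m → ℂ) → ℂ}
    (hU₁ : IsOpen U₁) (hU₂ : IsOpen U₂)
    (hA : CousinSolvable A U₁ U₂ φ) (hB : CousinSolvable B U₁ U₂ φ)
    (hsub : A ∪ B ⊆ U₁ ∪ U₂)
    (hsplit : ∀ (U : Set (Fin m → ℂ)) (ψ : (Fin m → ℂ) → ℂ), IsOpen U →
      DifferentiableOn ℂ ψ U → A ∩ B ⊆ U → SplitsAcross U ψ A B) :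
    CousinSolvable (A ∪ B) U₁ U₂ φ := by
  obtain ⟨Va, a₁, a₂, hVa, hAVa, ha₁, ha₂, ha⟩ := hA
  obtain ⟨Vb, b₁, b₂, hVb, hBVb, hb₁, hb₂, hb⟩ := hB
  have hVab : IsOpen (Va ∩ Vb) := hVa.inter hVb
  obtain ⟨ψ, hψ, hψ₁, hψ₂⟩ := exists_differentiableOn_union (A := U₁ ∩ (Va ∩ Vb))
    (B := U₂ ∩ (Va ∩ Vb)) (f₁ := fun x => a₁ x - b₁ x) (f₂ := fun x => a₂ x - b₂ x)
    (hU₁.inter hVab) (hU₂.inter hVab)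
    ((ha₁.mono fun x hx => ⟨hx.1, hx.2.1⟩).sub (hb₁.mono fun x hx => ⟨hx.1, hx.2.2⟩))
    ((ha₂.mono fun x hx => ⟨hx.1, hx.2.1⟩).sub (hb₂.mono fun x hx => ⟨hx.1, hx.2.2⟩)) (by
      rintro x ⟨⟨h1, h2, h3⟩, h4, -⟩
      have e1 := ha x ⟨⟨h1, h4⟩, h2⟩
      have e2 := hb x ⟨⟨h1, h4⟩, h3⟩
      linear_combination e2 - e1)
  obtain ⟨V₁, V₂, ψ₁, ψ₂, hV₁, hV₂, hAV, hBV, hVU, hd₁, hd₂, he⟩ := hsplit _ ψ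
    ((hU₁.inter hVab).union (hU₂.inter hVab)) hψ (by
      rintro x ⟨hxA, hxB⟩
      rcases hsub (Or.inl hxA) with h | h
      exacts [Or.inl ⟨h, hAVa hxA, hBVb hxB⟩, Or.inr ⟨h, hAVa hxA, hBVb hxB⟩])
  have hW₁ : IsOpen (V₁ ∩ Va) := hV₁.inter hVa
  have hW₂ : IsOpen (V₂ ∩ Vb) := hV₂.inter hVb
  obtain ⟨F₁, hF₁, hF₁a, hF₁b⟩ := exists_differentiableOn_union (A := U₁ ∩ (V₁ ∩ Va))
    (B := U₁ ∩ (V₂ ∩ Vb)) (f₁ := fun x => a₁ x - ψ₁ x) (f₂ := fun x => b₁ x - ψ₂ x)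
    (hU₁.inter hW₁) (hU₁.inter hW₂)
    ((ha₁.mono fun x hx => ⟨hx.1, hx.2.2⟩).sub (hd₁.mono fun x hx => hx.2.1))
    ((hb₁.mono fun x hx => ⟨hx.1, hx.2.2⟩).sub (hd₂.mono fun x hx => hx.2.1)) (by
      rintro x ⟨⟨h1, h2, h3⟩, -, h4, h5⟩
      have e1 := hψ₁ x ⟨h1, h3, h5⟩
      have e2 := he x ⟨h2, h4⟩
      linear_combination e2 - e1)
  obtain ⟨F₂, hF₂, hF₂a, hF₂b⟩ := exists_differentiableOn_union (A := U₂ ∩ (V₁ ∩ Va))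
    (B := U₂ ∩ (V₂ ∩ Vb)) (f₁ := fun x => a₂ x - ψ₁ x) (f₂ := fun x => b₂ x - ψ₂ x)
    (hU₂.inter hW₁) (hU₂.inter hW₂)
    ((ha₂.mono fun x hx => ⟨hx.1, hx.2.2⟩).sub (hd₁.mono fun x hx => hx.2.1))
    ((hb₂.mono fun x hx => ⟨hx.1, hx.2.2⟩).sub (hd₂.mono fun x hx => hx.2.1)) (by
      rintro x ⟨⟨h1, h2, h3⟩, -, h4, h5⟩
      have e1 := hψ₂ x ⟨h1, h3, h5⟩
      have e2 := he x ⟨h2, h4⟩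
      linear_combination e2 - e1)
  refine ⟨V₁ ∩ Va ∪ V₂ ∩ Vb, F₁, F₂, hW₁.union hW₂,
    union_subset_union (subset_inter hAV hAVa) (subset_inter hBV hBVb), ?_, ?_, ?_⟩
  · rwa [inter_union_distrib_left]
  · rwa [inter_union_distrib_left]
  · rintro x ⟨⟨h1, h2⟩, h | h⟩
    · rw [hF₁a x ⟨h1, h⟩, hF₂a x ⟨h2, h⟩, ha x ⟨⟨h1, h2⟩, h.2⟩]
      ring
    · rw [hF₁b x ⟨h1, h⟩, hF₂b x ⟨h2, h⟩, hb x ⟨⟨h1, h2⟩, h.2⟩]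
      ring

theorem polyhedron_update_hi {R : ℝ} {m : ℕ} (lo hi : Fin m × Bool → ℝ)
    (ps : List ((Fin m → ℂ) → ℂ)) {i : Fin m × Bool} {c : ℝ} (hc : c ≤ hi i) :
    polyhedron R lo (Function.update hi i c) ps =
      polyhedron R lo hi ps ∩ {x | realCoord i x ≤ c} := by
  ext x
  constructor
  · rintro ⟨h1, h2⟩
    have hi' := (h1 i).2
    rw [Function.update_self] at hi'
    refine ⟨⟨fun k => ⟨(h1 k).1, ?_⟩, h2⟩, hi'⟩
    by_cases hk : k = i
    · subst hk; exact hi'.trans hc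
    · simpa [Function.update_of_ne hk] using (h1 k).2
  · rintro ⟨⟨h1, h2⟩, h3⟩
    refine ⟨fun k => ⟨(h1 k).1, ?_⟩, h2⟩
    by_cases hk : k = i
    · subst hk; rw [Function.update_self]; exact h3
    · simpa [Function.update_of_ne hk] using (h1 k).2

theorem polyhedron_update_lo {R : ℝ} {m : ℕ} (lo hi : Fin m × Bool → ℝ)
    (ps : List ((Fin m → ℂ) → ℂ)) {i : Fin m × Bool} {c : ℝ} (hc : lo i ≤ c) :
    polyhedron R (Function.update lo i c) hi ps =
      polyhedron R lo hi ps ∩ {x | c ≤ realCoord i x} := by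
  ext x
  constructor
  · rintro ⟨h1, h2⟩
    have hi' := (h1 i).1
    rw [Function.update_self] at hi'
    refine ⟨⟨fun k => ⟨?_, (h1 k).2⟩, h2⟩, hi'⟩
    by_cases hk : k = i
    · subst hk; exact hc.trans hi'
    · simpa [Function.update_of_ne hk] using (h1 k).1
  · rintro ⟨⟨h1, h2⟩, h3⟩
    refine ⟨fun k => ⟨?_, (h1 k).2⟩, h2⟩
    by_cases hk : k = i
    · subst hk; rw [Function.update_self]; exact h3
    · simpa [Function.update_of_ne hk] using (h1 k).1

theorem SlicesSplit.cousinSolvable {R : ℝ} {m : ℕ} {ps : List ((Fin m → ℂ) → ℂ)}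
    (hsp : SlicesSplit R ps) (hps : ∀ p ∈ ps, Differentiable ℂ p) {lo₀ hi₀ : Fin m × Bool → ℝ}
    {U₁ U₂ : Set (Fin m → ℂ)} {φ : (Fin m → ℂ) → ℂ} (hU₁ : IsOpen U₁) (hU₂ : IsOpen U₂)
    (hφ : DifferentiableOn ℂ φ (U₁ ∩ U₂)) (hsub : polyhedron R lo₀ hi₀ ps ⊆ U₁ ∪ U₂) :
    CousinSolvable (polyhedron R lo₀ hi₀ ps) U₁ U₂ φ := by
  obtain ⟨δ, hδ, hleb⟩ := lebesgue_number_lemma_of_metric (isCompact_polyhedron hps)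
    (c := fun b : Bool => cond b U₁ U₂) (by rintro (_ | _) <;> simpa)
    (by rw [union_comm, union_eq_iUnion] at hsub
        refine hsub.trans (iUnion_subset fun b => ?_)
        cases b
        exacts [subset_iUnion_of_subset true (by simp), subset_iUnion_of_subset false (by simp)])
  set η := δ / 3
  have hη : 0 < η := by positivity
  have hsubset : ∀ lo hi : Fin m × Bool → ℝ, lo₀ ≤ lo → hi ≤ hi₀ →
      polyhedron R lo hi ps ⊆ polyhedron R lo₀ hi₀ ps := fun lo hi h1 h2 x hx =>
    ⟨fun i => ⟨(h1 i).trans (hx.1 i).1, (hx.1 i).2.trans (h2 i)⟩, hx.2⟩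
  have key : ∀ s : Finset (Fin m × Bool), ∀ lo hi : Fin m × Bool → ℝ, lo₀ ≤ lo → hi ≤ hi₀ →
      (∀ i ∉ s, hi i - lo i ≤ η) → CousinSolvable (polyhedron R lo hi ps) U₁ U₂ φ := by
    intro s
    induction s using Finset.induction_on with
    | empty =>
      intro lo hi h1 h2 h3
      refine cousinSolvable_of_subset hU₁ hU₂ hφ ?_
      rcases (polyhedron R lo hi ps).eq_empty_or_nonempty with h | ⟨x, hx⟩
      · rw [h]; exact Or.inl (empty_subset _)
      obtain ⟨b, hb⟩ := hleb x (hsubset lo hi h1 h2 hx)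
      have hall : polyhedron R lo hi ps ⊆ ball x δ := by
        intro y hy
        rw [mem_ball, dist_eq_norm]
        refine (norm_sub_le_of_realCoord hη.le fun i => ?_).trans_lt
          (show 2 * (δ / 3) < δ by linarith)
        have := h3 i (by simp)
        have a1 := hx.1 i
        have a2 := hy.1 i
        rw [abs_le]
        constructor <;> linarith [a1.1, a1.2, a2.1, a2.2]
      cases b
      exacts [Or.inr (hall.trans hb), Or.inl (hall.trans hb)]
    | insert i s _ ih =>
      intro lo hi h1 h2 h3
      have inner : ∀ k : ℕ, ∀ lo : Fin m × Bool → ℝ, lo₀ ≤ lo →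
          (∀ l ∉ insert i s, hi l - lo l ≤ η) → hi i - lo i ≤ (k + 1) * η →
          CousinSolvable (polyhedron R lo hi ps) U₁ U₂ φ := by
        intro k
        induction k with
        | zero =>
          intro lo h1 h3 h4
          refine ih lo hi h1 h2 fun l hl => ?_
          by_cases hli : l = i
          · subst hli; simpa using h4
          · exact h3 l (by simp [hli, hl])
        | succ k ihk =>
          intro lo h1 h3 h4
          by_cases h5 : hi i - lo i ≤ η
          · refine ih lo hi h1 h2 fun l hl => ?_
            by_cases hli : l = i
            · subst hli; exact h5
            · exact h3 l (by simp [hli, hl])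
          · set c := lo i + η with hc
            have hc1 : lo i ≤ c := by linarith
            have hc2 : c ≤ hi i := by linarith
            have hun : polyhedron R lo hi ps = polyhedron R lo (Function.update hi i c) ps ∪
                polyhedron R (Function.update lo i c) hi ps := by
              rw [polyhedron_update_hi lo hi ps hc2, polyhedron_update_lo lo hi ps hc1,
                ← inter_union_distrib_left]
              refine (inter_eq_left.2 fun x _ => ?_).symm
              exact le_total (realCoord i x) c
            rw [hun]
            refine CousinSolvable.union hU₁ hU₂ ?_ ?_ ?_ ?_
            · refine ih _ _ h1 ?_ fun l hl => ?_
              · exact (update_le_self_iff.2 hc2).trans h2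
              · by_cases hli : l = i
                · subst hli; simp [hc]
                · rw [Function.update_of_ne hli]; exact h3 l (by simp [hli, hl])
            · refine ihk _ (h1.trans (le_update_self_iff.2 hc1)) (fun l hl => ?_) ?_
              · have hli : l ≠ i := fun h => hl (by simp [h])
                rw [Function.update_of_ne hli]; exact h3 l hl
              · push_cast at h4
                rw [Function.update_self]; linarith
            · rw [← hun]; exact (hsubset lo hi h1 h2).trans hsub
            · intro U ψ hU hψ hAB
              rw [polyhedron_update_hi lo hi ps hc2, polyhedron_update_lo lo hi ps hc1] at hAB ⊢
              refine hsp lo hi i c U ψ hU hψ ?_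
              rintro x ⟨hx, hxc⟩
              exact hAB ⟨⟨hx, le_of_eq hxc⟩, hx, ge_of_eq hxc⟩
      obtain ⟨k, hk⟩ := exists_nat_gt ((hi i - lo i) / η)
      refine inner k lo h1 h3 ?_
      rw [div_lt_iff₀ hη] at hk
      nlinarith
  exact key Finset.univ lo₀ hi₀ le_rfl le_rfl (by simp)

/-- Extend bounds by the interval `[c, c]` placed on both real coordinates of a new variable. -/
def consBound {m : ℕ} (c : ℝ) (lo : Fin m × Bool → ℝ) : Fin (m + 1) × Bool → ℝ :=
  fun i => Fin.cases c (fun j => lo (j, i.2)) i.1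

theorem mem_polyhedron_consBound {R : ℝ} {m : ℕ} {lo hi : Fin m × Bool → ℝ}
    {ps : List ((Fin m → ℂ) → ℂ)} {y : Fin (m + 1) → ℂ} :
    y ∈ polyhedron R (consBound (-R) lo) (consBound R hi)
        (ps.map fun p x => p (Fin.tail x)) ↔
      (|(y 0).re| ≤ R ∧ |(y 0).im| ≤ R) ∧ Fin.tail y ∈ polyhedron R lo hi ps := by
  constructor
  · rintro ⟨h1, h2⟩
    refine ⟨⟨?_, ?_⟩, fun i => ?_, fun p hp => ?_⟩
    · have := h1 (0, false)
      simpa [realCoord, consBound, abs_le] using this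
    · have := h1 (0, true)
      simpa [realCoord, consBound, abs_le] using this
    · have := h1 (i.1.succ, i.2)
      simpa [realCoord, consBound, Fin.tail] using this
    · exact h2 _ (List.mem_map.2 ⟨p, hp, rfl⟩)
  · rintro ⟨⟨h0, h0'⟩, h1, h2⟩
    refine ⟨?_, fun q hq => ?_⟩
    · rintro ⟨i, b⟩
      refine Fin.cases ?_ (fun j => ?_) i
      · cases b
        · simpa [realCoord, consBound, abs_le] using h0
        · simpa [realCoord, consBound, abs_le] using h0'
      · simpa [realCoord, consBound, Fin.tail] using h1 (j, b)
    · obtain ⟨p, hp, rfl⟩ := List.mem_map.1 hq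
      exact h2 p hp

theorem differentiable_tail {m : ℕ} :
    Differentiable ℂ (fun x : Fin (m + 1) → ℂ => (Fin.tail x : Fin m → ℂ)) :=
  differentiable_pi.2 fun i => by simp only [Fin.tail]; fun_prop

theorem Differentiable.finCons_self {m : ℕ} {p : (Fin m → ℂ) → ℂ} (hp : Differentiable ℂ p) :
    Differentiable ℂ (fun x : Fin m → ℂ => (Fin.cons (p x) x : Fin (m + 1) → ℂ)) := by
  refine differentiable_pi.2 fun i => ?_
  refine Fin.cases ?_ (fun j => ?_) i
  · simpa using hp
  · simp only [Fin.cons_succ]; fun_prop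

/-- **Oka's extension theorem**: a function holomorphic near a polyhedron extends along the graph
of one of the defining functions. -/
theorem exists_extension_consBound {R : ℝ} {m : ℕ} {lo hi : Fin m × Bool → ℝ}
    {p : (Fin m → ℂ) → ℂ} {ps : List ((Fin m → ℂ) → ℂ)} (hp : Differentiable ℂ p)
    (hps : ∀ q ∈ ps, Differentiable ℂ q)
    (hsp : SlicesSplit R (ps.map fun q (x : Fin (m + 1) → ℂ) => q (Fin.tail x)))
    {U : Set (Fin m → ℂ)} {f : (Fin m → ℂ) → ℂ} (hU : IsOpen U) (hf : DifferentiableOn ℂ f U)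
    (hsub : polyhedron R lo hi (p :: ps) ⊆ U) :
    ∃ (W : Set (Fin (m + 1) → ℂ)) (F : (Fin (m + 1) → ℂ) → ℂ), IsOpen W ∧
      polyhedron R (consBound (-R) lo) (consBound R hi) (ps.map fun q x => q (Fin.tail x)) ⊆ W ∧
      DifferentiableOn ℂ F W ∧
      ∀ x ∈ U, (Fin.cons (p x) x : Fin (m + 1) → ℂ) ∈ W → F (Fin.cons (p x) x) = f x := by
  set t : (Fin (m + 1) → ℂ) → ℂ := fun y => y 0 - p (Fin.tail y) with ht
  have htd : Differentiable ℂ t := by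
    have : Differentiable ℂ (fun y : Fin (m + 1) → ℂ => p (Fin.tail y)) :=
      hp.comp differentiable_tail
    exact Differentiable.sub (by fun_prop) this
  have hU₁ : IsOpen {y : Fin (m + 1) → ℂ | Fin.tail y ∈ U} :=
    hU.preimage differentiable_tail.continuous
  have hU₂ : IsOpen {y | t y ≠ 0} := isOpen_ne_fun htd.continuous continuous_const
  have hf₁ : DifferentiableOn ℂ (fun y : Fin (m + 1) → ℂ => f (Fin.tail y))
      {y : Fin (m + 1) → ℂ | Fin.tail y ∈ U} :=
    hf.comp differentiable_tail.differentiableOn fun y hy => hy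
  have hgraph : ∀ y ∈ polyhedron R (consBound (-R) lo) (consBound R hi)
      (ps.map fun q x => q (Fin.tail x)), t y = 0 → Fin.tail y ∈ U := by
    intro y hy h
    rw [mem_polyhedron_consBound] at hy
    refine hsub ⟨hy.2.1, fun q hq => ?_⟩
    rcases List.mem_cons.1 hq with rfl | hq
    · rw [← sub_eq_zero.1 h]; exact hy.1
    · exact hy.2.2 q hq
  obtain ⟨V, φ₁, φ₂, hV, hSV, h₁, h₂, he⟩ := hsp.cousinSolvable (lo₀ := consBound (-R) lo)
    (hi₀ := consBound R hi) (φ := fun y => f (Fin.tail y) / t y) (by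
      intro q' hq'
      obtain ⟨q, hq, rfl⟩ := List.mem_map.1 hq'
      exact (hps q hq).comp differentiable_tail) hU₁ hU₂
    ((hf₁.mono inter_subset_left).div_of_ne htd.differentiableOn fun y hy => hy.2) (by
      intro y hy
      by_cases h : t y = 0
      exacts [Or.inl (hgraph y hy h), Or.inr h])
  obtain ⟨F, hF, hF₁, hF₂⟩ := exists_differentiableOn_union (hU₁.inter hV) (hU₂.inter hV)
    (f₁ := fun y => f (Fin.tail y) - t y * φ₁ y) (f₂ := fun y => - (t y * φ₂ y))
    ((hf₁.mono inter_subset_left).sub (htd.differentiableOn.mul h₁))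
    (htd.differentiableOn.mul h₂).neg (by
      rintro y ⟨⟨hy1, hyV⟩, hy2, -⟩
      have := he y ⟨⟨hy1, hy2⟩, hyV⟩
      rw [div_eq_iff hy2] at this
      linear_combination this)
  refine ⟨_, F, (hU₁.inter hV).union (hU₂.inter hV), fun y hy => ?_, hF, fun x hx hxW => ?_⟩
  · by_cases h : t y = 0
    exacts [Or.inl ⟨hgraph y hy h, hSV hy⟩, Or.inr ⟨h, hSV hy⟩]
  · have hxV : (Fin.cons (p x) x : Fin (m + 1) → ℂ) ∈ V := by
      rcases hxW with h | h <;> exact h.2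
    rw [hF₁ _ ⟨by simpa using hx, hxV⟩]
    simp [ht]

theorem SlicesSplit.cons {R : ℝ} {m : ℕ} {p : (Fin m → ℂ) → ℂ} {ps : List ((Fin m → ℂ) → ℂ)}
    (hp : Differentiable ℂ p) (hps : ∀ q ∈ ps, Differentiable ℂ q)
    (hsp : SlicesSplit R (ps.map fun q (x : Fin (m + 1) → ℂ) => q (Fin.tail x))) :
    SlicesSplit R (p :: ps) := by
  intro lo hi i c U φ hU hφ hsl
  refine splitsAcross_of_mem_Icc fun hc => ?_
  have hpps : ∀ q ∈ p :: ps, Differentiable ℂ q := by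
    intro q hq
    rcases List.mem_cons.1 hq with rfl | hq
    exacts [hp, hps q hq]
  have hS := isCompact_polyhedron (R := R) (lo := lo) (hi := hi) hpps
  obtain ⟨W, F, hW, hSW, hF, hFe⟩ := exists_extension_consBound (lo := Function.update lo i c)
    (hi := Function.update hi i c) hp hps hsp hU hφ (by
      rw [polyhedron_update_lo _ _ _ hc.1, polyhedron_update_hi _ _ _ hc.2]
      rintro x ⟨⟨hx, hx1⟩, hx2⟩
      exact hsl ⟨hx, le_antisymm hx1 hx2⟩)
  obtain ⟨V₁, V₂, F₁, F₂, hV₁, hV₂, hA, hB, hVW, hF₁, hF₂, he⟩ := hsp (consBound (-R) lo)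
    (consBound R hi) (i.1.succ, i.2) c W F hW hF (by
      rintro y ⟨hy, hyc⟩
      refine hSW ?_
      rw [mem_polyhedron_consBound] at hy ⊢
      refine ⟨hy.1, ?_⟩
      rw [polyhedron_update_lo _ _ _ hc.1, polyhedron_update_hi _ _ _ hc.2]
      have : realCoord i (Fin.tail y) = c := hyc
      exact ⟨⟨hy.2, this.le⟩, this.ge⟩)
  have hcl₁ : IsClosed {x : Fin m → ℂ | realCoord i x ≤ c} :=
    isClosed_le (continuous_realCoord i) continuous_const
  have hcl₂ : IsClosed {x : Fin m → ℂ | c ≤ realCoord i x} :=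
    isClosed_le continuous_const (continuous_realCoord i)
  obtain ⟨O₁, O₂, hO₁, hO₂, hAO, hBO, hO⟩ := exists_isOpen_inter_subset (hS.inter_right hcl₁)
    (hS.inter_right hcl₂) hU (by
      rintro x ⟨⟨hx, hx1⟩, -, hx2⟩
      exact hsl ⟨hx, le_antisymm hx1 hx2⟩)
  have hι := hp.finCons_self
  have hmem : ∀ x ∈ polyhedron R lo hi (p :: ps), (Fin.cons (p x) x : Fin (m + 1) → ℂ) ∈
      polyhedron R (consBound (-R) lo) (consBound R hi) (ps.map fun q x => q (Fin.tail x)) := by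
    intro x hx
    rw [mem_polyhedron_consBound]
    refine ⟨by simpa using hx.2 p (by simp), ?_⟩
    rw [Fin.tail_cons]
    exact ⟨hx.1, fun q hq => hx.2 q (by simp [hq])⟩
  refine ⟨O₁ ∩ (fun x => (Fin.cons (p x) x : Fin (m + 1) → ℂ)) ⁻¹' V₁,
    O₂ ∩ (fun x => (Fin.cons (p x) x : Fin (m + 1) → ℂ)) ⁻¹' V₂,
    fun x => F₁ (Fin.cons (p x) x), fun x => F₂ (Fin.cons (p x) x),
    hO₁.inter (hV₁.preimage hι.continuous), hO₂.inter (hV₂.preimage hι.continuous),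
    fun x hx => ⟨hAO hx, hA ⟨hmem x hx.1, ?_⟩⟩, fun x hx => ⟨hBO hx, hB ⟨hmem x hx.1, ?_⟩⟩,
    fun x hx => hO ⟨hx.1.1, hx.2.1⟩, ?_, ?_, ?_⟩
  · exact hx.2
  · exact hx.2
  · exact hF₁.comp hι.differentiableOn fun x hx => hx.2
  · exact hF₂.comp hι.differentiableOn fun x hx => hx.2
  · rintro x ⟨⟨h1, h2⟩, h3, h4⟩
    have e1 := hFe x (hO ⟨h1, h3⟩) (hVW ⟨h2, h4⟩)
    have e2 := he _ ⟨h2, h4⟩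
    simp only [← e1, e2]

theorem slicesSplit (R : ℝ) (k : ℕ) : ∀ (m : ℕ) (ps : List ((Fin m → ℂ) → ℂ)),
    ps.length = k → (∀ q ∈ ps, Differentiable ℂ q) → SlicesSplit R ps := by
  induction k with
  | zero =>
    intro m ps hl _
    rw [List.length_eq_zero_iff.1 hl]
    exact slicesSplit_nil R m
  | succ k ih =>
    intro m ps hl hps
    obtain ⟨p, ps, rfl⟩ := List.exists_cons_of_length_eq_add_one hl
    refine SlicesSplit.cons (hps p (by simp)) (fun q hq => hps q (by simp [hq])) ?_
    refine ih (m + 1) _ (by simpa using hl) ?_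
    intro q' hq'
    obtain ⟨q, hq, rfl⟩ := List.mem_map.1 hq'
    exact (hps q (by simp [hq])).comp differentiable_tail

theorem inv_sub_eq_sum_add {μ w : ℂ} (hμ : μ ≠ 0) (hw : μ ≠ w) (N : ℕ) :
    (μ - w)⁻¹ - ∑ k ∈ Finset.range N, w ^ k * (μ⁻¹) ^ (k + 1) = (w / μ) ^ N * (μ - w)⁻¹ := by
  have h1 := sub_ne_zero.2 hw
  induction N with
  | zero => simp
  | succ N ih =>
    rw [Finset.sum_range_succ, ← sub_sub, ih]
    field_simp
    ring_nf
    linear_combination (-(w ^ N * μ⁻¹ ^ N)) * mul_inv_cancel₀ hμ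

theorem exists_approx_update {m : ℕ} {R : ℝ} (hR : 0 < R) (s : Set (Fin m)) (j : Fin m)
    {F : (Fin m → ℂ) → ℂ} (hF : DifferentiableOn ℂ F {x | ∀ i, i ∉ s → ‖x i‖ < R})
    {ε : ℝ} (hε : 0 < ε) :
    ∃ G : (Fin m → ℂ) → ℂ, DifferentiableOn ℂ G {x | ∀ i, i ∉ insert j s → ‖x i‖ < R} ∧
      ∀ x : Fin m → ℂ, ‖x‖ ≤ R / 4 → ‖G x - F x‖ < ε := by
  have hopen : ∀ s : Set (Fin m), IsOpen {x : Fin m → ℂ | ∀ i, i ∉ s → ‖x i‖ < R} := by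
    intro s
    have : {x : Fin m → ℂ | ∀ i, i ∉ s → ‖x i‖ < R} = ⋂ i, {x | i ∉ s → ‖x i‖ < R} := by
      ext x; simp
    rw [this]
    refine isOpen_iInter_of_finite fun i => ?_
    by_cases hi : i ∈ s
    · simp [hi]
    · simpa [hi] using isOpen_lt (f := fun x : Fin m → ℂ => ‖x i‖) (by fun_prop) continuous_const
  have hcb : closedBall (0 : Fin m → ℂ) (R / 2) ⊆ {x | ∀ i, i ∉ s → ‖x i‖ < R} := by
    intro x hx i _
    rw [mem_closedBall_zero_iff] at hx
    linarith [norm_le_pi_norm x i]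
  obtain ⟨M, hM⟩ := (isCompact_closedBall (0 : Fin m → ℂ) (R / 2)).exists_bound_of_continuousOn
    (hF.continuousOn.mono hcb)
  have hM0 : 0 ≤ M := (norm_nonneg _).trans (hM 0 (by simp; positivity))
  obtain ⟨N, hN⟩ := exists_pow_lt_of_lt_one (show 0 < ε / (2 * M + 1) by positivity)
    (show (1 / 2 : ℝ) < 1 by norm_num)
  have hup : ∀ x : Fin m → ℂ, (∀ i, i ∉ insert j s → ‖x i‖ < R) → ∀ μ : ℂ, ‖μ‖ ≤ R / 2 →
      ∀ i, i ∉ s → ‖Function.update x j μ i‖ < R := by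
    intro x hx μ hμ i hi
    by_cases hij : i = j
    · subst hij; rw [Function.update_self]; linarith
    · rw [Function.update_of_ne hij]; exact hx i (by simp [hij, hi])
  have hupd : ∀ x : Fin m → ℂ, Differentiable ℂ (fun μ : ℂ => Function.update x j μ) := by
    intro x
    refine differentiable_pi.2 fun i => ?_
    by_cases h : i = j
    · subst h; simp
    · simp only [Function.update_of_ne h]; fun_prop
  refine ⟨fun x => (2 * Real.pi * Complex.I : ℂ)⁻¹ • ∮ μ in C(0, R / 2),
    (∑ k ∈ Finset.range N, x j ^ k * (μ⁻¹) ^ (k + 1)) * F (Function.update x j μ), ?_, ?_⟩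
  · simp only [smul_eq_mul, circleIntegral]
    refine DifferentiableOn.const_mul ?_ _
    have hnorm : ∀ θ : ℝ, ‖circleMap 0 (R / 2) θ‖ ≤ R / 2 := fun θ => by
      rw [norm_circleMap_zero, abs_of_pos (by positivity)]
    have hne : ∀ θ : ℝ, circleMap 0 (R / 2) θ ≠ 0 := fun θ => circleMap_ne_center (by positivity)
    refine differentiableOn_integral_of_continuousOn (hopen _) ?_ fun θ _ => ?_
    · refine ContinuousOn.mul (Continuous.continuousOn ?_) (ContinuousOn.mul ?_ ?_)
      · simp only [deriv_circleMap]
        exact ((continuous_circleMap _ _).comp continuous_snd).mul continuous_const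
      · refine Continuous.continuousOn (continuous_finsetSum _ fun k _ => ?_)
        refine Continuous.mul (by fun_prop) (Continuous.pow (Continuous.inv₀ ?_ fun q => hne _) _)
        exact (continuous_circleMap _ _).comp continuous_snd
      · refine hF.continuousOn.comp (Continuous.continuousOn ?_) fun q hq => ?_
        · exact continuous_fst.update j ((continuous_circleMap _ _).comp continuous_snd)
        · exact hup _ hq.1 _ (hnorm _)
    · refine DifferentiableOn.const_mul (DifferentiableOn.mul ?_ ?_) _
      · exact Differentiable.differentiableOn (by fun_prop)
      · exact hF.comp (differentiable_update j _).differentiableOn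
          fun x hx => hup x hx _ (hnorm θ)
  · intro x hx
    have hxj : ‖x j‖ ≤ R / 4 := (norm_le_pi_norm x j).trans hx
    have hxs : ∀ i, i ∉ insert j s → ‖x i‖ < R := fun i _ => by
      linarith [norm_le_pi_norm x i]
    have hdif : DifferentiableOn ℂ (fun μ => F (Function.update x j μ)) (closedBall 0 (R / 2)) :=
      hF.comp (hupd x).differentiableOn fun μ hμ =>
        hup x hxs μ (by simpa using hμ)
    have hcau := hdif.circleIntegral_sub_inv_smul (w := x j) (by
      rw [mem_ball_zero_iff]; linarith)
    have hpi : (2 * Real.pi * Complex.I : ℂ) ≠ 0 := by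
      simp [Real.pi_ne_zero, Complex.I_ne_zero]
    have hFx : F x = (2 * Real.pi * Complex.I : ℂ)⁻¹ • ∮ μ in C(0, R / 2),
        (μ - x j)⁻¹ • F (Function.update x j μ) := by
      rw [hcau, smul_smul, inv_mul_cancel₀ hpi, one_smul, Function.update_eq_self]
    have hsph : ∀ μ ∈ sphere (0 : ℂ) (R / 2), ‖μ‖ = R / 2 ∧ μ ≠ 0 ∧ μ ≠ x j := by
      intro μ hμ
      rw [mem_sphere_zero_iff_norm] at hμ
      refine ⟨hμ, fun h => ?_, fun h => ?_⟩
      · rw [h, norm_zero] at hμ; linarith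
      · rw [h] at hμ; linarith
    have hcF : ContinuousOn (fun μ => F (Function.update x j μ)) (sphere 0 (R / 2)) :=
      hdif.continuousOn.mono sphere_subset_closedBall
    rw [norm_sub_rev, hFx, ← smul_sub, ← circleIntegral.integral_sub]
    · have hb : ∀ μ ∈ sphere (0 : ℂ) (R / 2), ‖(μ - x j)⁻¹ • F (Function.update x j μ) -
          (∑ k ∈ Finset.range N, x j ^ k * (μ⁻¹) ^ (k + 1)) * F (Function.update x j μ)‖ ≤
          (1 / 2) ^ N * (4 / R) * M := by
        intro μ hμ
        obtain ⟨h1, h2, h3⟩ := hsph μ hμ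
        rw [smul_eq_mul, ← sub_mul, inv_sub_eq_sum_add h2 h3, norm_mul, norm_mul, norm_pow,
          norm_div, norm_inv]
        have hb1 : ‖x j‖ / ‖μ‖ ≤ 1 / 2 := by
          rw [h1, div_le_iff₀ (by positivity)]; linarith
        have hb2 : ‖μ - x j‖⁻¹ ≤ 4 / R := by
          rw [inv_le_comm₀ (norm_pos_iff.2 (sub_ne_zero.2 h3)) (by positivity), inv_div]
          linarith [norm_sub_norm_le μ (x j)]
        have hb3 : ‖F (Function.update x j μ)‖ ≤ M := by
          refine hM _ ?_
          rw [mem_closedBall_zero_iff, pi_norm_le_iff_of_nonneg (by positivity)]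
          intro i
          by_cases hij : i = j
          · subst hij; rw [Function.update_self]; exact h1.le
          · rw [Function.update_of_ne hij]; linarith [norm_le_pi_norm x i]
        gcongr
      refine (circleIntegral.norm_two_pi_i_inv_smul_integral_le_of_norm_le_const
        (by positivity) hb).trans_lt ?_
      have : R / 2 * ((1 / 2) ^ N * (4 / R) * M) = (1 / 2) ^ N * (2 * M) := by
        field_simp; ring
      rw [this]
      rw [lt_div_iff₀ (by positivity)] at hN
      refine lt_of_le_of_lt ?_ hN
      gcongr
      linarith
    · refine ContinuousOn.circleIntegrable (by positivity) (ContinuousOn.fun_smul ?_ hcF)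
      exact ContinuousOn.inv₀ (by fun_prop) fun μ hμ => sub_ne_zero.2 (hsph μ hμ).2.2
    · refine ContinuousOn.circleIntegrable (by positivity) (ContinuousOn.mul ?_ hcF)
      refine continuousOn_finsetSum _ fun k _ => continuousOn_const.mul (ContinuousOn.pow ?_ _)
      exact continuousOn_id.inv₀ fun μ hμ => (hsph μ hμ).2.1

theorem exists_entire_approx_polydisc {m : ℕ} {R : ℝ} (hR : 0 < R) {F : (Fin m → ℂ) → ℂ}
    (hF : DifferentiableOn ℂ F {x | ∀ i, ‖x i‖ < R}) {ε : ℝ} (hε : 0 < ε) :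
    ∃ G : (Fin m → ℂ) → ℂ, Differentiable ℂ G ∧ ∀ x : Fin m → ℂ, ‖x‖ ≤ R / 4 →
      ‖G x - F x‖ < ε := by
  have key : ∀ s : Finset (Fin m), ∀ ε > 0, ∃ G : (Fin m → ℂ) → ℂ,
      DifferentiableOn ℂ G {x | ∀ i, i ∉ (s : Set (Fin m)) → ‖x i‖ < R} ∧
      ∀ x : Fin m → ℂ, ‖x‖ ≤ R / 4 → ‖G x - F x‖ < ε := by
    intro s
    induction s using Finset.induction_on with
    | empty => exact fun ε hε => ⟨F, by simpa using hF, by simpa using fun _ _ => hε⟩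
    | insert j s _ ih =>
      intro ε hε
      obtain ⟨G, hG, hGa⟩ := ih (ε / 2) (by positivity)
      obtain ⟨H, hH, hHa⟩ := exists_approx_update hR s j hG (half_pos hε)
      refine ⟨H, by rwa [Finset.coe_insert], fun x hx => ?_⟩
      calc ‖H x - F x‖ = ‖(H x - G x) + (G x - F x)‖ := by ring_nf
        _ ≤ ‖H x - G x‖ + ‖G x - F x‖ := norm_add_le _ _
        _ < ε := by linarith [hGa x hx, hHa x hx]
  obtain ⟨G, hG, hGa⟩ := key Finset.univ ε hε
  refine ⟨G, ?_, hGa⟩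
  rw [← differentiableOn_univ]
  simpa using hG

theorem exists_entire_approx_polyhedron {R : ℝ} (hR : 0 < R) (k : ℕ) :
    ∀ (m : ℕ) (ps : List ((Fin m → ℂ) → ℂ)), ps.length = k → (∀ q ∈ ps, Differentiable ℂ q) →
    ∀ (U : Set (Fin m → ℂ)) (f : (Fin m → ℂ) → ℂ), IsOpen U → DifferentiableOn ℂ f U →
    polyhedron R (fun _ => -R) (fun _ => R) ps ⊆ U → ∀ ε > 0,
    ∃ G : (Fin m → ℂ) → ℂ, Differentiable ℂ G ∧ ∀ x : Fin m → ℂ, ‖x‖ ≤ R / 4 →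
      (∀ p ∈ ps, ‖p x‖ ≤ R / 4) → ‖G x - f x‖ < ε := by
  have hcoord : ∀ {m : ℕ} (x : Fin m → ℂ), ‖x‖ ≤ R → ∀ i, realCoord i x ∈ Icc (-R) R := by
    rintro m x hx ⟨j, b⟩
    have := norm_le_pi_norm x j
    rw [mem_Icc, ← abs_le]
    cases b
    · exact (Complex.abs_re_le_norm _).trans (this.trans hx)
    · exact (Complex.abs_im_le_norm _).trans (this.trans hx)
  induction k with
  | zero =>
    intro m ps hl _ U f hU hf hsub ε hε
    rw [List.length_eq_zero_iff.1 hl] at hsub ⊢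
    obtain ⟨G, hG, hGa⟩ := exists_entire_approx_polydisc hR (hf.mono fun x hx => hsub
      ⟨hcoord x ((pi_norm_le_iff_of_nonneg hR.le).2 fun i => (hx i).le), by simp⟩) hε
    exact ⟨G, hG, fun x hx _ => hGa x hx⟩
  | succ k ih =>
    intro m ps hl hps U f hU hf hsub ε hε
    obtain ⟨p, ps, rfl⟩ := List.exists_cons_of_length_eq_add_one hl
    have hp := hps p (by simp)
    have hps' : ∀ q ∈ ps, Differentiable ℂ q := fun q hq => hps q (by simp [hq])
    have hlift : ∀ q ∈ ps.map fun q (x : Fin (m + 1) → ℂ) => q (Fin.tail x),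
        Differentiable ℂ q := by
      intro q' hq'
      obtain ⟨q, hq, rfl⟩ := List.mem_map.1 hq'
      exact (hps' q hq).comp differentiable_tail
    have hb : ∀ c : ℝ, consBound c (fun _ : Fin m × Bool => c) = fun _ => c := by
      intro c
      funext ⟨i, b⟩
      refine Fin.cases ?_ (fun j => ?_) i <;> simp [consBound]
    obtain ⟨W, F, hW, hSW, hF, hFe⟩ := exists_extension_consBound hp hps'
      (slicesSplit R _ _ _ rfl hlift) hU hf hsub
    rw [hb, hb] at hSW
    obtain ⟨G, hG, hGa⟩ := ih (m + 1) _ (by simpa using hl) hlift W F hW hF hSW ε hε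
    refine ⟨fun x => G (Fin.cons (p x) x), hG.comp hp.finCons_self, fun x hx hpx => ?_⟩
    have hsq : ∀ z : ℂ, ‖z‖ ≤ R / 4 → |z.re| ≤ R ∧ |z.im| ≤ R := fun z hz =>
      ⟨by linarith [Complex.abs_re_le_norm z], by linarith [Complex.abs_im_le_norm z]⟩
    have hxp : x ∈ polyhedron R (fun _ => -R) (fun _ => R) (p :: ps) :=
      ⟨hcoord x (by linarith), fun q hq => hsq _ (hpx q hq)⟩
    have hcW : (Fin.cons (p x) x : Fin (m + 1) → ℂ) ∈ W := by
      refine hSW ⟨hcoord _ ?_, fun q' hq' => ?_⟩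
      · refine (pi_norm_le_iff_of_nonneg hR.le).2 fun i => ?_
        refine Fin.cases ?_ (fun j => ?_) i
        · rw [Fin.cons_zero]; linarith [hpx p (by simp)]
        · rw [Fin.cons_succ]; linarith [norm_le_pi_norm x j]
      · obtain ⟨q, hq, rfl⟩ := List.mem_map.1 hq'
        simpa using hsq _ (hpx q (by simp [hq]))
    rw [← hFe x (hsub hxp) hcW]
    refine hGa _ ((pi_norm_le_iff_of_nonneg (by positivity)).2 fun i => ?_) fun q' hq' => ?_
    · refine Fin.cases ?_ (fun j => ?_) i
      · rw [Fin.cons_zero]; exact hpx p (by simp)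
      · rw [Fin.cons_succ]; exact (norm_le_pi_norm x j).trans hx
    · obtain ⟨q, hq, rfl⟩ := List.mem_map.1 hq'
      simpa using hpx q (by simp [hq])

/-- The hull of `L` with respect to entire functions, stated so that no supremum is needed. -/
def entireHull {m : ℕ} (L : Set (Fin m → ℂ)) : Set (Fin m → ℂ) :=
  {z | ∀ f : (Fin m → ℂ) → ℂ, Differentiable ℂ f → ∃ w ∈ L, ‖f z‖ ≤ ‖f w‖}

theorem subset_entireHull {m : ℕ} (L : Set (Fin m → ℂ)) : L ⊆ entireHull L :=
  fun z hz _ _ => ⟨z, hz, le_rfl⟩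

theorem entireHull_mono {m : ℕ} {L M : Set (Fin m → ℂ)} (h : L ⊆ M) :
    entireHull L ⊆ entireHull M :=
  fun _ hz f hf => let ⟨w, hw, hle⟩ := hz f hf; ⟨w, h hw, hle⟩

theorem entireHull_entireHull_subset {m : ℕ} (L : Set (Fin m → ℂ)) :
    entireHull (entireHull L) ⊆ entireHull L := by
  intro z hz f hf
  obtain ⟨w, hw, h1⟩ := hz f hf
  obtain ⟨v, hv, h2⟩ := hw f hf
  exact ⟨v, hv, h1.trans h2⟩

theorem entireHull_subset_closedBall {m : ℕ} {L : Set (Fin m → ℂ)} {r : ℝ} (hr : 0 ≤ r)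
    (h : L ⊆ closedBall 0 r) : entireHull L ⊆ closedBall 0 r := by
  intro z hz
  rw [mem_closedBall_zero_iff, pi_norm_le_iff_of_nonneg hr]
  intro i
  obtain ⟨w, hw, h1⟩ := hz (fun x => x i) (by fun_prop)
  exact h1.trans ((norm_le_pi_norm w i).trans (by simpa using h hw))

theorem IsCompact.entireHull {m : ℕ} {L : Set (Fin m → ℂ)} (hL : IsCompact L) :
    IsCompact (entireHull L) := by
  refine Metric.isCompact_of_isClosed_isBounded ?_ ?_
  · rcases L.eq_empty_or_nonempty with rfl | hne
    · have : _root_.entireHull (∅ : Set (Fin m → ℂ)) = ∅ := by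
        refine eq_empty_of_forall_notMem fun z hz => ?_
        obtain ⟨w, hw, -⟩ := hz (fun _ => 0) (by fun_prop)
        exact hw
      rw [this]
      exact isClosed_empty
    · have : _root_.entireHull L = ⋂ f : {f : (Fin m → ℂ) → ℂ // Differentiable ℂ f},
          {z | ∃ w ∈ L, ‖f.1 z‖ ≤ ‖f.1 w‖} := by
        ext z; simp [_root_.entireHull]
      rw [this]
      refine isClosed_iInter fun ⟨f, hf⟩ => ?_
      obtain ⟨w, hw, hmax⟩ := hL.exists_isMaxOn hne hf.continuous.norm.continuousOn
      have : {z | ∃ w ∈ L, ‖f z‖ ≤ ‖f w‖} = {z | ‖f z‖ ≤ ‖f w‖} := by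
        ext z
        exact ⟨fun ⟨v, hv, h⟩ => h.trans (hmax hv), fun h => ⟨w, hw, h⟩⟩
      simp only [this]
      exact isClosed_le hf.continuous.norm continuous_const
  · obtain ⟨r, hr⟩ := hL.isBounded.subset_closedBall 0
    exact isBounded_closedBall.subset (entireHull_subset_closedBall (le_max_right r 0)
      (hr.trans (closedBall_subset_closedBall (le_max_left _ _))))

theorem exists_entire_small_large {m : ℕ} {L : Set (Fin m → ℂ)} (hL : IsCompact L)
    {y : Fin m → ℂ} (hy : y ∉ entireHull L) {a b : ℝ} (ha : 0 < a) :
    ∃ p : (Fin m → ℂ) → ℂ, Differentiable ℂ p ∧ (∀ w ∈ L, ‖p w‖ ≤ a) ∧ b < ‖p y‖ := by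
  rcases L.eq_empty_or_nonempty with rfl | hne
  · refine ⟨fun _ => ((|b| + 1 : ℝ) : ℂ), by fun_prop, by simp, ?_⟩
    rw [Complex.norm_real, Real.norm_eq_abs, abs_of_pos (by positivity)]
    linarith [le_abs_self b]
  have : ∃ f : (Fin m → ℂ) → ℂ, Differentiable ℂ f ∧ ∀ w ∈ L, ‖f w‖ < ‖f y‖ := by
    simp only [entireHull, mem_ofPred_eq] at hy
    push Not at hy
    exact hy
  obtain ⟨f, hf, hlt⟩ := this
  obtain ⟨w, hw, hmax⟩ := hL.exists_isMaxOn hne hf.continuous.norm.continuousOn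
  obtain ⟨q, hq1, hq2⟩ := exists_between (hlt w hw)
  have hq : 0 < q := (norm_nonneg _).trans_lt hq1
  obtain ⟨N, hN⟩ := pow_unbounded_of_one_lt (b / a) ((one_lt_div hq).2 hq2)
  refine ⟨fun x => (a : ℂ) * (f x * (q : ℂ)⁻¹) ^ N, by fun_prop, fun v hv => ?_, ?_⟩
  · have h1 : ‖f v‖ / q ≤ 1 := (div_le_one hq).2 ((hmax hv).trans hq1.le)
    have h2 : (‖f v‖ / q) ^ N ≤ 1 := pow_le_one₀ (by positivity) h1
    rw [norm_mul, norm_pow, norm_mul, norm_inv, Complex.norm_real, Complex.norm_real,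
      Real.norm_of_nonneg ha.le, Real.norm_of_nonneg hq.le, ← div_eq_mul_inv]
    nlinarith
  · rw [norm_mul, norm_pow, norm_mul, norm_inv, Complex.norm_real, Complex.norm_real,
      Real.norm_of_nonneg ha.le, Real.norm_of_nonneg hq.le, ← div_eq_mul_inv]
    rw [div_lt_iff₀ ha] at hN
    linarith

theorem exists_polyhedron_subset {m : ℕ} {X U : Set (Fin m → ℂ)} (hX : IsCompact X)
    (hXc : entireHull X ⊆ X) (hU : IsOpen U) (hXU : X ⊆ U) {R : ℝ} (hR : 0 < R) :
    ∃ ps : List ((Fin m → ℂ) → ℂ), (∀ p ∈ ps, Differentiable ℂ p) ∧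
      (∀ p ∈ ps, ∀ x ∈ X, ‖p x‖ ≤ R / 4) ∧ polyhedron R (fun _ => -R) (fun _ => R) ps ⊆ U := by
  have hC : IsCompact (polyhedron R (fun _ : Fin m × Bool => -R) (fun _ => R) [] \ U) :=
    (isCompact_polyhedron (by simp)).diff hU
  have : ∃ ps : List ((Fin m → ℂ) → ℂ), (∀ p ∈ ps, Differentiable ℂ p) ∧
      (∀ p ∈ ps, ∀ x ∈ X, ‖p x‖ ≤ R / 4) ∧
      ∀ y ∈ polyhedron R (fun _ : Fin m × Bool => -R) (fun _ => R) [] \ U,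
        ∃ p ∈ ps, 2 * R < ‖p y‖ := by
    refine hC.induction_on (p := fun s => ∃ ps : List ((Fin m → ℂ) → ℂ),
      (∀ p ∈ ps, Differentiable ℂ p) ∧ (∀ p ∈ ps, ∀ x ∈ X, ‖p x‖ ≤ R / 4) ∧
      ∀ y ∈ s, ∃ p ∈ ps, 2 * R < ‖p y‖) ⟨[], by simp⟩ ?_ ?_ ?_
    · rintro s t hst ⟨ps, h1, h2, h3⟩
      exact ⟨ps, h1, h2, fun y hy => h3 y (hst hy)⟩
    · rintro s t ⟨ps, h1, h2, h3⟩ ⟨qs, k1, k2, k3⟩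
      refine ⟨ps ++ qs, ?_, ?_, ?_⟩
      · intro p hp
        rcases List.mem_append.1 hp with h | h
        exacts [h1 p h, k1 p h]
      · intro p hp
        rcases List.mem_append.1 hp with h | h
        exacts [h2 p h, k2 p h]
      · rintro y (hy | hy)
        · obtain ⟨p, hp, h⟩ := h3 y hy
          exact ⟨p, List.mem_append_left _ hp, h⟩
        · obtain ⟨p, hp, h⟩ := k3 y hy
          exact ⟨p, List.mem_append_right _ hp, h⟩
    · intro y hy
      obtain ⟨p, hp, hp1, hp2⟩ := exists_entire_small_large hX (y := y)
        (fun h => hy.2 (hXU (hXc h))) (show 0 < R / 4 by positivity) (b := 2 * R)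
      exact ⟨{x | 2 * R < ‖p x‖}, mem_nhdsWithin_of_mem_nhds
        ((isOpen_lt continuous_const hp.continuous.norm).mem_nhds hp2),
        [p], by simpa using hp, by simpa using hp1, by simp⟩
  obtain ⟨ps, h1, h2, h3⟩ := this
  refine ⟨ps, h1, h2, fun x hx => by_contra fun hxU => ?_⟩
  obtain ⟨p, hp, hlt⟩ := h3 x ⟨⟨hx.1, by simp⟩, hxU⟩
  have := hx.2 p hp
  linarith [Complex.norm_le_abs_re_add_abs_im (p x)]

theorem mem_polyhedron_of_norm_le {m : ℕ} {R : ℝ} (hR : 0 < R) {ps : List ((Fin m → ℂ) → ℂ)}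
    {x : Fin m → ℂ} (hx : ‖x‖ ≤ R / 4) (hp : ∀ p ∈ ps, ‖p x‖ ≤ R / 4) :
    x ∈ polyhedron R (fun _ => -R) (fun _ => R) ps := by
  refine ⟨fun ⟨j, b⟩ => ?_, fun p h => ?_⟩
  · have := norm_le_pi_norm x j
    rw [mem_Icc, ← abs_le]
    cases b
    · exact (Complex.abs_re_le_norm _).trans (this.trans (by linarith))
    · exact (Complex.abs_im_le_norm _).trans (this.trans (by linarith))
  · have := hp p h
    exact ⟨(Complex.abs_re_le_norm _).trans (by linarith),
      (Complex.abs_im_le_norm _).trans (by linarith)⟩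

theorem exists_pos_subset_closedBall {m : ℕ} {X : Set (Fin m → ℂ)} (hX : IsCompact X) :
    ∃ R > 0, ∀ x ∈ X, ‖x‖ ≤ R / 4 := by
  obtain ⟨r, hr⟩ := hX.isBounded.subset_closedBall 0
  refine ⟨4 * (|r| + 1), by positivity, fun x hx => ?_⟩
  have := hr hx
  rw [mem_closedBall_zero_iff] at this
  linarith [le_abs_self r]

/-- **Oka–Weil approximation.** -/
theorem exists_entire_approx {m : ℕ} {X U : Set (Fin m → ℂ)} (hX : IsCompact X)
    (hXc : entireHull X ⊆ X) (hU : IsOpen U) (hXU : X ⊆ U) {f : (Fin m → ℂ) → ℂ}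
    (hf : DifferentiableOn ℂ f U) {ε : ℝ} (hε : 0 < ε) :
    ∃ F : (Fin m → ℂ) → ℂ, Differentiable ℂ F ∧ ∀ x ∈ X, ‖F x - f x‖ < ε := by
  obtain ⟨R, hR, hXR⟩ := exists_pos_subset_closedBall hX
  obtain ⟨ps, h1, h2, h3⟩ := exists_polyhedron_subset hX hXc hU hXU hR
  obtain ⟨G, hG, hGa⟩ := exists_entire_approx_polyhedron hR _ m ps rfl h1 U f hU hf h3 ε hε
  exact ⟨G, hG, fun x hx => hGa x (hXR x hx) fun p hp => h2 p hp x hx⟩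

theorem cousinSolvable_of_entireHull_subset {m : ℕ} {X U₁ U₂ : Set (Fin m → ℂ)}
    (hX : IsCompact X) (hXc : entireHull X ⊆ X) (hU₁ : IsOpen U₁) (hU₂ : IsOpen U₂)
    (hXU : X ⊆ U₁ ∪ U₂) {φ : (Fin m → ℂ) → ℂ} (hφ : DifferentiableOn ℂ φ (U₁ ∩ U₂)) :
    CousinSolvable X U₁ U₂ φ := by
  obtain ⟨R, hR, hXR⟩ := exists_pos_subset_closedBall hX
  obtain ⟨ps, h1, h2, h3⟩ := exists_polyhedron_subset hX hXc (hU₁.union hU₂) hXU hR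
  obtain ⟨V, φ₁, φ₂, hV, hS, h⟩ :=
    (slicesSplit R _ m ps rfl h1).cousinSolvable h1 hU₁ hU₂ hφ h3
  exact ⟨V, φ₁, φ₂, hV, fun x hx =>
    hS (mem_polyhedron_of_norm_le hR (hXR x hx) fun p hp => h2 p hp x hx), h⟩

theorem exists_mem_frontier_or_mem_of_ne_zero {m : ℕ} {L N U : Set (Fin m → ℂ)}
    (hL : IsCompact L) (hN : IsCompact N) (hU : IsOpen U) (hNU : entireHull L ∩ N ⊆ U)
    {h : (Fin m → ℂ) → ℂ} (hh : DifferentiableOn ℂ h U) {x : Fin m → ℂ}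
    (hx : x ∈ entireHull L) (hxN : x ∈ N) (hhx : h x ≠ 0) :
    ∃ y ∈ entireHull L ∩ N, (y ∈ frontier N ∨ y ∈ L) ∧ ‖h x‖ ≤ ‖h y‖ := by
  set X := entireHull L with hXdef
  have hX : IsCompact X := hL.entireHull
  have hXc : entireHull X ⊆ X := entireHull_entireHull_subset L
  have hLX : L ⊆ X := subset_entireHull L
  obtain ⟨x₁, hx₁, hmax⟩ := (hX.inter hN).exists_isMaxOn ⟨x, hx, hxN⟩
    (hh.continuousOn.mono hNU).norm
  have hmx : ‖h x‖ ≤ ‖h x₁‖ := hmax ⟨hx, hxN⟩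
  by_contra! hcon
  have hx₁0 : 0 < ‖h x₁‖ := (norm_pos_iff.2 hhx).trans_le hmx
  have hx₁0' : h x₁ ≠ 0 := norm_pos_iff.1 hx₁0
  set k : (Fin m → ℂ) → ℂ := fun y => (h x₁)⁻¹ * h y with hk
  have hkd : DifferentiableOn ℂ k U := hh.const_mul _
  have hk1 : k x₁ = 1 := inv_mul_cancel₀ hx₁0'
  have hkle : ∀ y ∈ X ∩ N, ‖k y‖ ≤ 1 := by
    intro y hy
    rw [hk, norm_mul, norm_inv, inv_mul_le_one₀ hx₁0]
    exact hmax hy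
  have hklt : ∀ y ∈ X ∩ N, (y ∈ frontier N ∨ y ∈ L) → k y ≠ 1 := by
    intro y hy hy' h1
    have : ‖k y‖ < 1 := by
      rw [hk, norm_mul, norm_inv, inv_mul_lt_one₀ hx₁0]
      exact (hcon y hy hy').trans_le hmx
    rw [h1, norm_one] at this
    exact lt_irrefl _ this
  set U₁ := interior N ∩ U
  set U₂ := Nᶜ ∪ (U ∩ k ⁻¹' {1}ᶜ) with hU₂def
  have hU₁ : IsOpen U₁ := isOpen_interior.inter hU
  have hU₂ : IsOpen U₂ := hN.isClosed.isOpen_compl.union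
    (hkd.continuousOn.isOpen_inter_preimage hU isOpen_compl_singleton)
  have hE : ∀ y ∈ X, y ∉ U₂ → y ∈ U₁ ∧ k y = 1 ∧ y ∈ N ∧ y ∉ L := by
    intro y hy hy2
    have hyN : y ∈ N := by_contra fun h' => hy2 (Or.inl h')
    have hyU := hNU ⟨hy, hyN⟩
    have hy1 : k y = 1 := by_contra fun h' => hy2 (Or.inr ⟨hyU, h'⟩)
    refine ⟨⟨?_, hyU⟩, hy1, hyN, fun h' => hklt y ⟨hy, hyN⟩ (Or.inr h') hy1⟩
    by_contra h'
    exact hklt y ⟨hy, hyN⟩ (Or.inl ⟨subset_closure hyN, h'⟩) hy1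
  have hne : ∀ y ∈ U₁ ∩ U₂, k y - 1 ≠ 0 := by
    rintro y ⟨⟨hy, -⟩, hy2 | hy2⟩
    · exact absurd (interior_subset hy) hy2
    · exact sub_ne_zero.2 hy2.2
  have hφ : DifferentiableOn ℂ (fun y => 1 / (k y - 1)) (U₁ ∩ U₂) :=
    DifferentiableOn.div_of_ne (differentiableOn_const 1)
      ((hkd.mono fun y hy => hy.1.2).sub (differentiableOn_const 1)) hne
  obtain ⟨V, φ₁, φ₂, hV, hXV, hφ₁, hφ₂, hφe⟩ := cousinSolvable_of_entireHull_subset hX hXc hU₁ hU₂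
    (fun y hy => by_contra fun h' => h' (Or.inl (hE y hy fun h2 => h' (Or.inr h2)).1)) hφ
  beta_reduce at hφe
  have hEc : IsCompact (X \ U₂) := hX.diff hU₂
  obtain ⟨W, hW, hEW, hWV, hWc⟩ := exists_open_between_and_isCompact_closure hEc (hU₁.inter hV)
    (fun y hy => ⟨(hE y hy.1 hy.2).1, hXV hy.1⟩)
  obtain ⟨C₁, hC₁⟩ := hWc.exists_bound_of_continuousOn (hφ₁.continuousOn.mono hWV)
  obtain ⟨C₂, hC₂⟩ := (hX.diff hW).exists_bound_of_continuousOn (hφ₂.continuousOn.mono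
    fun y hy => ⟨by_contra fun h' => hy.2 (hEW ⟨hy.1, h'⟩), hXV hy.1⟩)
  set C := max C₁ C₂
  have hRe : ∀ y ∈ X, y ∈ U₂ → -(φ₂ y).re ≤ C := by
    intro y hy hy2
    by_cases hyW : y ∈ W
    · have hyU := hWV (subset_closure hyW)
      have h1 := hφe y ⟨⟨hyU.1, hy2⟩, hyU.2⟩
      have h2 : ((1 : ℂ) / (k y - 1)).re ≤ 0 := by
        rw [one_div, Complex.inv_re]
        refine div_nonpos_of_nonpos_of_nonneg ?_ (Complex.normSq_nonneg _)
        have := Complex.re_le_norm (k y)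
        have := hkle y ⟨hy, interior_subset hyU.1.1⟩
        simp; linarith
      rw [h1, Complex.sub_re] at h2
      linarith [le_max_left C₁ C₂,
        abs_le.1 ((Complex.abs_re_le_norm _).trans (hC₁ y (subset_closure hyW)))]
    · have := abs_le.1 ((Complex.abs_re_le_norm _).trans (hC₂ y ⟨hy, hyW⟩))
      linarith [le_max_right C₁ C₂]
  set A := (U₂ ∩ V) ∩ φ₂ ⁻¹' {w | -w.re < C + 1}
  have hA : IsOpen A := hφ₂.continuousOn.isOpen_inter_preimage (hU₂.inter hV)
    (isOpen_lt (by fun_prop) continuous_const)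
  set q : (Fin m → ℂ) → ℂ := fun y => 1 - (φ₁ y + C + 1) * (k y - 1) with hq
  have hqd : DifferentiableOn ℂ q (U₁ ∩ V) :=
    (differentiableOn_const 1).sub (((hφ₁.add (differentiableOn_const (C : ℂ))).add
      (differentiableOn_const 1)).mul ((hkd.mono fun y hy => hy.1.2).sub
        (differentiableOn_const 1)))
  set B := (U₁ ∩ V) ∩ q ⁻¹' {0}ᶜ
  have hB : IsOpen B := hqd.continuousOn.isOpen_inter_preimage (hU₁.inter hV) isOpen_compl_singleton
  have hAne : ∀ y ∈ A, (-φ₂ y - C - 1).re < 0 := by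
    intro y hy
    have : -(φ₂ y).re < C + 1 := hy.2
    simp; linarith
  obtain ⟨G, hG, hGA, hGB⟩ := exists_differentiableOn_union hA hB
    (f₁ := fun y => 1 / (-φ₂ y - C - 1)) (f₂ := fun y => (k y - 1) / q y)
    (DifferentiableOn.div_of_ne (differentiableOn_const 1) (((hφ₂.mono fun y hy => hy.1).neg.sub
      (differentiableOn_const _)).sub (differentiableOn_const 1)) fun y hy h0 => by
        have := hAne y hy
        rw [h0] at this
        simp at this)
    (DifferentiableOn.div_of_ne ((hkd.mono fun y hy => hy.1.1.2).sub (differentiableOn_const 1))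
      (hqd.mono fun y hy => hy.1) fun y hy => hy.2)
    (by
      rintro y ⟨hyA, hyB⟩
      have h1 := hφe y ⟨⟨hyB.1.1, hyA.1.1⟩, hyA.1.2⟩
      have h2 := hne y ⟨hyB.1.1, hyA.1.1⟩
      have h3 : -φ₂ y - C - 1 ≠ 0 := fun h0 => by
        have := hAne y hyA
        rw [h0] at this
        simp at this
      have h4 : q y ≠ 0 := hyB.2
      rw [div_eq_div_iff h3 h4, hq]
      have h5 : -φ₂ y = 1 / (k y - 1) - φ₁ y := by rw [h1]; ring
      rw [h5]
      field_simp
      ring)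
  have hLA : L ⊆ A := by
    intro y hy
    have hyX := hLX hy
    have hy2 : y ∈ U₂ := by_contra fun h' => (hE y hyX h').2.2.2 hy
    exact ⟨⟨hy2, hXV hyX⟩, by
      have := hRe y hyX hy2
      show -(φ₂ y).re < C + 1
      linarith⟩
  have hEB : ∀ y ∈ X, y ∉ U₂ → y ∈ B ∧ G y = 0 := by
    intro y hy hy2
    obtain ⟨h1, h2, -⟩ := hE y hy hy2
    have hB' : y ∈ B := ⟨⟨h1, hXV hy⟩, by simp [hq, h2]⟩
    exact ⟨hB', by rw [hGB y hB', h2]; simp⟩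
  have hXAB : X ⊆ A ∪ B := by
    intro y hy
    by_cases hy2 : y ∈ U₂
    · refine Or.inl ⟨⟨hy2, hXV hy⟩, ?_⟩
      have := hRe y hy hy2
      show -(φ₂ y).re < C + 1
      linarith
    · exact Or.inr (hEB y hy hy2).1
  have hGL : ∀ y ∈ L, (G y).re < 0 := by
    intro y hy
    rw [hGA y (hLA hy), one_div, Complex.inv_re]
    refine div_neg_of_neg_of_pos (hAne y (hLA hy)) (Complex.normSq_pos.2 fun h0 => ?_)
    have := hAne y (hLA hy)
    rw [h0] at this
    simp at this
  have hexp : DifferentiableOn ℂ (fun y => Complex.exp (G y)) (A ∪ B) := hG.cexp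
  obtain ⟨v, hv, -⟩ := hx (fun _ => 0) (by fun_prop)
  obtain ⟨w, hw, hwmax⟩ := hL.exists_isMaxOn ⟨v, hv⟩
    (hexp.continuousOn.mono (hLX.trans hXAB)).norm
  have hw1 : ‖Complex.exp (G w)‖ < 1 := by
    rw [Complex.norm_exp, Real.exp_lt_one_iff]
    exact hGL w hw
  obtain ⟨F, hF, hFa⟩ := exists_entire_approx hX hXc (hA.union hB) hXAB hexp
    (ε := (1 - ‖Complex.exp (G w)‖) / 2) (by linarith)
  obtain ⟨u, hu, huF⟩ := hx₁.1 F hF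
  have h1 := hFa x₁ hx₁.1
  have hx₁2 : x₁ ∉ U₂ := by
    rintro (h' | h')
    · exact h' hx₁.2
    · exact h'.2 hk1
  have h2 := hFa u (hLX hu)
  have h3 : ‖Complex.exp (G u)‖ ≤ ‖Complex.exp (G w)‖ := hwmax hu
  rw [(hEB x₁ hx₁.1 hx₁2).2, Complex.exp_zero] at h1
  have h4 := norm_sub_norm_le (1 : ℂ) (F x₁)
  rw [norm_one, norm_sub_rev] at h4
  have h5 := norm_sub_norm_le (F u) (Complex.exp (G u))
  linarith

/-- **Rossi's local maximum modulus principle.** -/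
theorem exists_mem_frontier_or_mem {m : ℕ} {L N U : Set (Fin m → ℂ)}
    (hL : IsCompact L) (hN : IsCompact N) (hU : IsOpen U) (hNU : entireHull L ∩ N ⊆ U)
    {h : (Fin m → ℂ) → ℂ} (hh : DifferentiableOn ℂ h U) {x : Fin m → ℂ}
    (hx : x ∈ entireHull L) (hxN : x ∈ N) :
    ∃ y ∈ entireHull L ∩ N, (y ∈ frontier N ∨ y ∈ L) ∧ ‖h x‖ ≤ ‖h y‖ := by
  by_cases hhx : h x = 0
  · obtain ⟨y, hy, hy', -⟩ := exists_mem_frontier_or_mem_of_ne_zero hL hN isOpen_univ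
      (subset_univ _) (differentiableOn_const (1 : ℂ)) hx hxN one_ne_zero
    exact ⟨y, hy, hy', by rw [hhx, norm_zero]; exact norm_nonneg _⟩
  · exact exists_mem_frontier_or_mem_of_ne_zero hL hN hU hNU hh hx hxN hhx

/-- Near `y`, entire functions satisfy a maximum principle on `Y`: their value at `y` is dominated
by their values on compact subsets of `Y \ {y}` arbitrarily close to `y`. -/
def DominatedNear {m : ℕ} (Y : Set (Fin m → ℂ)) (y : Fin m → ℂ) : Prop :=
  ∀ O ∈ 𝓝 y, ∃ M : Set (Fin m → ℂ), IsCompact M ∧ M ⊆ Y ∩ O ∧ y ∉ M ∧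
    ∀ F : (Fin m → ℂ) → ℂ, Differentiable ℂ F → ∃ x ∈ M, ‖F y‖ ≤ ‖F x‖

theorem DominatedNear.mono_nhds {m : ℕ} {Y Y' O : Set (Fin m → ℂ)} {y : Fin m → ℂ}
    (h : DominatedNear Y y) (hO : O ∈ 𝓝 y) (hsub : Y ∩ O ⊆ Y') : DominatedNear Y' y := by
  intro Q hQ
  obtain ⟨M, hM, hMs, hyM, hF⟩ := h (Q ∩ O) (inter_mem hQ hO)
  exact ⟨M, hM, fun x hx => ⟨hsub ⟨(hMs hx).1, (hMs hx).2.2⟩, (hMs hx).2.1⟩, hyM, hF⟩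

theorem DominatedNear.mono {m : ℕ} {Y Y' : Set (Fin m → ℂ)} {y : Fin m → ℂ}
    (h : DominatedNear Y y) (hsub : Y ⊆ Y') : DominatedNear Y' y :=
  h.mono_nhds univ_mem fun _ hx => hsub hx.1

theorem exists_closedBall_subset_of_notMem {m : ℕ} {L O : Set (Fin m → ℂ)} (hL : IsClosed L)
    {y : Fin m → ℂ} (hyL : y ∉ L) (hO : O ∈ 𝓝 y) :
    ∃ r > 0, closedBall y r ⊆ O ∧ Disjoint (closedBall y r) L := by
  obtain ⟨r, hr, h⟩ := Metric.nhds_basis_closedBall.mem_iff.1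
    (inter_mem hO (hL.isOpen_compl.mem_nhds hyL))
  exact ⟨r, hr, fun x hx => (h hx).1, disjoint_left.2 fun x hx => (h hx).2⟩

theorem dominatedNear_entireHull {m : ℕ} {L : Set (Fin m → ℂ)} (hL : IsCompact L)
    {y : Fin m → ℂ} (hy : y ∈ entireHull L) (hyL : y ∉ L) : DominatedNear (entireHull L) y := by
  intro O hO
  obtain ⟨r, hr, hrO, hrL⟩ := exists_closedBall_subset_of_notMem hL.isClosed hyL hO
  refine ⟨entireHull L ∩ sphere y r, hL.entireHull.inter (isCompact_sphere y r),
    fun x hx => ⟨hx.1, hrO (sphere_subset_closedBall hx.2)⟩, fun h => ?_, fun F hF => ?_⟩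
  · have := h.2
    rw [mem_sphere, dist_self] at this
    exact hr.ne this
  · obtain ⟨x, hx, hx' | hx', hle⟩ := exists_mem_frontier_or_mem hL (isCompact_closedBall y r)
      isOpen_univ (subset_univ _) hF.differentiableOn hy (mem_closedBall_self hr.le)
    · exact ⟨x, ⟨hx.1, frontier_closedBall_subset_sphere hx'⟩, hle⟩
    · exact absurd hx' (disjoint_left.1 hrL hx.2)

theorem dominatedNear_of_disc {m : ℕ} {Y : Set (Fin m → ℂ)} {g : ℂ → Fin m → ℂ} {z₀ : ℂ} {ρ : ℝ}
    (hρ : 0 < ρ) (hg : DifferentiableOn ℂ g (ball z₀ ρ)) (hinj : InjOn g (ball z₀ ρ))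
    (hY : g '' ball z₀ ρ ⊆ Y) : DominatedNear Y (g z₀) := by
  intro O hO
  have hc : ContinuousAt g z₀ := hg.continuousOn.continuousAt (ball_mem_nhds _ hρ)
  obtain ⟨r, hr, h⟩ := Metric.nhds_basis_closedBall.mem_iff.1
    (inter_mem (hc.preimage_mem_nhds hO) (ball_mem_nhds z₀ hρ))
  have hb : closedBall z₀ r ⊆ ball z₀ ρ := fun z hz => (h hz).2
  have hz₀ : z₀ ∈ ball z₀ ρ := mem_ball_self hρ
  refine ⟨g '' sphere z₀ r, (isCompact_sphere z₀ r).image_of_continuousOn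
    (hg.continuousOn.mono (sphere_subset_closedBall.trans hb)), ?_, ?_, fun F hF => ?_⟩
  · rintro _ ⟨z, hz, rfl⟩
    have := sphere_subset_closedBall hz
    exact ⟨hY ⟨z, hb this, rfl⟩, (h this).1⟩
  · rintro ⟨z, hz, he⟩
    have := hinj (hb (sphere_subset_closedBall hz)) hz₀ he
    rw [this, mem_sphere, dist_self] at hz
    exact hr.ne hz
  · have hd : DiffContOnCl ℂ (F ∘ g) (ball z₀ r) :=
      (hF.comp_differentiableOn (hg.mono hb)).diffContOnCl_ball subset_rfl
    obtain ⟨w, hw, hmax⟩ := Complex.exists_mem_frontier_isMaxOn_norm isBounded_ball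
      (nonempty_ball.2 hr) hd
    exact ⟨g w, ⟨w, frontier_ball_subset_sphere hw, rfl⟩,
      hmax (subset_closure (mem_ball_self hr))⟩

theorem exists_mem_inter_of_dominatedNear_of_ne_zero {m : ℕ} {Y F : Set (Fin m → ℂ)}
    (hY : IsCompact Y)
    (hdom : ∀ y ∈ Y, y ∉ F → DominatedNear Y y) {y₀ : Fin m → ℂ} (hy₀ : y₀ ∈ Y)
    {h : (Fin m → ℂ) → ℂ} (hh : Differentiable ℂ h) (h0 : h y₀ ≠ 0) :
    ∃ x ∈ Y ∩ F, ‖h y₀‖ ≤ ‖h x‖ := by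
  by_contra! hcon
  obtain ⟨y₁, hy₁, hmax⟩ := hY.exists_isMaxOn ⟨y₀, hy₀⟩ hh.continuous.norm.continuousOn
  set c := ‖h y₁‖ with hc
  have hc1 : ‖h y₀‖ ≤ c := hmax hy₀
  have hc0 : 0 < c := (norm_pos_iff.2 h0).trans_le hc1
  have hP : IsCompact (Y ∩ {y | ‖h y‖ = c}) :=
    hY.inter_right (isClosed_eq hh.continuous.norm continuous_const)
  obtain ⟨y, ⟨hyY, hyP⟩, hymax⟩ := hP.exists_isMaxOn ⟨y₁, hy₁, rfl⟩
    (f := fun x => ∑ i, Complex.normSq (x i))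
    (Continuous.continuousOn (by
      exact continuous_finsetSum _ fun i _ => Complex.continuous_normSq.comp (continuous_apply i)))
  have hyP : ‖h y‖ = c := hyP
  have hyF : y ∉ F := fun hyF => by
    have := hcon y ⟨hyY, hyF⟩
    linarith
  obtain ⟨M, hM, hMY, hyM, hdom⟩ := hdom y hyY hyF univ univ_mem
  set ℓ : (Fin m → ℂ) → ℂ := fun x => ∑ i, x i * (starRingEnd ℂ) (y i) with hℓ
  have hℓd : Differentiable ℂ ℓ := by fun_prop
  have hlt : ∀ x ∈ M, ‖h x‖ = c → (ℓ x).re < (ℓ y).re := by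
    intro x hx hxc
    have h1 : ∑ i, Complex.normSq (x i) ≤ ∑ i, Complex.normSq (y i) :=
      hymax ⟨(hMY hx).1, hxc⟩
    have h2 : 0 < ∑ i, Complex.normSq (x i - y i) := by
      obtain ⟨i, hi⟩ : ∃ i, x i ≠ y i := by
        by_contra! hxy
        exact hyM (funext hxy ▸ hx)
      exact Finset.sum_pos' (fun i _ => Complex.normSq_nonneg _)
        ⟨i, Finset.mem_univ i, Complex.normSq_pos.2 (sub_ne_zero.2 hi)⟩
    have h3 : (ℓ y).re = ∑ i, Complex.normSq (y i) := by
      simp [hℓ, Complex.mul_conj]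
    simp only [Complex.normSq_sub, Finset.sum_sub_distrib, Finset.sum_add_distrib,
      ← Finset.mul_sum] at h2
    have h4 : (ℓ x).re = ∑ i, (x i * (starRingEnd ℂ) (y i)).re := by simp [hℓ]
    rw [← h4] at h2
    linarith
  have hle : ∀ x ∈ M, ‖h x‖ ≤ c := fun x hx => hmax (hMY hx).1
  have hk : ∀ k : ℕ, ∃ x ∈ M, (ℓ y).re ≤ (ℓ x).re ∧
      Real.exp ((ℓ y).re - (ℓ x).re) ≤ (‖h x‖ / c) ^ k := by
    intro k
    obtain ⟨x, hx, hxle⟩ := hdom (fun x => h x ^ k * Complex.exp (ℓ x)) (by fun_prop)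
    have h1 : Real.exp ((ℓ y).re - (ℓ x).re) ≤ (‖h x‖ / c) ^ k := by
      simp only [norm_mul, norm_pow, Complex.norm_exp, hyP] at hxle
      rw [Real.exp_sub, div_pow, div_le_div_iff₀ (Real.exp_pos _) (by positivity)]
      linarith
    have h2 : (‖h x‖ / c) ^ k ≤ 1 :=
      pow_le_one₀ (by positivity) ((div_le_one hc0).2 (hle x hx))
    refine ⟨x, hx, ?_, h1⟩
    have := Real.exp_le_one_iff.1 (h1.trans h2)
    linarith
  have hM' : IsCompact (M ∩ {x | (ℓ y).re ≤ (ℓ x).re}) :=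
    hM.inter_right (isClosed_le continuous_const (Complex.continuous_re.comp hℓd.continuous))
  obtain ⟨x₀, hx₀, hx₀', -⟩ := hk 0
  obtain ⟨u, hu, humax⟩ := hM'.exists_isMaxOn ⟨x₀, hx₀, hx₀'⟩ hh.continuous.norm.continuousOn
  obtain ⟨v, hv, hvmax⟩ := hM'.exists_isMaxOn ⟨x₀, hx₀, hx₀'⟩
    (Complex.continuous_re.comp hℓd.continuous).continuousOn
  have huc : ‖h u‖ / c < 1 := by
    rw [div_lt_one hc0]
    exact lt_of_le_of_ne (hle u hu.1) fun he => absurd hu.2 (not_le.2 (hlt u hu.1 he))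
  obtain ⟨k, hk'⟩ := exists_pow_lt_of_lt_one (Real.exp_pos ((ℓ y).re - (ℓ v).re)) huc
  obtain ⟨x, hx, hx', hxk⟩ := hk k
  have h1 : ‖h x‖ ≤ ‖h u‖ := humax ⟨hx, hx'⟩
  have h2 : (ℓ x).re ≤ (ℓ v).re := hvmax ⟨hx, hx'⟩
  have h3 : (‖h x‖ / c) ^ k ≤ (‖h u‖ / c) ^ k := by gcongr
  have h4 : Real.exp ((ℓ y).re - (ℓ v).re) ≤ Real.exp ((ℓ y).re - (ℓ x).re) := by gcongr
  linarith

/-- A local maximum principle off `F` yields a global one. -/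
theorem exists_mem_inter_of_dominatedNear {m : ℕ} {Y F : Set (Fin m → ℂ)} (hY : IsCompact Y)
    (hdom : ∀ y ∈ Y, y ∉ F → DominatedNear Y y) {y₀ : Fin m → ℂ} (hy₀ : y₀ ∈ Y)
    {h : (Fin m → ℂ) → ℂ} (hh : Differentiable ℂ h) :
    ∃ x ∈ Y ∩ F, ‖h y₀‖ ≤ ‖h x‖ := by
  by_cases h0 : h y₀ = 0
  · obtain ⟨x, hx, -⟩ := exists_mem_inter_of_dominatedNear_of_ne_zero hY hdom hy₀
      (differentiable_const (1 : ℂ)) one_ne_zero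
    exact ⟨x, hx, by rw [h0, norm_zero]; exact norm_nonneg _⟩
  · exact exists_mem_inter_of_dominatedNear_of_ne_zero hY hdom hy₀ hh h0

theorem subset_entireHull_of_dominatedNear {m : ℕ} {Y F : Set (Fin m → ℂ)} (hY : IsCompact Y)
    (hdom : ∀ y ∈ Y, y ∉ F → DominatedNear Y y) : Y ⊆ entireHull (Y ∩ F) :=
  fun _ hy _ hh => exists_mem_inter_of_dominatedNear hY hdom hy hh

theorem isCompact_convexHull_of_isCompact {E : Type} [NormedAddCommGroup E] [NormedSpace ℝ E]
    [FiniteDimensional ℝ E] {s : Set E} (hs : IsCompact s) : IsCompact (convexHull ℝ s) := by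
  rcases s.eq_empty_or_nonempty with rfl | ⟨s₀, hs₀⟩
  · simp
  set d := Module.finrank ℝ E + 1
  have : convexHull ℝ s = (fun q : (Fin d → ℝ) × (Fin d → E) => ∑ i, q.1 i • q.2 i) ''
      (stdSimplex ℝ (Fin d) ×ˢ univ.pi fun _ => s) := by
    apply Subset.antisymm
    · intro x hx
      obtain ⟨ι, _, z, w, hz, haff, hw, hw1, rfl⟩ := eq_pos_convex_span_of_mem_convexHull hx
      obtain ⟨e⟩ : Nonempty (ι ↪ Fin d) := Function.Embedding.nonempty_of_card_le (by
        rw [Fintype.card_fin]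
        exact haff.card_le_finrank_succ.trans (Nat.succ_le_succ (Submodule.finrank_le _)))
      have hext : ∀ i, Function.extend e w 0 (e i) = w i := fun i => e.injective.extend_apply _ _ _
      have hzero : ∀ j ∉ range e, Function.extend e w 0 j = 0 := fun j hj =>
        Function.extend_apply' _ _ _ hj
      refine ⟨(Function.extend e w 0, Function.extend e z fun _ => s₀), ⟨⟨fun j => ?_, ?_⟩, ?_⟩, ?_⟩
      · by_cases hj : j ∈ range e
        · obtain ⟨i, rfl⟩ := hj
          simpa only [hext] using (hw i).le
        · simp only [hzero j hj, le_refl]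
      · rw [← hw1]
        exact (Fintype.sum_of_injective e e.injective _ _ hzero fun i => (hext i).symm).symm
      · intro j _
        by_cases hj : j ∈ range e
        · obtain ⟨i, rfl⟩ := hj
          simpa only [e.injective.extend_apply] using hz (mem_range_self i)
        · simpa only [Function.extend_apply' _ _ _ hj] using hs₀
      · refine (Fintype.sum_of_injective e e.injective _ _ (fun j hj => ?_) fun i => ?_).symm
        · simp [hzero j hj]
        · simp only [e.injective.extend_apply]
    · rintro _ ⟨⟨w, z⟩, ⟨hw, hz⟩, rfl⟩
      exact mem_convexHull_of_exists_fintype w z hw.1 hw.2 (fun i => hz i (mem_univ i)) rfl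
  rw [this]
  refine ((isCompact_stdSimplex ℝ (Fin d)).prod (isCompact_univ_pi fun _ => hs)).image ?_
  fun_prop

/-- Evaluation at a point of the hull of `S`, restricted to finitely many entire functions, is
integration against a finitely supported probability measure on `S`. -/
theorem exists_weights_of_mem_entireHull {m : ℕ} {S : Set (Fin m → ℂ)} (hS : IsCompact S)
    {x : Fin m → ℂ} (hx : x ∈ entireHull S) {κ : Type} [Fintype κ]
    {h : κ → (Fin m → ℂ) → ℂ} (hh : ∀ j, Differentiable ℂ (h j)) :
    ∃ (ι : Type) (_ : Fintype ι) (w : ι → ℝ) (s : ι → Fin m → ℂ), (∀ i, 0 ≤ w i) ∧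
      ∑ i, w i = 1 ∧ (∀ i, s i ∈ S) ∧ ∀ j, ∑ i, (w i : ℂ) * h j (s i) = h j x := by
  set Φ : (Fin m → ℂ) → κ → ℂ := fun y j => h j y
  have hΦ : Differentiable ℂ Φ := differentiable_pi.2 hh
  have hmem : Φ x ∈ convexHull ℝ (Φ '' S) := by
    by_contra hnot
    obtain ⟨ℓ, u, hlt, hu⟩ := RCLike.geometric_hahn_banach_closed_point (𝕜 := ℂ)
      (convex_convexHull ℝ (Φ '' S))
      (isCompact_convexHull_of_isCompact (hS.image hΦ.continuous)).isClosed hnot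
    obtain ⟨y, hy, hle⟩ := hx (fun y => Complex.exp (ℓ (Φ y)))
      (by exact (ℓ.differentiable.comp hΦ).cexp)
    rw [Complex.norm_exp, Complex.norm_exp, Real.exp_le_exp] at hle
    have := hlt (Φ y) (subset_convexHull ℝ _ ⟨y, hy, rfl⟩)
    simp only [RCLike.re_to_complex] at this hu
    linarith
  obtain ⟨ι, hι, w, z, hw, hw1, hz, hsum⟩ := mem_convexHull_iff_exists_fintype.1 hmem
  choose s hs hsz using hz
  refine ⟨ι, hι, w, s, hw, hw1, hs, fun j => ?_⟩
  have := congrFun hsum j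
  simp only [Finset.sum_apply, Pi.smul_apply, ← hsz] at this
  simpa [Φ] using this

theorem sum_mul_pow_mul_conj_pow {ι : Type} [Fintype ι] {v u : ι → ℂ} (hu : ∀ a, ‖u a‖ = 1)
    {c : ℂ} {N : ℕ} (h : ∀ l ≤ N, ∑ a, v a * u a ^ l = c * 0 ^ l) {p q : ℕ} (hp : p ≤ N)
    (hqp : q ≤ p) :
    ∑ a, v a * (u a ^ p * (starRingEnd ℂ) (u a) ^ q) = if p = q then c else 0 := by
  have : ∀ a, u a ^ p * (starRingEnd ℂ) (u a) ^ q = u a ^ (p - q) := by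
    intro a
    have h1 : u a * (starRingEnd ℂ) (u a) = 1 := by
      rw [Complex.mul_conj, Complex.normSq_eq_norm_sq, hu]; simp
    rw [← Nat.sub_add_cancel hqp, pow_add, mul_assoc, ← mul_pow, h1, one_pow, mul_one,
      Nat.add_sub_cancel]
  simp only [this]
  rw [h _ ((Nat.sub_le p q).trans hp)]
  split_ifs with hpq
  · simp [hpq]
  · rw [zero_pow (by omega), mul_zero]

theorem sum_prod_mul_pow_sum {k N : ℕ} {ι : Fin k → Type} [∀ i, Fintype (ι i)]
    {v u : ∀ i, ι i → ℂ} (hu : ∀ i a, ‖u i a‖ = 1) {c : Fin k → ℂ}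
    (h : ∀ i, ∀ l ≤ N, ∑ a, v i a * u i a ^ l = c i * 0 ^ l) :
    ∑ p : (∀ i, ι i), (∏ i, v i (p i)) *
      ((∑ i, u i (p i)) ^ N * (∑ i, (starRingEnd ℂ) (u i (p i))) ^ N) =
    (∑ a ∈ Finset.piAntidiag (Finset.univ : Finset (Fin k)) N,
      (Nat.multinomial Finset.univ a : ℂ) ^ 2) * ∏ i, c i := by
  have key : ∀ a ∈ Finset.piAntidiag (Finset.univ : Finset (Fin k)) N,
      ∀ b ∈ Finset.piAntidiag (Finset.univ : Finset (Fin k)) N,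
      ∑ p : (∀ i, ι i), ∏ i, (v i (p i) * (u i (p i) ^ a i * (starRingEnd ℂ) (u i (p i)) ^ b i)) =
        if a = b then ∏ i, c i else 0 := by
    intro a ha b hb
    rw [Finset.mem_piAntidiag] at ha hb
    have haN : ∀ i, a i ≤ N := fun i => by
      rw [← ha.1]; exact Finset.single_le_sum (fun _ _ => Nat.zero_le _) (Finset.mem_univ i)
    rw [← Fintype.prod_sum fun i x =>
      v i x * (u i x ^ a i * (starRingEnd ℂ) (u i x) ^ b i)]
    split_ifs with hab
    · subst hab
      exact Finset.prod_congr rfl fun i _ => by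
        rw [sum_mul_pow_mul_conj_pow (hu i) (h i) (haN i) le_rfl, if_pos rfl]
    · obtain ⟨i, hi⟩ : ∃ i, b i < a i := by
        by_contra! hle
        refine hab (funext fun i => ?_)
        have := (Finset.sum_eq_sum_iff_of_le fun i _ => hle i).1 (ha.1.trans hb.1.symm)
        exact this i (Finset.mem_univ i)
      refine Finset.prod_eq_zero (Finset.mem_univ i) ?_
      rw [sum_mul_pow_mul_conj_pow (hu i) (h i) (haN i) hi.le, if_neg hi.ne']
  simp only [Finset.sum_pow_eq_sum_piAntidiag, Finset.sum_mul_sum]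
  simp only [Finset.mul_sum]
  rw [Finset.sum_comm, Finset.sum_mul]
  refine Finset.sum_congr rfl fun a ha => ?_
  rw [Finset.sum_comm]
  have : ∀ b ∈ Finset.piAntidiag (Finset.univ : Finset (Fin k)) N,
      ∑ p : (∀ i, ι i), (∏ i, v i (p i)) *
        ((Nat.multinomial Finset.univ a : ℂ) * (∏ i, u i (p i) ^ a i) *
        ((Nat.multinomial Finset.univ b : ℂ) * ∏ i, (starRingEnd ℂ) (u i (p i)) ^ b i)) =
      (Nat.multinomial Finset.univ a : ℂ) * (Nat.multinomial Finset.univ b : ℂ) *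
        if a = b then ∏ i, c i else 0 := by
    intro b hb
    rw [← key a ha b hb, Finset.mul_sum]
    refine Finset.sum_congr rfl fun p _ => ?_
    rw [Finset.prod_mul_distrib, Finset.prod_mul_distrib]
    ring
  rw [Finset.sum_congr rfl this, Finset.sum_eq_single a]
  · rw [if_pos rfl]; ring
  · intro b _ hb
    rw [if_neg hb.symm, mul_zero]
  · exact fun h' => absurd ha h'

theorem pow_le_mul_sum_multinomial_sq (k N : ℕ) :
    (k : ℝ) ^ (2 * N) ≤ ((N : ℝ) + 1) ^ k *
      ∑ a ∈ Finset.piAntidiag (Finset.univ : Finset (Fin k)) N,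
        (Nat.multinomial Finset.univ a : ℝ) ^ 2 := by
  have h1 : (k : ℝ) ^ N = ∑ a ∈ Finset.piAntidiag (Finset.univ : Finset (Fin k)) N,
      (Nat.multinomial Finset.univ a : ℝ) := by
    have := Finset.sum_pow_eq_sum_piAntidiag (Finset.univ : Finset (Fin k)) (fun _ => (1 : ℝ)) N
    simpa using this
  have h2 : (Finset.piAntidiag (Finset.univ : Finset (Fin k)) N).card ≤ (N + 1) ^ k := by
    have : Finset.piAntidiag (Finset.univ : Finset (Fin k)) N ⊆
        Fintype.piFinset fun _ => Finset.range (N + 1) := by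
      intro a ha
      rw [Finset.mem_piAntidiag] at ha
      rw [Fintype.mem_piFinset]
      intro i
      rw [Finset.mem_range, Nat.lt_succ_iff, ← ha.1]
      exact Finset.single_le_sum (fun _ _ => Nat.zero_le _) (Finset.mem_univ i)
    simpa using Finset.card_le_card this
  rw [pow_mul', h1]
  refine sq_sum_le_card_mul_sum_sq.trans ?_
  gcongr
  exact_mod_cast h2

theorem eq_of_card_le_norm_sum {k : ℕ} {u : Fin k → ℂ} (hu : ∀ i, ‖u i‖ = 1)
    (h : (k : ℝ) ≤ ‖∑ i, u i‖) (i j : Fin k) : u i = u j := by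
  set c := ∑ i, u i with hc
  have hk : (0 : ℝ) < k := by exact_mod_cast i.pos
  have hc0 : c ≠ 0 := norm_pos_iff.1 (hk.trans_le h)
  have hle : ∀ i, (u i * (starRingEnd ℂ) c).re ≤ ‖c‖ := fun i => by
    refine (Complex.re_le_norm _).trans ?_
    rw [norm_mul, hu, one_mul, Complex.norm_conj]
  have hsum : ∑ i, (u i * (starRingEnd ℂ) c).re = ∑ _i : Fin k, ‖c‖ := by
    refine le_antisymm (Finset.sum_le_sum fun i _ => hle i) ?_
    rw [← Complex.re_sum, ← Finset.sum_mul, ← hc, Complex.mul_conj, Complex.ofReal_re,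
      Complex.normSq_eq_norm_sq, Finset.sum_const, Finset.card_univ, Fintype.card_fin,
      nsmul_eq_mul, sq]
    gcongr
  have heq : ∀ i, u i * (starRingEnd ℂ) c = ‖c‖ := by
    intro i
    have h1 := (Finset.sum_eq_sum_iff_of_le fun i _ => hle i).1 hsum i (Finset.mem_univ i)
    have h2 : ‖u i * (starRingEnd ℂ) c‖ = ‖c‖ := by rw [norm_mul, hu, one_mul, Complex.norm_conj]
    have h3 := Complex.sq_norm (u i * (starRingEnd ℂ) c)
    rw [h2, Complex.normSq_apply, h1] at h3
    refine Complex.ext h1 ?_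
    rw [Complex.ofReal_im]
    nlinarith
  have hcc : (starRingEnd ℂ) c ≠ 0 := by simpa using hc0
  exact mul_right_cancel₀ hcc ((heq i).trans (heq j).symm)

/-- Determinants `det (h j (x i))` over a fibre of `f` are dominated by those over the fibres lying
above the boundary circle. -/
theorem exists_norm_det_le {m k : ℕ} (hk : 0 < k) {S : Set (Fin m → ℂ)} (hS : IsCompact S)
    {u : (Fin m → ℂ) → ℂ} (hud : Differentiable ℂ u) (hu : ∀ y ∈ S, ‖u y‖ = 1)
    {x : Fin k → Fin m → ℂ} (hx : ∀ i, x i ∈ entireHull S) (hx0 : ∀ i, u (x i) = 0)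
    {h : Fin k → (Fin m → ℂ) → ℂ} (hh : ∀ j, Differentiable ℂ (h j)) :
    ∃ y : Fin k → Fin m → ℂ, (∀ i, y i ∈ S) ∧ (∀ i j, u (y i) = u (y j)) ∧
      ‖(Matrix.of fun i j => h j (x i)).det‖ ≤ ‖(Matrix.of fun i j => h j (y i)).det‖ := by
  by_contra! hcon
  set H : (Fin k → Fin m → ℂ) → ℂ := fun y => (Matrix.of fun i j => h j (y i)).det with hH
  have hHc : Continuous H := by
    refine Continuous.matrix_det (continuous_matrix fun i j => ?_)
    exact (hh j).continuous.comp (continuous_apply i)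
  have hT : IsCompact (univ.pi fun _ : Fin k => S) := isCompact_univ_pi fun _ => hS
  have hC : IsCompact ((univ.pi fun _ : Fin k => S) ∩ {y | ∀ i j, u (y i) = u (y j)}) := by
    refine hT.inter_right ?_
    simp only [ofPred_forall]
    exact isClosed_iInter fun i => isClosed_iInter fun j => isClosed_eq
      (hud.continuous.comp (continuous_apply i)) (hud.continuous.comp (continuous_apply j))
  obtain ⟨s₀, hs₀, -⟩ := hx ⟨0, hk⟩ (fun _ => 0) (by fun_prop)
  obtain ⟨y₀, hy₀, hmax⟩ := hC.exists_isMaxOn ⟨fun _ => s₀, fun _ _ => hs₀, fun _ _ => rfl⟩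
    hHc.norm.continuousOn
  obtain ⟨q, hq1, hq2⟩ := exists_between (hcon y₀ (fun i => hy₀.1 i (mem_univ i)) hy₀.2)
  obtain ⟨Bd, hBd⟩ := hT.exists_bound_of_continuousOn hHc.continuousOn
  have hBd0 : 0 ≤ Bd := (norm_nonneg _).trans (hBd (fun _ => s₀) fun _ _ => hs₀)
  have hq0 : 0 ≤ q := (norm_nonneg _).trans hq1.le
  -- Away from the diagonal fibres the kernel is uniformly small.
  obtain ⟨r, hr0, hr1, hr⟩ : ∃ r : ℝ, 0 ≤ r ∧ r < 1 ∧ ∀ y : Fin k → Fin m → ℂ, (∀ i, y i ∈ S) →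
      q ≤ ‖H y‖ → ‖∑ i, u (y i)‖ ≤ r * k := by
    have hkr : (0 : ℝ) < k := by exact_mod_cast hk
    have hE : IsCompact ((univ.pi fun _ : Fin k => S) ∩ {y | q ≤ ‖H y‖}) :=
      hT.inter_right (isClosed_le continuous_const hHc.norm)
    rcases eq_empty_or_nonempty ((univ.pi fun _ : Fin k => S) ∩ {y | q ≤ ‖H y‖}) with he | hne
    · refine ⟨0, le_rfl, one_pos, fun y hy hqy => ?_⟩
      have : y ∈ (univ.pi fun _ : Fin k => S) ∩ {y | q ≤ ‖H y‖} := ⟨fun i _ => hy i, hqy⟩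
      rw [he] at this
      exact this.elim
    · have hsc : Continuous fun y : Fin k → Fin m → ℂ => ‖∑ i, u (y i)‖ :=
        (continuous_finsetSum _ fun i _ => hud.continuous.comp (continuous_apply i)).norm
      obtain ⟨y₁, hy₁, hmax₁⟩ := hE.exists_isMaxOn hne hsc.continuousOn
      refine ⟨‖∑ i, u (y₁ i)‖ / k, by positivity, ?_, fun y hy hqy => ?_⟩
      · rw [div_lt_one hkr]
        by_contra! hge
        have hS₁ : ∀ i, y₁ i ∈ S := fun i => hy₁.1 i (mem_univ i)
        have : ‖H y₁‖ ≤ ‖H y₀‖ := hmax ⟨hy₁.1, eq_of_card_le_norm_sum (fun i => hu _ (hS₁ i)) hge⟩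
        have h2 : q ≤ ‖H y₁‖ := hy₁.2
        have h3 : ‖H y₀‖ < q := hq1
        linarith
      · rw [div_mul_cancel₀ _ hkr.ne']
        exact hmax₁ ⟨fun i _ => hy i, hqy⟩
  have hqx : q < ‖H x‖ := hq2
  have hbound : ∀ N : ℕ, ‖H x‖ - q ≤ Bd * (((N : ℝ) + 1) ^ k * (r ^ 2) ^ N) := by
    intro N
    set A : ℝ := ∑ a ∈ Finset.piAntidiag (Finset.univ : Finset (Fin k)) N,
        (Nat.multinomial Finset.univ a : ℝ) ^ 2 with hA
    have hAc : (∑ a ∈ Finset.piAntidiag (Finset.univ : Finset (Fin k)) N,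
        (Nat.multinomial Finset.univ a : ℂ) ^ 2) = (A : ℂ) := by simp [hA]
    let hhat : Option (Fin k) → (Fin m → ℂ) → ℂ := fun o => o.elim (fun _ => 1) h
    have hhat_d : ∀ o, Differentiable ℂ (hhat o) := by
      rintro (_ | j)
      · exact differentiable_const 1
      · exact hh j
    have hw := fun i => exists_weights_of_mem_entireHull hS (hx i)
      (κ := Option (Fin k) × Fin (N + 1)) (h := fun j y => hhat j.1 y * u y ^ (j.2 : ℕ))
      fun j => (hhat_d j.1).mul (hud.pow _)
    choose ι hι w s hw0 hw1 hsS hws using hw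
    have hmom : ∀ o : Fin k → Option (Fin k),
        ∑ p : (∀ i, ι i), (∏ i, (w i (p i) : ℂ) * hhat (o i) (s i (p i))) *
          ((∑ i, u (s i (p i))) ^ N * (∑ i, (starRingEnd ℂ) (u (s i (p i)))) ^ N) =
        (A : ℂ) * ∏ i, hhat (o i) (x i) := by
      intro o
      rw [← hAc]
      refine sum_prod_mul_pow_sum (v := fun i a => (w i a : ℂ) * hhat (o i) (s i a))
        (u := fun i a => u (s i a)) (fun i a => hu _ (hsS i a)) fun i l hl => ?_
      have := hws i (o i, ⟨l, Nat.lt_succ_of_le hl⟩)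
      simp only [hx0] at this
      rw [← this]
      exact Finset.sum_congr rfl fun a _ => by ring
    set W : (∀ i, ι i) → ℝ := fun p => ∏ i, w i (p i) with hW
    set Q : (∀ i, ι i) → ℝ := fun p => ‖∑ i, u (s i (p i))‖ ^ (2 * N) with hQ
    have hW0 : ∀ p, 0 ≤ W p := fun p => Finset.prod_nonneg fun i _ => hw0 i _
    have hQ0 : ∀ p, 0 ≤ Q p := fun p => by positivity
    have hQc : ∀ p : (∀ i, ι i), (∑ i, u (s i (p i))) ^ N *
        (∑ i, (starRingEnd ℂ) (u (s i (p i)))) ^ N = (Q p : ℂ) := by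
      intro p
      rw [← map_sum, ← mul_pow, Complex.mul_conj, Complex.normSq_eq_norm_sq]
      simp only [hQ, pow_mul]
      push_cast; rfl
    have hW1 : ∑ p, W p = 1 := by
      rw [hW, ← Fintype.prod_sum fun i a => w i a]
      simp [hw1]
    have hWQ : ∑ p, W p * Q p = A := by
      have := hmom fun _ => none
      simp only [hQc, hhat, Option.elim, mul_one, Finset.prod_const_one] at this
      exact_mod_cast this
    have hdet : ∑ p : (∀ i, ι i), (W p : ℂ) * (Q p : ℂ) * H (fun i => s i (p i)) = A * H x := by
      simp only [hH, Matrix.det_apply', Finset.mul_sum]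
      rw [Finset.sum_comm]
      refine Finset.sum_congr rfl fun σ _ => ?_
      have := hmom fun i => some (σ.symm i)
      simp only [hQc, hhat, Option.elim] at this
      have hre : ∀ z : Fin k → Fin m → ℂ, ∏ i, h (σ.symm i) (z i) = ∏ i, h i (z (σ i)) := by
        intro z
        rw [← Equiv.prod_comp σ]
        simp
      rw [hre] at this
      simp only [Matrix.of_apply]
      rw [mul_left_comm, ← this, Finset.mul_sum]
      refine Finset.sum_congr rfl fun p _ => ?_
      rw [Finset.prod_mul_distrib, hre fun i => s i (p i), hW]
      push_cast
      ring
    have hA0 : 0 ≤ A := Finset.sum_nonneg fun _ _ => sq_nonneg _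
    have hmain : A * ‖H x‖ ≤ q * A + Bd * (r * k) ^ (2 * N) := by
      have e1 : A * ‖H x‖ = ‖(A : ℂ) * H x‖ := by
        rw [norm_mul, Complex.norm_real, Real.norm_of_nonneg hA0]
      rw [e1, ← hdet, ← hWQ, Finset.mul_sum]
      have e2 : Bd * (r * k) ^ (2 * N) = ∑ p, W p * (Bd * (r * k) ^ (2 * N)) := by
        rw [← Finset.sum_mul, hW1, one_mul]
      rw [e2, ← Finset.sum_add_distrib]
      refine norm_sum_le_of_le _ fun p _ => ?_
      rw [norm_mul, norm_mul, Complex.norm_real, Complex.norm_real, Real.norm_of_nonneg (hW0 p),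
        Real.norm_of_nonneg (hQ0 p)]
      have hr' : 0 ≤ (r * k) ^ (2 * N) := by positivity
      rcases le_or_gt q ‖H fun i => s i (p i)‖ with hge | hlt
      · have h1 : Q p ≤ (r * k) ^ (2 * N) := by
          have := hr (fun i => s i (p i)) (fun i => hsS i _) hge
          simp only [hQ]; gcongr
        have h2 := hBd (fun i => s i (p i)) fun i _ => hsS i _
        have h3 : Q p * ‖H fun i => s i (p i)‖ ≤ (r * k) ^ (2 * N) * Bd := by gcongr
        have h4 := mul_le_mul_of_nonneg_left h3 (hW0 p)
        have h5 : 0 ≤ q * (W p * Q p) := mul_nonneg hq0 (mul_nonneg (hW0 p) (hQ0 p))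
        linarith
      · have h1 : W p * Q p * ‖H fun i => s i (p i)‖ ≤ W p * Q p * q :=
          mul_le_mul_of_nonneg_left hlt.le (mul_nonneg (hW0 p) (hQ0 p))
        have h2 : 0 ≤ W p * (Bd * (r * k) ^ (2 * N)) := mul_nonneg (hW0 p) (by positivity)
        linarith
    have hlow := pow_le_mul_sum_multinomial_sq k N
    rw [← hA] at hlow
    have hkp : (0 : ℝ) < (k : ℝ) ^ (2 * N) := by
      have : (0 : ℝ) < k := by exact_mod_cast hk
      positivity
    have hAp : 0 < A := by
      by_contra! h0
      have : ((N : ℝ) + 1) ^ k * A ≤ 0 := mul_nonpos_of_nonneg_of_nonpos (by positivity) h0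
      linarith
    have h6 : A * (‖H x‖ - q) ≤ A * (Bd * (((N : ℝ) + 1) ^ k * (r ^ 2) ^ N)) := by
      calc A * (‖H x‖ - q) ≤ Bd * (r * k) ^ (2 * N) := by linarith
        _ = Bd * r ^ (2 * N) * (k : ℝ) ^ (2 * N) := by rw [mul_pow]; ring
        _ ≤ Bd * r ^ (2 * N) * (((N : ℝ) + 1) ^ k * A) := by gcongr
        _ = _ := by rw [pow_mul]; ring
    exact le_of_mul_le_mul_left h6 hAp
  have hlim : Tendsto (fun N : ℕ => Bd * (((N : ℝ) + 1) ^ k * (r ^ 2) ^ N)) atTop (𝓝 0) := by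
    have hr2 : r ^ 2 < 1 := by nlinarith
    have h1 := tendsto_pow_const_mul_const_pow_of_lt_one k (sq_nonneg r) hr2
    have h2 := tendsto_pow_atTop_nhds_zero_of_lt_one (sq_nonneg r) hr2
    have h3 : Tendsto (fun N : ℕ => 2 ^ k * ((N : ℝ) ^ k * (r ^ 2) ^ N) + 2 ^ k * (r ^ 2) ^ N)
        atTop (𝓝 0) := by
      simpa using (h1.const_mul (2 ^ k)).add (h2.const_mul (2 ^ k))
    have h4 : Tendsto (fun N : ℕ => ((N : ℝ) + 1) ^ k * (r ^ 2) ^ N) atTop (𝓝 0) := by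
      refine squeeze_zero (fun N => by positivity) (fun N => ?_) h3
      have : ((N : ℝ) + 1) ^ k ≤ 2 ^ k * (N : ℝ) ^ k + 2 ^ k := by
        rcases Nat.eq_zero_or_pos N with rfl | hN
        · simp only [Nat.cast_zero, zero_add, one_pow]
          have : (1 : ℝ) ≤ 2 ^ k := one_le_pow₀ (by norm_num)
          have : (0 : ℝ) ≤ 2 ^ k * 0 ^ k := by positivity
          linarith
        · have hN1 : (1 : ℝ) ≤ N := by exact_mod_cast hN
          have : ((N : ℝ) + 1) ^ k ≤ (2 * N) ^ k := by gcongr; linarith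
          rw [mul_pow] at this
          have : (0 : ℝ) ≤ 2 ^ k := by positivity
          linarith
      calc _ ≤ (2 ^ k * (N : ℝ) ^ k + 2 ^ k) * (r ^ 2) ^ N := by gcongr
        _ = _ := by ring
    simpa using h4.const_mul Bd
  have := ge_of_tendsto' hlim hbound
  linarith

/-- The values over which `f` has `k` points of `Z` separated by `P`. -/
def separatedValues {m : ℕ} (Z : Set (Fin m → ℂ)) (f P : (Fin m → ℂ) → ℂ) (k : ℕ) : Set ℂ :=
  {c | ∃ x : Fin k → Fin m → ℂ, (∀ i, x i ∈ Z ∧ f (x i) = c) ∧ Function.Injective fun i => P (x i)}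

section
variable {m k : ℕ} {Z : Set (Fin m → ℂ)} {f P : (Fin m → ℂ) → ℂ} {B : Set ℂ}

theorem not_forall_re_le_of_mem_separatedValues (hk : 0 < k) (hZ : IsCompact Z)
    (hf : Differentiable ℂ f) (hP : Differentiable ℂ P)
    (hdom : ∀ x ∈ Z, f x ∈ B → DominatedNear Z x) {τ : ℂ} (hτ : τ ∈ separatedValues Z f P k)
    {ρ : ℝ} (hρ : 0 < ρ) (hB : closedBall τ ρ ⊆ B) {α : ℂ → ℂ} (hα : Differentiable ℂ α)
    (hα0 : α τ = 0) {δ : ℝ} (hδ : 0 < δ) :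
    ¬ ∀ c ∈ separatedValues Z f P k, c ∈ sphere τ ρ → (α c).re ≤ -δ := by
  intro hle
  obtain ⟨x, hx, hxP⟩ := hτ
  set Y : Set (Fin m → ℂ) := Z ∩ f ⁻¹' closedBall τ ρ with hY
  set S : Set (Fin m → ℂ) := Z ∩ f ⁻¹' sphere τ ρ with hS
  have hYc : IsCompact Y := hZ.inter_right (isClosed_closedBall.preimage hf.continuous)
  have hSc : IsCompact S := hZ.inter_right (isClosed_sphere.preimage hf.continuous)
  have hYF : Y ∩ (f ⁻¹' ball τ ρ)ᶜ ⊆ S := by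
    rintro y ⟨⟨hyZ, hyc⟩, hyb⟩
    refine ⟨hyZ, ?_⟩
    simp only [mem_preimage, mem_closedBall, mem_compl_iff, mem_ball, not_lt] at hyc hyb
    exact le_antisymm hyc hyb
  have hYS : Y ⊆ entireHull S := by
    refine (subset_entireHull_of_dominatedNear hYc (F := (f ⁻¹' ball τ ρ)ᶜ) ?_).trans
      (entireHull_mono hYF)
    intro y hy hyF
    rw [notMem_compl_iff] at hyF
    refine (hdom y hy.1 (hB (ball_subset_closedBall hyF))).mono_nhds
      ((isOpen_ball.preimage hf.continuous).mem_nhds hyF) ?_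
    rintro z ⟨hz, hzb⟩
    exact ⟨hz, ball_subset_closedBall hzb⟩
  have hρc : (ρ : ℂ) ≠ 0 := by exact_mod_cast hρ.ne'
  have hxS : ∀ i, x i ∈ entireHull S := fun i => hYS ⟨(hx i).1, by
    rw [mem_preimage, (hx i).2]; exact mem_closedBall_self hρ.le⟩
  have hV0 : (Matrix.vandermonde fun i => P (x i)).det ≠ 0 :=
    Matrix.det_vandermonde_ne_zero_iff.2 hxP
  have hVc : Continuous fun y : Fin k → Fin m → ℂ => (Matrix.vandermonde fun i => P (y i)).det := by
    simp only [Matrix.det_vandermonde]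
    have := hP.continuous
    fun_prop
  obtain ⟨C, hC⟩ := (isCompact_univ_pi fun _ : Fin k => hSc).exists_bound_of_continuousOn
    hVc.continuousOn
  have hfac : ∀ (M : ℕ) (y : Fin k → Fin m → ℂ),
      (Matrix.of fun i j : Fin k => P (y i) ^ (j : ℕ) * Complex.exp (M * α (f (y i)))).det =
      (∏ i, Complex.exp (M * α (f (y i)))) * (Matrix.vandermonde fun i => P (y i)).det := by
    intro M y
    rw [← Matrix.det_mul_column]
    congr 1
    ext i j
    simp [Matrix.vandermonde, mul_comm]
  have hbound : ∀ M : ℕ, ‖(Matrix.vandermonde fun i => P (x i)).det‖ ≤ C * Real.exp (-δ) ^ M := by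
    intro M
    obtain ⟨y, hyS, hyeq, hdet⟩ := exists_norm_det_le (u := fun y => (f y - τ) / ρ)
      (h := fun (j : Fin k) y => P y ^ (j : ℕ) * Complex.exp (M * α (f y))) hk hSc
      (by simp only [div_eq_mul_inv]; exact (hf.sub_const τ).mul_const _) (fun y hy => by
        have : ‖f y - τ‖ = ρ := by simpa [dist_eq_norm] using hy.2
        rw [norm_div, this, Complex.norm_real, Real.norm_of_nonneg hρ.le, div_self hρ.ne'])
      hxS (fun i => by simp [(hx i).2])
      (fun j => (hP.pow _).mul (((hα.comp hf).const_mul _).cexp))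
    rw [hfac, hfac, norm_mul, norm_mul] at hdet
    have hone : ∏ i, Complex.exp (M * α (f (x i))) = 1 := by simp [(hx _).2, hα0]
    rw [hone, norm_one, one_mul] at hdet
    have hpos : 0 < ‖(Matrix.vandermonde fun i => P (x i)).det‖ := norm_pos_iff.2 hV0
    have hVy : (Matrix.vandermonde fun i => P (y i)).det ≠ 0 := by
      intro h0
      rw [h0, norm_zero, mul_zero] at hdet
      linarith
    have hfy : ∀ i j, f (y i) = f (y j) := by
      intro i j
      have := hyeq i j
      rw [div_left_inj' hρc] at this
      exact sub_left_injective this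
    have hre : ∀ i, (α (f (y i))).re ≤ -δ := fun i => hle _
      ⟨y, fun j => ⟨(hyS j).1, hfy j i⟩, Matrix.det_vandermonde_ne_zero_iff.1 hVy⟩ (hyS i).2
    have hexp : ‖∏ i, Complex.exp (M * α (f (y i)))‖ ≤ Real.exp (-δ) ^ M := by
      rw [norm_prod]
      have h1 : ∀ i : Fin k, ‖Complex.exp (M * α (f (y i)))‖ ≤ Real.exp (-δ) ^ M := by
        intro i
        rw [Complex.norm_exp, ← Real.exp_nat_mul]
        have := hre i
        simp only [Complex.mul_re, Complex.natCast_re, Complex.natCast_im, zero_mul, sub_zero]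
        gcongr
      have h2 : Real.exp (-δ) ^ M ≤ 1 :=
        pow_le_one₀ (Real.exp_pos _).le (Real.exp_le_one_iff.2 (by linarith))
      calc _ ≤ ∏ _i : Fin k, Real.exp (-δ) ^ M :=
            Finset.prod_le_prod (fun _ _ => norm_nonneg _) fun i _ => h1 i
        _ = (Real.exp (-δ) ^ M) ^ k := by simp
        _ ≤ _ := pow_le_of_le_one (by positivity) h2 hk.ne'
    have hCy := hC y fun i _ => hyS i
    calc _ ≤ _ := hdet
      _ ≤ Real.exp (-δ) ^ M * C := by gcongr
      _ = _ := mul_comm _ _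
  have hlim : Tendsto (fun M : ℕ => C * Real.exp (-δ) ^ M) atTop (𝓝 0) := by
    simpa using (tendsto_pow_atTop_nhds_zero_of_lt_one (Real.exp_pos _).le
      (by rw [Real.exp_lt_one_iff]; linarith)).const_mul C
  have := ge_of_tendsto' hlim hbound
  exact hV0 (norm_le_zero_iff.1 this)

theorem re_add_two_thirds_sq_le {d D ρ : ℝ} (hd : 0 < d) (hρ : ρ = d / 2) (hD : d ≤ D)
    (hD' : D < d * (1 + 1 / 50)) {p q : ℂ} (hp : ‖p‖ = D) (hq : ‖q‖ = ρ) (hpq : d ≤ ‖q - p‖) :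
    (q * (starRingEnd ℂ p / (D * ρ : ℝ)) +
      2 / 3 * (q * (starRingEnd ℂ p / (D * ρ : ℝ))) ^ 2).re ≤ -(1 / 6) := by
  have hD0 : 0 < D := by linarith
  have hρ0 : 0 < ρ := by linarith
  set U : ℂ := q * (starRingEnd ℂ p / (D * ρ : ℝ)) with hU
  have hU1 : ‖U‖ = 1 := by
    rw [hU, norm_mul, norm_div, Complex.norm_real, Complex.norm_conj, hp, hq,
      Real.norm_of_nonneg (by positivity)]
    field_simp
  have hre : U.re = (q.re * p.re + q.im * p.im) / (D * ρ) := by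
    rw [hU, ← mul_div_assoc, Complex.div_ofReal_re]
    simp [Complex.mul_re]
  have hp2 : p.re ^ 2 + p.im ^ 2 = D ^ 2 := by
    rw [← hp, ← Complex.normSq_eq_norm_sq, Complex.normSq_apply]; ring
  have hq2 : q.re ^ 2 + q.im ^ 2 = ρ ^ 2 := by
    rw [← hq, ← Complex.normSq_eq_norm_sq, Complex.normSq_apply]; ring
  have hpq2 : d ^ 2 ≤ (q.re - p.re) ^ 2 + (q.im - p.im) ^ 2 := by
    have : ‖q - p‖ ^ 2 = (q.re - p.re) ^ 2 + (q.im - p.im) ^ 2 := by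
      rw [← Complex.normSq_eq_norm_sq, Complex.normSq_apply, Complex.sub_re, Complex.sub_im]; ring
    rw [← this]; gcongr
  have ht : U.re ≤ 1 / 3 := by
    rw [hre, div_le_iff₀ (by positivity)]
    subst hρ
    nlinarith
  have ht' : -1 ≤ U.re := by
    have := Complex.abs_re_le_norm U
    rw [hU1] at this
    exact (abs_le.1 this).1
  have hU2 : U.re ^ 2 + U.im ^ 2 = 1 := by
    rw [← one_pow (M := ℝ) 2, ← hU1, ← Complex.normSq_eq_norm_sq, Complex.normSq_apply]; ring
  clear_value U
  have hsq : (U + 2 / 3 * U ^ 2).re = U.re + 2 / 3 * (U.re ^ 2 - U.im ^ 2) := by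
    have : (2 / 3 : ℂ) = ((2 / 3 : ℝ) : ℂ) := by push_cast; rfl
    rw [this, Complex.add_re, Complex.re_ofReal_mul, pow_two U, Complex.mul_re]; ring
  rw [hsq]
  nlinarith

/-- Unique continuation for the set of separated values. -/
theorem disjoint_separatedValues (hk : 0 < k) (hZ : IsCompact Z)
    (hf : Differentiable ℂ f) (hP : Differentiable ℂ P)
    (hdom : ∀ x ∈ Z, f x ∈ B → DominatedNear Z x) (hBo : IsOpen B) (hBc : IsPreconnected B)
    {O : Set ℂ} (hO : IsOpen O) (hOne : O.Nonempty) (hOB : O ⊆ B)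
    (hOT : Disjoint O (separatedValues Z f P k)) : Disjoint B (separatedValues Z f P k) := by
  set T := separatedValues Z f P k with hT
  have hOW : O ⊆ interior Tᶜ := interior_maximal hOT.subset_compl_right hO
  suffices h : B ⊆ interior Tᶜ from (disjoint_compl_left (a := T)).mono_left (h.trans interior_subset)
  refine hBc.subset_of_closure_inter_subset isOpen_interior
    (hOne.mono fun z hz => ⟨hOB hz, hOW hz⟩) ?_
  rintro c ⟨hc, hcB⟩
  by_contra hcW
  rw [interior_compl, notMem_compl_iff] at hcW
  obtain ⟨η, hη, hηB⟩ := Metric.isOpen_iff.1 hBo c hcB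
  obtain ⟨c₂, hc₂, hcc⟩ := Metric.mem_closure_iff.1 hc (η / 4) (by linarith)
  have hTne : T.Nonempty := closure_nonempty_iff.1 ⟨c, hcW⟩
  rw [interior_compl, mem_compl_iff] at hc₂
  set d := infDist c₂ T with hd
  have hd0 : 0 < d := (infDist_pos_iff_notMem_closure hTne).1 hc₂
  have hdη : d < η / 4 := by
    have : infDist c₂ (closure T) ≤ dist c₂ c := infDist_le_dist_of_mem hcW
    rw [infDist_closure] at this
    rw [dist_comm] at hcc
    exact this.trans_lt hcc
  obtain ⟨τ, hτ, hτd⟩ := (infDist_lt_iff (x := c₂) (r := d * (1 + 1 / 50)) hTne).1 (by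
    rw [← hd]; linarith)
  set D := dist c₂ τ with hD
  have hdD : d ≤ D := infDist_le_dist_of_mem hτ
  have hsub : closedBall τ (d / 2) ⊆ B := by
    refine Subset.trans (fun z hz => ?_) hηB
    rw [mem_closedBall] at hz
    rw [mem_ball]
    have h1 := dist_triangle z τ c
    have h2 := dist_triangle τ c₂ c
    rw [dist_comm τ c₂] at h2
    rw [dist_comm] at hcc
    have h3 : dist c₂ τ < d * (1 + 1 / 50) := hτd
    linarith
  have hp : ‖c₂ - τ‖ = D := (dist_eq_norm _ _).symm
  refine not_forall_re_le_of_mem_separatedValues hk hZ hf hP hdom hτ (by linarith) hsub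
    (α := fun z => (z - τ) * (starRingEnd ℂ (c₂ - τ) / (D * (d / 2) : ℝ)) +
      2 / 3 * ((z - τ) * (starRingEnd ℂ (c₂ - τ) / (D * (d / 2) : ℝ))) ^ 2)
    (by fun_prop) (by simp) (δ := 1 / 6) (by norm_num) ?_
  intro z hz hzs
  refine re_add_two_thirds_sq_le hd0 rfl hdD hτd hp ?_ ?_
  · rwa [mem_sphere, dist_eq_norm] at hzs
  · have : d ≤ dist c₂ z := infDist_le_dist_of_mem hz
    rwa [dist_comm, dist_eq_norm, ← sub_sub_sub_cancel_right z c₂ τ] at this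

end

section
variable {m k : ℕ}

theorem exists_differentiable_injective {x : Fin k → Fin m → ℂ} (hx : Function.Injective x) :
    ∃ P : (Fin m → ℂ) → ℂ, Differentiable ℂ P ∧ Function.Injective fun i => P (x i) := by
  obtain ⟨P, hP⟩ := Module.exists_dual_forall_apply_ne_zero (K := ℂ)
    (fun p : {p : Fin k × Fin k // p.1 ≠ p.2} => x p.1.1 - x p.1.2)
    fun p => sub_ne_zero.2 (hx.ne p.2)
  refine ⟨P, (LinearMap.toContinuousLinearMap P).differentiable, fun i j hij => ?_⟩
  by_contra hne
  apply hP ⟨(i, j), hne⟩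
  simpa [sub_eq_zero] using hij

theorem encard_inter_preimage_le {Z : Set (Fin m → ℂ)} {f : (Fin m → ℂ) → ℂ} {B : Set ℂ}
    (hZ : IsCompact Z) (hf : Differentiable ℂ f)
    (hdom : ∀ x ∈ Z, f x ∈ B → DominatedNear Z x) (hBo : IsOpen B) (hBc : IsPreconnected B)
    {O : Set ℂ} (hO : IsOpen O) (hOne : O.Nonempty) (hOB : O ⊆ B)
    (hle : ∀ c ∈ O, (Z ∩ f ⁻¹' {c}).encard ≤ k) {c : ℂ} (hc : c ∈ B) :
    (Z ∩ f ⁻¹' {c}).encard ≤ k := by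
  by_contra! hlt
  obtain ⟨t, ht, htk⟩ := exists_subset_encard_eq (k := ((k + 1 : ℕ) : ℕ∞))
    (by push_cast; exact Order.add_one_le_of_lt hlt)
  have htf : t.Finite := finite_of_encard_eq_coe htk
  have hcard : Nat.card t = k + 1 := by
    rw [Nat.card_coe_set_eq, ncard, htk]; rfl
  have := htf.to_subtype
  let e : Fin (k + 1) ≃ t := (Finite.equivFinOfCardEq hcard).symm
  obtain ⟨P, hP, hPi⟩ := exists_differentiable_injective (x := fun i => (e i : Fin m → ℂ))
    (Subtype.val_injective.comp e.injective)
  have hdis : Disjoint O (separatedValues Z f P (k + 1)) := by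
    rw [disjoint_left]
    rintro b hb ⟨x, hx, hxP⟩
    have hxi : Function.Injective x := fun i j hij => hxP (by simp only [hij])
    have h1 : (range x).encard ≤ (Z ∩ f ⁻¹' {b}).encard :=
      encard_le_encard (range_subset_iff.2 fun i => hx i)
    have := hxi.encard_range.trans (h1.trans (hle b hb))
    simp only [ENat.card_eq_coe_fintype_card, Fintype.card_fin] at this
    have := ENat.natCast_le_natCast.1 this
    omega
  have := disjoint_separatedValues k.succ_pos hZ hf hP hdom hBo hBc hO hOne hOB hdis
  exact disjoint_left.1 this hc ⟨_, fun i => ht (e i).2, hPi⟩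

end

theorem AnalyticAt.exists_local_inverse {φ : ℂ → ℂ} {a : ℂ} (hφ : AnalyticAt ℂ φ a)
    (h : deriv φ a ≠ 0) : ∃ ψ : ℂ → ℂ, ψ (φ a) = a ∧ ∃ δ > 0, DifferentiableOn ℂ ψ (ball (φ a) δ) ∧
      (∀ c ∈ ball (φ a) δ, φ (ψ c) = c) ∧ ∀ᶠ z in 𝓝 a, ψ (φ z) = z := by
  have hs := hφ.hasStrictDerivAt
  have hψ := hφ.analyticAt_localInverse h
  have hl := hs.eventually_left_inverse h
  have hr := hs.eventually_right_inverse h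
  obtain ⟨δ, hδ, hball⟩ := Metric.eventually_nhds_iff_ball.1 (hψ.eventually_analyticAt.and hr)
  exact ⟨_, hl.self_of_nhds, δ, hδ,
    fun c hc => (hball c hc).1.differentiableAt.differentiableWithinAt,
    fun c hc => (hball c hc).2, hl⟩

theorem finite_zeros_closedBall {h : ℂ → ℂ} {r R : ℝ} (hrR : r < R)
    (hh : DifferentiableOn ℂ h (ball 0 R)) {a : ℂ} (ha : a ∈ ball 0 R) (hha : h a ≠ 0) :
    {z ∈ closedBall 0 r | h z = 0}.Finite := by
  have han : AnalyticOnNhd ℂ h (ball 0 R) := hh.analyticOnNhd isOpen_ball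
  have hsub : closedBall (0 : ℂ) r ⊆ ball 0 R := closedBall_subset_ball hrR
  by_contra hinf
  obtain ⟨z, hz, hacc⟩ := Set.Infinite.exists_accPt_of_subset_isCompact hinf
    (isCompact_closedBall (0 : ℂ) r) fun z hz => hz.1
  have hfr : ∃ᶠ w in 𝓝[≠] z, h w = 0 := by
    rw [accPt_iff_frequently_nhdsNE] at hacc
    exact hacc.mono fun w hw => hw.2
  exact hha (han.eqOn_zero_of_preconnected_of_frequently_eq_zero
    (convex_ball _ _).isPreconnected (hsub hz) hfr ha)

/-- `g` restricts to an injective holomorphic immersion of the disc of radius `ρ` about `0`. -/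
structure IsEmbeddedDisc {m : ℕ} (g : ℂ → Fin m → ℂ) (ρ : ℝ) : Prop where
  differentiableOn : DifferentiableOn ℂ g (ball 0 ρ)
  injOn : InjOn g (ball 0 ρ)
  deriv_ne_zero : ∀ z ∈ ball 0 ρ, deriv g z ≠ 0

namespace IsEmbeddedDisc
variable {m : ℕ} {g : ℂ → Fin m → ℂ} {ρ r : ℝ}

theorem differentiableAt (h : IsEmbeddedDisc g ρ) {z : ℂ} (hz : z ∈ ball 0 ρ) :
    DifferentiableAt ℂ g z :=
  h.differentiableOn.differentiableAt (isOpen_ball.mem_nhds hz)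

theorem exists_deriv_apply_ne_zero (h : IsEmbeddedDisc g ρ) {z : ℂ}
    (hz : z ∈ ball 0 ρ) : ∃ i, deriv (fun z => g z i) z ≠ 0 := by
  by_contra! hall
  apply h.deriv_ne_zero z hz
  ext i
  rw [deriv_pi fun j => (differentiableAt_pi.1 (h.differentiableAt hz) j)]
  exact hall i

theorem continuousOn_closedBall (h : IsEmbeddedDisc g ρ) (hr : r < ρ) :
    ContinuousOn g (closedBall 0 r) :=
  h.differentiableOn.continuousOn.mono (closedBall_subset_ball hr)

theorem isCompact_image (h : IsEmbeddedDisc g ρ) (hr : r < ρ) : IsCompact (g '' closedBall 0 r) :=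
  (isCompact_closedBall _ _).image_of_continuousOn (h.continuousOn_closedBall hr)

/-- Points of the disc whose image is close to `g z₀` are close to `z₀`. -/
theorem exists_nhds_mem (h : IsEmbeddedDisc g ρ) (hr : r < ρ) {z₀ : ℂ} (hz₀ : z₀ ∈ ball 0 ρ)
    {V : Set ℂ} (hV : V ∈ 𝓝 z₀) :
    ∃ O, IsOpen O ∧ g z₀ ∈ O ∧ ∀ z ∈ closedBall 0 r, g z ∈ O → z ∈ V := by
  have hc : IsCompact (g '' (closedBall 0 r \ interior V)) :=
    ((isCompact_closedBall _ _).diff isOpen_interior).image_of_continuousOn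
      ((h.continuousOn_closedBall hr).mono sdiff_subset)
  refine ⟨_, hc.isClosed.isOpen_compl, ?_, fun z hz hgz => ?_⟩
  · rintro ⟨z, ⟨hz, hzV⟩, hzz⟩
    rw [h.injOn (closedBall_subset_ball hr hz) hz₀ hzz] at hzV
    exact hzV (mem_interior_iff_mem_nhds.2 hV)
  · by_contra hzV
    exact hgz ⟨z, ⟨hz, fun hi => hzV (interior_subset hi)⟩, rfl⟩

theorem exists_chart (h : IsEmbeddedDisc g ρ) (hr : r < ρ) {z₀ : ℂ} (hz₀ : z₀ ∈ ball 0 r) :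
    ∃ (O : Set (Fin m → ℂ)) (π : (Fin m → ℂ) → ℂ), IsOpen O ∧ g z₀ ∈ O ∧ DifferentiableOn ℂ π O ∧
      (∀ x ∈ O, π x ∈ ball 0 r) ∧ ∀ z ∈ closedBall 0 r, g z ∈ O → π (g z) = z := by
  have hz₀ρ : z₀ ∈ ball 0 ρ := ball_subset_ball hr.le hz₀
  have hga : AnalyticAt ℂ g z₀ := h.differentiableOn.analyticAt (isOpen_ball.mem_nhds hz₀ρ)
  obtain ⟨i, hi⟩ := h.exists_deriv_apply_ne_zero hz₀ρ
  have hφ : AnalyticAt ℂ (fun z => g z i) z₀ := analyticAt_pi_iff.1 hga i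
  obtain ⟨ψ, hψ0, δ, hδ, hψd, -, hψl⟩ := hφ.exists_local_inverse hi
  obtain ⟨O₁, hO₁, hzO₁, hV⟩ := h.exists_nhds_mem hr hz₀ρ hψl
  set W : Set ℂ := ball (g z₀ i) δ ∩ ψ ⁻¹' ball 0 r with hW
  have hWo : IsOpen W := hψd.continuousOn.isOpen_inter_preimage isOpen_ball isOpen_ball
  refine ⟨O₁ ∩ (fun x => x i) ⁻¹' W, fun x => ψ (x i), hO₁.inter (hWo.preimage (continuous_apply i)),
    ⟨hzO₁, mem_ball_self hδ, by rw [mem_preimage, hψ0]; exact hz₀⟩, ?_, fun x hx => hx.2.2,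
    fun z hz hzO => hV z hz hzO.1⟩
  exact hψd.comp (differentiable_apply i).differentiableOn fun x hx => hx.2.1

end IsEmbeddedDisc

section
variable {m : ℕ} {g : ℂ → Fin m → ℂ} {K : Set (Fin m → ℂ)} {ρ r : ℝ}

/-- Points of the disc adherent to the rest of the hull are dominated there. -/
theorem dominatedNear_closure_diff (h : IsEmbeddedDisc g ρ) (hK : IsCompact K) (hr1 : 1 ≤ r)
    (hr : r < ρ) {z₀ : ℂ} (hz₀ : z₀ ∈ ball 0 r) (hzK : g z₀ ∉ K)
    (hcl : g z₀ ∈ closure (entireHull (K ∪ g '' closedBall 0 1) \ g '' closedBall 0 r)) :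
    DominatedNear (closure (entireHull (K ∪ g '' closedBall 0 1) \ g '' closedBall 0 r)) (g z₀) := by
  set L := K ∪ g '' closedBall 0 1 with hL
  set X := entireHull L with hX
  set Y := closure (X \ g '' closedBall 0 r) with hY
  have hLc : IsCompact L := hK.union (h.isCompact_image (hr1.trans_lt hr))
  have hXc : IsCompact X := hLc.entireHull
  have hYX : Y ⊆ X := closure_minimal sdiff_subset hXc.isClosed
  obtain ⟨O, π, hO, hzO, hπd, hπm, hπg⟩ := h.exists_chart hr hz₀
  intro O' hO'
  obtain ⟨s, hs, hsO, hsK⟩ := exists_closedBall_subset_of_notMem hK.isClosed hzK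
    (inter_mem hO' (hO.mem_nhds hzO))
  set N := closedBall (g z₀) s with hN
  set M := Y ∩ sphere (g z₀) s with hM
  have hMc : IsCompact M := (hXc.of_isClosed_subset isClosed_closure hYX).inter_right isClosed_sphere
  let w : Fin m → (Fin m → ℂ) → ℂ := fun j x => x j - g (π x) j
  have hwd : ∀ j, DifferentiableOn ℂ (w j) O := by
    intro j
    refine (differentiable_apply j).differentiableOn.sub ?_
    exact (differentiable_apply j).comp_differentiableOn (h.differentiableOn.comp hπd fun x hx =>
      ball_subset_ball hr.le (hπm x hx))
  have hw0 : ∀ z ∈ closedBall 0 r, g z ∈ O → ∀ j, w j (g z) = 0 := fun z hz hzO j => by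
    simp only [w, hπg z hz hzO, sub_self]
  have hwne : ∀ x ∈ O, x ∉ g '' closedBall 0 r → ∃ j, w j x ≠ 0 := by
    intro x hx hxg
    by_contra! hall
    exact hxg ⟨π x, ball_subset_closedBall (hπm x hx), (funext fun j => sub_eq_zero.1 (hall j)).symm⟩
  have hNO : N ⊆ O := hsO.trans inter_subset_right
  -- Rossi's principle applied to `F ^ p * w j`
  have key : ∀ F : (Fin m → ℂ) → ℂ, Differentiable ℂ F → ∀ x ∈ X \ g '' closedBall 0 r, x ∈ N →
      F x ≠ 0 → ∃ j, w j x ≠ 0 ∧ ∀ p : ℕ, ∃ y ∈ M, ‖F x ^ p * w j x‖ ≤ ‖F y ^ p * w j y‖ := by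
    intro F hF x hx hxN hFx
    obtain ⟨j, hj⟩ := hwne x (hNO hxN) hx.2
    refine ⟨j, hj, fun p => ?_⟩
    obtain ⟨y, ⟨hyX, hyN⟩, hy, hle⟩ := exists_mem_frontier_or_mem hLc (isCompact_closedBall (g z₀) s)
      hO (h := fun x => F x ^ p * w j x) (fun y hy => hNO hy.2)
      ((hF.pow p).differentiableOn.mul (hwd j)) hx.1 hxN
    have hyw : w j y ≠ 0 := by
      intro h0
      rw [h0, mul_zero, norm_zero] at hle
      exact mul_ne_zero (pow_ne_zero _ hFx) hj (norm_le_zero_iff.1 hle)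
    have hyg : y ∉ g '' closedBall 0 r := by
      rintro ⟨z, hz, rfl⟩
      exact hyw (hw0 z hz (hNO hyN) j)
    refine ⟨y, ⟨subset_closure ⟨hyX, hyg⟩, ?_⟩, hle⟩
    rcases hy with hy | hy
    · exact frontier_closedBall_subset_sphere hy
    · rcases hy with hy | hy
      · exact (disjoint_left.1 hsK hyN hy).elim
      · exact (hyg (image_mono (closedBall_subset_closedBall hr1) hy)).elim
  refine ⟨M, hMc, fun x hx => ⟨hx.1, (hsO (sphere_subset_closedBall hx.2)).1⟩, ?_, ?_⟩
  · rintro ⟨-, hx⟩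
    simp [hs.ne] at hx
  intro F hF
  have hNn : N ∈ 𝓝 (g z₀) := closedBall_mem_nhds _ hs
  have hMne : M.Nonempty := by
    obtain ⟨x, hxN, hx⟩ := mem_closure_iff_nhds.1 hcl N hNn
    obtain ⟨j, -, hj⟩ := key (fun _ => 1) (differentiable_const 1) x hx hxN one_ne_zero
    obtain ⟨y, hy, -⟩ := hj 0
    exact ⟨y, hy⟩
  obtain ⟨y₁, hy₁, hmax⟩ := hMc.exists_isMaxOn hMne hF.continuous.norm.continuousOn
  refine ⟨y₁, hy₁, ?_⟩
  have hbd : ∀ x ∈ N ∩ (X \ g '' closedBall 0 r), ‖F x‖ ≤ ‖F y₁‖ := by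
    rintro x ⟨hxN, hx⟩
    rcases eq_or_ne (F x) 0 with h0 | h0
    · simp [h0]
    obtain ⟨j, hj, hp⟩ := key F hF x hx hxN h0
    obtain ⟨C, hC⟩ := (isCompact_closedBall (g z₀) s).exists_bound_of_continuousOn
      ((hwd j).continuousOn.mono hNO)
    have hjp : 0 < ‖w j x‖ := norm_pos_iff.2 hj
    have hle : ∀ p : ℕ, ‖F x‖ ^ p * ‖w j x‖ ≤ ‖F y₁‖ ^ p * C := by
      intro p
      obtain ⟨y, hy, hyle⟩ := hp p
      rw [norm_mul, norm_mul, norm_pow, norm_pow] at hyle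
      have h1 : ‖F y‖ ≤ ‖F y₁‖ := hmax hy
      have h2 := hC y (sphere_subset_closedBall hy.2)
      exact hyle.trans (by gcongr)
    by_contra! hlt
    have hFx : 0 < ‖F x‖ := norm_pos_iff.2 h0
    have hlim : Tendsto (fun p : ℕ => (‖F y₁‖ / ‖F x‖) ^ p * C) atTop (𝓝 0) := by
      simpa using (tendsto_pow_atTop_nhds_zero_of_lt_one (by positivity)
        ((div_lt_one hFx).2 hlt)).mul_const C
    have := ge_of_tendsto' hlim (b := ‖w j x‖) fun p => by
      rw [div_pow, div_mul_eq_mul_div, le_div_iff₀ (by positivity), mul_comm]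
      exact hle p
    linarith
  have hcl' : g z₀ ∈ closure (N ∩ (X \ g '' closedBall 0 r)) := by
    refine mem_closure_iff_nhds.2 fun V hV => ?_
    rw [← inter_assoc]
    exact mem_closure_iff_nhds.1 hcl _ (inter_mem hV hNn)
  exact closure_minimal hbd (isClosed_le hF.continuous.norm continuous_const) hcl'

/-- A point of the disc at which the hull is locally contained in the disc is interior. -/
theorem mem_nhds_of_notMem_closure_diff (h : IsEmbeddedDisc g ρ) (hK : IsCompact K) (hr1 : 1 ≤ r)
    (hr : r < ρ) {z₀ : ℂ} (hz₀ : z₀ ∈ ball 0 r) (hz1 : 1 < ‖z₀‖) (hzK : g z₀ ∉ K)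
    (hzX : g z₀ ∈ entireHull (K ∪ g '' closedBall 0 1))
    (hcl : g z₀ ∉ closure (entireHull (K ∪ g '' closedBall 0 1) \ g '' closedBall 0 r)) :
    g ⁻¹' entireHull (K ∪ g '' closedBall 0 1) ∈ 𝓝 z₀ := by
  set L := K ∪ g '' closedBall 0 1 with hL
  set X := entireHull L with hX
  have hLc : IsCompact L := hK.union (h.isCompact_image (hr1.trans_lt hr))
  have hzρ : z₀ ∈ ball 0 ρ := ball_subset_ball hr.le hz₀
  have hzL : g z₀ ∉ L := by
    rintro (hz | ⟨z, hz, hzz⟩)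
    · exact hzK hz
    · rw [h.injOn (closedBall_subset_ball (hr1.trans_lt hr) hz) hzρ hzz] at hz
      rw [mem_closedBall_zero_iff] at hz
      linarith
  obtain ⟨O, π, hO, hzO, hπd, hπm, hπg⟩ := h.exists_chart hr hz₀
  obtain ⟨s, hs, hsO, hsL⟩ := exists_closedBall_subset_of_notMem hLc.isClosed hzL
    (inter_mem (isClosed_closure.isOpen_compl.mem_nhds hcl) (hO.mem_nhds hzO))
  have hXN : ∀ x ∈ X, x ∈ closedBall (g z₀) s → x ∈ g '' closedBall 0 r := by
    intro x hx hxs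
    by_contra hxg
    exact (hsO hxs).1 (subset_closure ⟨hx, hxg⟩)
  have hgc : ContinuousAt g z₀ :=
    h.differentiableOn.continuousOn.continuousAt (isOpen_ball.mem_nhds hzρ)
  obtain ⟨t, ht, htb⟩ := Metric.mem_nhds_iff.1 (inter_mem (isOpen_ball.mem_nhds hz₀)
    (hgc.preimage_mem_nhds (ball_mem_nhds (g z₀) hs)))
  refine Metric.mem_nhds_iff.2 ⟨t / 2, by linarith, fun z₁ hz₁ => ?_⟩
  by_contra hz₁X
  have hXU : X ∩ closedBall (g z₀) s ⊆ O ∩ π ⁻¹' {z₁}ᶜ := by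
    rintro y ⟨hyX, hyN⟩
    refine ⟨(hsO hyN).2, ?_⟩
    obtain ⟨ζ, hζ, rfl⟩ := hXN y hyX hyN
    rw [mem_preimage, hπg ζ hζ (hsO hyN).2]
    rintro rfl
    exact hz₁X hyX
  obtain ⟨y, ⟨hyX, hyN⟩, hy, hle⟩ := exists_mem_frontier_or_mem hLc (isCompact_closedBall (g z₀) s)
    (U := O ∩ π ⁻¹' {z₁}ᶜ) (hπd.continuousOn.isOpen_inter_preimage hO isOpen_compl_singleton)
    (h := fun x => (π x - z₁)⁻¹) hXU
    (fun x hx => ((hπd x hx.1).mono inter_subset_left).sub_const z₁ |>.inv (sub_ne_zero.2 hx.2))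
    hzX (mem_closedBall_self hs.le)
  have hys : y ∈ sphere (g z₀) s := by
    rcases hy with hy | hy
    · exact frontier_closedBall_subset_sphere hy
    · exact (disjoint_left.1 hsL hyN hy).elim
  obtain ⟨ζ, hζ, rfl⟩ := hXN y hyX hyN
  have hζz : ζ ≠ z₁ := by rintro rfl; exact hz₁X hyX
  have hzz : z₀ ≠ z₁ := by rintro rfl; exact hz₁X hzX
  rw [hπg ζ hζ (hsO hyN).2, hπg z₀ (ball_subset_closedBall hz₀) hzO, norm_inv, norm_inv,
    inv_le_inv₀ (norm_pos_iff.2 (sub_ne_zero.2 hzz)) (norm_pos_iff.2 (sub_ne_zero.2 hζz))] at hle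
  have hζt : ζ ∈ ball z₀ t := by
    rw [mem_ball]
    rw [mem_ball, dist_comm] at hz₁
    rw [← dist_eq_norm, ← dist_eq_norm] at hle
    have := dist_triangle_right ζ z₀ z₁
    linarith
  have := (htb hζt).2
  rw [mem_preimage, mem_ball] at this
  rw [mem_sphere] at hys
  linarith
end

theorem IsCompact.exists_nhds_encard_preimage_le {α β : Type*} [TopologicalSpace α] [T2Space α]
    [TopologicalSpace β] [T2Space β] {X S : Set α} {f : α → β} {c₀ : β} (hX : IsCompact X)
    (hf : ContinuousOn f X) (hSX : S ⊆ X)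
    (hloc : ∀ x ∈ X, f x = c₀ → ∃ N ∈ 𝓝 x, ∃ k : ℕ, ∀ c, (S ∩ N ∩ f ⁻¹' {c}).encard ≤ k) :
    ∃ O, IsOpen O ∧ c₀ ∈ O ∧ ∃ k : ℕ, ∀ c ∈ O, (S ∩ f ⁻¹' {c}).encard ≤ k := by
  have hF : IsCompact (X ∩ f ⁻¹' {c₀}) := hX.of_isClosed_subset
    (hf.preimage_isClosed_of_isClosed hX.isClosed isClosed_singleton) inter_subset_left
  obtain ⟨N, hNo, hFN, k, hk⟩ : ∃ N, IsOpen N ∧ X ∩ f ⁻¹' {c₀} ⊆ N ∧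
      ∃ k : ℕ, ∀ c, (S ∩ N ∩ f ⁻¹' {c}).encard ≤ k := by
    refine hF.induction_on (p := fun t => ∃ N, IsOpen N ∧ t ⊆ N ∧
      ∃ k : ℕ, ∀ c, (S ∩ N ∩ f ⁻¹' {c}).encard ≤ k) ?_ ?_ ?_ ?_
    · exact ⟨∅, isOpen_empty, Subset.rfl, 0, by simp⟩
    · rintro s t hst ⟨N, hN, htN, hk⟩
      exact ⟨N, hN, hst.trans htN, hk⟩
    · rintro s t ⟨N, hN, hsN, k, hk⟩ ⟨N', hN', htN', k', hk'⟩
      refine ⟨N ∪ N', hN.union hN', union_subset_union hsN htN', k + k', fun c => ?_⟩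
      rw [inter_union_distrib_left, union_inter_distrib_right]
      push_cast
      exact (encard_union_le _ _).trans (add_le_add (hk c) (hk' c))
    · rintro x ⟨hxX, hxc⟩
      obtain ⟨N, hN, k, hk⟩ := hloc x hxX hxc
      refine ⟨interior N, mem_nhdsWithin_of_mem_nhds (interior_mem_nhds.2 hN), interior N,
        isOpen_interior, Subset.rfl, k, fun c => (encard_le_encard ?_).trans (hk c)⟩
      gcongr
      exact interior_subset
  have hc : IsCompact (f '' (X \ N)) :=
    (hX.diff hNo).image_of_continuousOn (hf.mono sdiff_subset)
  refine ⟨_, hc.isClosed.isOpen_compl, ?_, k, fun c hcO => ?_⟩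
  · rintro ⟨x, ⟨hxX, hxN⟩, hx⟩
    exact hxN (hFN ⟨hxX, hx⟩)
  · refine (encard_le_encard ?_).trans (hk c)
    rintro x ⟨hxS, hxc⟩
    refine ⟨⟨hxS, ?_⟩, hxc⟩
    by_contra hxN
    exact hcO ⟨x, ⟨hSX hxS, hxN⟩, hxc⟩

section
variable {m : ℕ} {g : ℂ → Fin m → ℂ} {K : Set (Fin m → ℂ)} {ρ R : ℝ} {f : (Fin m → ℂ) → ℂ}

theorem IsEmbeddedDisc.differentiableOn_comp (h : IsEmbeddedDisc g ρ) (hf : Differentiable ℂ f) :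
    DifferentiableOn ℂ (fun z => f (g z)) (ball 0 ρ) :=
  hf.comp_differentiableOn h.differentiableOn

theorem IsEmbeddedDisc.exists_radius_ne (h : IsEmbeddedDisc g ρ) (hR1 : 1 < R) (hR : R < ρ)
    (hf : Differentiable ℂ f) {a : ℂ} (ha : a ∈ ball 0 ρ) (hda : deriv (fun z => f (g z)) a ≠ 0)
    (c : ℂ) : ∃ r ∈ Ioo 1 R, ∀ z ∈ sphere 0 r, f (g z) ≠ c := by
  obtain ⟨b, hb, hbc⟩ : ∃ b ∈ ball (0 : ℂ) ρ, f (g b) - c ≠ 0 := by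
    by_contra! hall
    apply hda
    have : (fun z => f (g z)) =ᶠ[𝓝 a] fun _ => c := by
      filter_upwards [isOpen_ball.mem_nhds ha] with z hz
      exact sub_eq_zero.1 (hall z hz)
    rw [this.deriv_eq, deriv_const]
  have hfin := finite_zeros_closedBall hR ((h.differentiableOn_comp hf).sub_const c) hb hbc
  obtain ⟨r, hr, hrn⟩ := ((Ioo_infinite hR1).sdiff (hfin.image norm)).nonempty
  refine ⟨r, hr, fun z hz hzc => hrn ⟨z, ⟨?_, sub_eq_zero.2 hzc⟩, mem_sphere_zero_iff_norm.1 hz⟩⟩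
  rw [mem_closedBall_zero_iff, mem_sphere_zero_iff_norm.1 hz]
  exact hr.2.le

theorem IsEmbeddedDisc.exists_regular_value (h : IsEmbeddedDisc g ρ) (hR : R < ρ)
    (hf : Differentiable ℂ f) {a : ℂ} (ha : a ∈ ball 0 ρ) (hda : deriv (fun z => f (g z)) a ≠ 0)
    {U : Set ℂ} (hU : IsOpen U) (hUne : U.Nonempty) :
    ∃ c ∈ U, ∃ O, IsOpen O ∧ c ∈ O ∧ ∃ k : ℕ, ∀ b ∈ O,
      (g '' closedBall 0 R ∩ f ⁻¹' {b}).encard ≤ k := by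
  have hd := h.differentiableOn_comp hf
  have hfin := finite_zeros_closedBall hR (hd.deriv isOpen_ball) ha hda
  obtain ⟨c, hcU, hc⟩ := ((hfin.image fun z => f (g z)).countable.dense_compl ℝ).inter_open_nonempty
    U hU hUne
  obtain ⟨O, hO, hcO, k, hk⟩ := (isCompact_closedBall (0 : ℂ) R).exists_nhds_encard_preimage_le
    (c₀ := c) (hd.continuousOn.mono (closedBall_subset_ball hR)) Subset.rfl (by
      intro z hz hzc
      have hdz : deriv (fun z => f (g z)) z ≠ 0 := fun h0 => hc ⟨z, ⟨hz, h0⟩, hzc⟩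
      obtain ⟨ψ, -, -, -, -, -, hl⟩ := (hd.analyticAt
        (isOpen_ball.mem_nhds (closedBall_subset_ball hR hz))).exists_local_inverse hdz
      refine ⟨_, hl, 1, fun b => ?_⟩
      rw [Nat.cast_one, encard_le_one_iff]
      rintro z₁ z₂ ⟨⟨-, h1⟩, h1b⟩ ⟨⟨-, h2⟩, h2b⟩
      rw [mem_preimage, mem_singleton_iff] at h1b h2b
      rw [mem_ofPred_eq] at h1 h2
      rw [← h1, ← h2, h1b, h2b])
  refine ⟨c, hcU, O, hO, hcO, k, fun b hb => ?_⟩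
  have : g '' closedBall 0 R ∩ f ⁻¹' {b} ⊆
      g '' (closedBall 0 R ∩ (fun z => f (g z)) ⁻¹' {b}) := by
    rintro _ ⟨⟨z, hz, rfl⟩, hzb⟩
    exact ⟨z, ⟨hz, hzb⟩, rfl⟩
  exact (encard_le_encard this).trans ((encard_image_le _ _).trans (hk b hb))

theorem exists_nhds_encard_le (h : IsEmbeddedDisc g ρ) (hK : IsCompact K) (hR1 : 1 < R)
    (hR : R < ρ) (hf : Differentiable ℂ f) (hfK : ∀ x ∈ K, ‖f x‖ ≤ 1 / 2) {a : ℂ}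
    (ha : a ∈ ball 0 ρ) (hda : deriv (fun z => f (g z)) a ≠ 0) {y : Fin m → ℂ}
    (hy : y ∈ entireHull (K ∪ g '' closedBall 0 1)) (hfy : 1 / 2 < ‖f y‖) :
    ∃ N ∈ 𝓝 y, ∃ k : ℕ, ∀ c,
      ((entireHull (K ∪ g '' closedBall 0 1) \ g '' closedBall 0 R) ∩ N ∩ f ⁻¹' {c}).encard ≤ k := by
  set L := K ∪ g '' closedBall 0 1 with hL
  set X := entireHull L with hX
  have hLc : IsCompact L := hK.union (h.isCompact_image (hR1.trans hR))
  have hXc : IsCompact X := hLc.entireHull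
  by_contra hbad
  set good : Set (Fin m → ℂ) := {y | ∃ N ∈ 𝓝 y, ∃ k : ℕ, ∀ c,
      ((X \ g '' closedBall 0 R) ∩ N ∩ f ⁻¹' {c}).encard ≤ k} with hgood
  have hgo : IsOpen good := by
    rw [isOpen_iff_mem_nhds]
    rintro x ⟨N, hN, k, hk⟩
    filter_upwards [eventually_mem_nhds_iff.2 hN] with z hz
    exact ⟨N, hz, k, hk⟩
  obtain ⟨y₀, hy₀, hmax⟩ := (hXc.diff hgo).exists_isMaxOn ⟨y, hy, hbad⟩ hf.continuous.norm.continuousOn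
  have hy₀f : 1 / 2 < ‖f y₀‖ := hfy.trans_le (hmax ⟨hy, hbad⟩)
  have hgoodX : ∀ x ∈ X, ‖f y₀‖ < ‖f x‖ → x ∈ good := by
    intro x hx hlt
    by_contra hxb
    exact absurd (hmax ⟨hx, hxb⟩) (not_le.2 hlt)
  obtain ⟨r, hr, hrne⟩ := h.exists_radius_ne hR1 hR hf ha hda (f y₀)
  have hrρ : r < ρ := hr.2.trans hR
  have hsc : IsCompact ((fun z => f (g z)) '' sphere 0 r) := (isCompact_sphere _ _).image_of_continuousOn
    ((h.differentiableOn_comp hf).continuousOn.mono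
      (sphere_subset_closedBall.trans (closedBall_subset_ball hrρ)))
  obtain ⟨δ, hδ, hδs⟩ := Metric.mem_nhds_iff.1 (inter_mem
    (hsc.isClosed.isOpen_compl.mem_nhds (x := f y₀) (by
      rintro ⟨z, hz, hzc⟩
      exact hrne z hz hzc))
    ((isOpen_lt continuous_const continuous_norm).mem_nhds hy₀f))
  set Y := closure (X \ g '' closedBall 0 r) with hY
  have hYX : Y ⊆ X := closure_minimal sdiff_subset hXc.isClosed
  have hYc : IsCompact Y := hXc.of_isClosed_subset isClosed_closure hYX
  have hYdom : ∀ x ∈ Y, f x ∈ ball (f y₀) δ → DominatedNear Y x := by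
    intro x hx hxB
    obtain ⟨hxs, hxn⟩ := hδs hxB
    have hxK : x ∉ K := fun hxK => absurd (hfK x hxK) (not_le.2 hxn)
    by_cases hxg : x ∈ g '' closedBall 0 r
    · obtain ⟨z, hz, rfl⟩ := hxg
      refine dominatedNear_closure_diff h hK hr.1.le hrρ ?_ hxK hx
      rw [mem_ball]
      exact lt_of_le_of_ne hz fun he => hxs ⟨z, he, rfl⟩
    · have hxL : x ∉ L := by
        rintro (hxK' | hxg')
        · exact hxK hxK'
        · exact hxg (image_mono (closedBall_subset_closedBall hr.1.le) hxg')
      exact (dominatedNear_entireHull hLc (hYX hx) hxL).mono_nhds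
        ((h.isCompact_image hrρ).isClosed.isOpen_compl.mem_nhds hxg)
        fun z hz => subset_closure hz
  obtain ⟨c, ⟨hcB, hct⟩, O₁, hO₁, hcO₁, k₁, hk₁⟩ := h.exists_regular_value hR hf ha hda
    (U := ball (f y₀) δ ∩ {c | ‖f y₀‖ < ‖c‖})
    (isOpen_ball.inter (isOpen_lt continuous_const continuous_norm)) (by
      have hn : (0 : ℝ) < ‖f y₀‖ := by linarith
      refine ⟨f y₀ + (δ / 2 / ‖f y₀‖ : ℝ) * f y₀, ?_, ?_⟩
      · rw [mem_ball, dist_eq_norm, add_sub_cancel_left, norm_mul, Complex.norm_real,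
          Real.norm_of_nonneg (by positivity), div_mul_cancel₀ _ hn.ne']
        linarith
      · rw [mem_ofPred_eq]
        have : f y₀ + (δ / 2 / ‖f y₀‖ : ℝ) * f y₀ = ((1 + δ / 2 / ‖f y₀‖ : ℝ) : ℂ) * f y₀ := by
          push_cast; ring
        rw [this, norm_mul, Complex.norm_real, Real.norm_of_nonneg (by positivity)]
        have : 0 < δ / 2 / ‖f y₀‖ * ‖f y₀‖ := by positivity
        linarith)
  obtain ⟨O₂, hO₂, hcO₂, k₂, hk₂⟩ := hXc.exists_nhds_encard_preimage_le (c₀ := c)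
    hf.continuous.continuousOn (S := X \ g '' closedBall 0 R) sdiff_subset
    fun x hx hxc => hgoodX x hx (by rw [hxc]; exact hct)
  refine hy₀.2 ⟨f ⁻¹' ball (f y₀) δ, (isOpen_ball.preimage hf.continuous).mem_nhds
    (mem_ball_self hδ), k₂ + k₁, fun b => ?_⟩
  by_cases hb : b ∈ ball (f y₀) δ
  · refine (encard_le_encard ?_).trans (encard_inter_preimage_le hYc hf hYdom isOpen_ball
      (convex_ball _ _).isPreconnected (O := O₁ ∩ O₂ ∩ ball (f y₀) δ)
      ((hO₁.inter hO₂).inter isOpen_ball) ⟨c, ⟨hcO₁, hcO₂⟩, hcB⟩ inter_subset_right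
      (k := k₂ + k₁) ?_ hb)
    · rintro x ⟨⟨hx, -⟩, hxb⟩
      exact ⟨subset_closure ⟨hx.1, fun hxg => hx.2
        (image_mono (closedBall_subset_closedBall hr.2.le) hxg)⟩, hxb⟩
    · rintro b' ⟨⟨hb1, hb2⟩, -⟩
      have hsub : Y ∩ f ⁻¹' {b'} ⊆ (X \ g '' closedBall 0 R ∩ f ⁻¹' {b'}) ∪
          (g '' closedBall 0 R ∩ f ⁻¹' {b'}) := by
        rintro x ⟨hxY, hxb⟩
        by_cases hxg : x ∈ g '' closedBall 0 R
        · exact Or.inr ⟨hxg, hxb⟩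
        · exact Or.inl ⟨⟨hYX hxY, hxg⟩, hxb⟩
      push_cast
      exact (encard_le_encard hsub).trans
        ((encard_union_le _ _).trans (add_le_add (hk₂ b' hb2) (hk₁ b' hb1)))
  · have : (X \ g '' closedBall 0 R) ∩ f ⁻¹' ball (f y₀) δ ∩ f ⁻¹' {b} = ∅ := by
      rw [eq_empty_iff_forall_notMem]
      rintro x ⟨⟨-, hx⟩, hxb⟩
      rw [mem_preimage, mem_singleton_iff] at hxb
      rw [mem_preimage, hxb] at hx
      exact hb hx
    rw [this]
    simp
end

section
variable {m : ℕ} {g : ℂ → Fin m → ℂ} {K : Set (Fin m → ℂ)} {ρ R : ℝ}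

theorem IsEmbeddedDisc.exists_entire_deriv_ne_zero (h : IsEmbeddedDisc g ρ) (hK : IsCompact K)
    {a : ℂ} (ha : a ∈ ball 0 ρ) (haK : g a ∉ entireHull K) :
    ∃ f : (Fin m → ℂ) → ℂ, Differentiable ℂ f ∧ f (g a) = 1 ∧ (∀ x ∈ K, ‖f x‖ ≤ 1 / 2) ∧
      deriv (fun z => f (g z)) a ≠ 0 := by
  obtain ⟨p, hp, hpK, hpa⟩ := exists_entire_small_large hK haK (a := 1 / 4) (b := 1) (by norm_num)
  have hp0 : p (g a) ≠ 0 := by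
    intro h0
    rw [h0, norm_zero] at hpa
    linarith
  have hp4 : ∀ x ∈ K, ‖p x / p (g a)‖ ≤ 1 / 4 := by
    intro x hx
    rw [norm_div, div_le_iff₀ (by linarith)]
    have := hpK x hx
    linarith
  have hqd : Differentiable ℂ fun x => p x / p (g a) := by
    simp only [div_eq_mul_inv]
    exact hp.mul_const _
  have hga := h.differentiableAt ha
  by_cases hder : deriv (fun z => p (g z) / p (g a)) a = 0
  · obtain ⟨i, hi⟩ := h.exists_deriv_apply_ne_zero ha
    have hid : Differentiable ℂ fun x : Fin m → ℂ => x i - g a i :=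
      (differentiable_apply i).sub_const _
    obtain ⟨C, hC⟩ := hK.exists_bound_of_continuousOn hid.continuous.continuousOn
    have hC0 : (0 : ℝ) < 4 * (|C| + 1) := by positivity
    set ε : ℂ := ((1 / (4 * (|C| + 1)) : ℝ) : ℂ) with hε
    have hεn : ‖ε‖ = 1 / (4 * (|C| + 1)) := by
      rw [hε, Complex.norm_real, Real.norm_of_nonneg (by positivity)]
    have hε0 : ε ≠ 0 := by
      rw [← norm_pos_iff, hεn]; positivity
    refine ⟨fun x => p x / p (g a) + ε * (x i - g a i), hqd.add (hid.const_mul ε),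
      by simp [hp0], fun x hx => ?_, ?_⟩
    · have h1 : ‖ε * (x i - g a i)‖ ≤ 1 / 4 := by
        rw [norm_mul, hεn, div_mul_eq_mul_div, one_mul, div_le_iff₀ hC0]
        have := hC x hx
        have := le_abs_self C
        linarith
      calc _ ≤ _ := norm_add_le _ _
        _ ≤ 1 / 4 + 1 / 4 := add_le_add (hp4 x hx) h1
        _ = _ := by norm_num
    · have d1 : DifferentiableAt ℂ (fun z => p (g z) / p (g a)) a :=
        (hqd (g a)).comp a hga
      have d2 : DifferentiableAt ℂ (fun z => g z i) a := differentiableAt_pi.1 hga i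
      have : deriv (fun z => p (g z) / p (g a) + ε * (g z i - g a i)) a =
          ε * deriv (fun z => g z i) a := by
        rw [deriv_fun_add d1 ((d2.sub_const _).const_mul ε), hder, zero_add,
          deriv_const_mul _ (d2.sub_const _), deriv_sub_const]
      rw [this]
      exact mul_ne_zero hε0 hi
  · exact ⟨_, hqd, div_self hp0, fun x hx => (hp4 x hx).trans (by norm_num), hder⟩

theorem mem_nhds_of_mem_closure_interior (h : IsEmbeddedDisc g ρ) (hK : IsCompact K)
    (hKc : entireHull K ⊆ K) (hR1 : 1 < R) (hR : R < ρ) (hgK : ∀ z ∈ ball 0 ρ, g z ∉ K) {a : ℂ}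
    (ha : a ∈ ball 0 R) (ha1 : 1 < ‖a‖)
    (hcl : a ∈ closure (interior (g ⁻¹' entireHull (K ∪ g '' closedBall 0 1)))) :
    g ⁻¹' entireHull (K ∪ g '' closedBall 0 1) ∈ 𝓝 a := by
  set L := K ∪ g '' closedBall 0 1 with hL
  set X := entireHull L with hX
  have hLc : IsCompact L := hK.union (h.isCompact_image (hR1.trans hR))
  have hXc : IsCompact X := hLc.entireHull
  have haρ : a ∈ ball 0 ρ := ball_subset_ball hR.le ha
  have haL : g a ∉ L := by
    rintro (hz | ⟨z, hz, hzz⟩)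
    · exact hgK a haρ hz
    · rw [h.injOn (closedBall_subset_ball (hR1.trans hR) hz) haρ hzz] at hz
      rw [mem_closedBall_zero_iff] at hz
      linarith
  have hgc : ContinuousAt g a := (h.differentiableAt haρ).continuousAt
  have haX : g a ∈ X := by
    rw [← hXc.isClosed.closure_eq]
    exact hgc.continuousWithinAt.mem_closure (s := interior (g ⁻¹' X)) hcl
      fun z hz => interior_subset (s := g ⁻¹' X) hz
  obtain ⟨f, hf, hfa, hfK, hda⟩ := h.exists_entire_deriv_ne_zero hK haρ
    fun haK => hgK a haρ (hKc haK)
  have hφan : AnalyticAt ℂ (fun z => f (g z)) a :=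
    (h.differentiableOn_comp hf).analyticAt (isOpen_ball.mem_nhds haρ)
  obtain ⟨ψ, hψa, δ₀, hδ₀, hψd, hψr, hψl⟩ := hφan.exists_local_inverse hda
  rw [hfa] at hψa hψd hψr
  obtain ⟨N₀, hN₀, k₀, hk₀⟩ := exists_nhds_encard_le h hK hR1 hR hf hfK haρ hda haX
    (by rw [hfa]; norm_num)
  obtain ⟨O₁, hO₁, haO₁, hO₁V⟩ := h.exists_nhds_mem hR haρ hψl
  obtain ⟨s₀, hs₀, hs₀O, hs₀L⟩ := exists_closedBall_subset_of_notMem hLc.isClosed haL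
    (inter_mem (hO₁.mem_nhds haO₁) hN₀)
  set G : ℂ → Fin m → ℂ := fun c => g (ψ c) with hG
  have hsplit : ∀ x ∈ X, x ∈ closedBall (g a) s₀ →
      x ∈ (X \ g '' closedBall 0 R) ∩ N₀ ∨ x = G (f x) := by
    intro x hx hxs
    by_cases hxg : x ∈ g '' closedBall 0 R
    · obtain ⟨z, hz, rfl⟩ := hxg
      right
      have : ψ (f (g z)) = z := hO₁V z hz (hs₀O hxs).1
      simp only [hG, this]
    · exact Or.inl ⟨⟨hx, hxg⟩, (hs₀O hxs).2⟩
  have hfin : (X ∩ closedBall (g a) s₀ ∩ f ⁻¹' {1}).Finite := by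
    refine ((finite_of_encard_le_coe (hk₀ 1)).union (finite_singleton (G 1))).subset ?_
    rintro x ⟨⟨hx, hxs⟩, hx1⟩
    rcases hsplit x hx hxs with hx' | hx'
    · exact Or.inl ⟨hx', hx1⟩
    · right
      rw [mem_preimage, mem_singleton_iff] at hx1
      rwa [hx1] at hx'
  obtain ⟨s, ⟨hs, hss⟩, hsn⟩ := ((Ioo_infinite hs₀).sdiff (hfin.image fun x => dist x (g a))).nonempty
  have hsub : closedBall (g a) s ⊆ closedBall (g a) s₀ := closedBall_subset_closedBall hss.le
  have hfs : (1 : ℂ) ∉ f '' (X ∩ sphere (g a) s) := by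
    rintro ⟨x, ⟨hx, hxs⟩, hx1⟩
    exact hsn ⟨x, ⟨⟨hx, hsub (sphere_subset_closedBall hxs)⟩, hx1⟩, hxs⟩
  have hfsc : IsClosed (f '' (X ∩ sphere (g a) s)) :=
    ((hXc.inter_right isClosed_sphere).image hf.continuous).isClosed
  have hψc : ContinuousAt ψ 1 := hψd.continuousOn.continuousAt (ball_mem_nhds _ hδ₀)
  have hGc : ContinuousAt G 1 := ContinuousAt.comp (by rwa [hψa]) hψc
  have hG1 : G 1 = g a := by simp only [hG, hψa]
  obtain ⟨δ, hδ, hδsub⟩ := Metric.nhds_basis_closedBall.mem_iff.1 (inter_mem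
    (inter_mem (hfsc.isOpen_compl.mem_nhds hfs) (ball_mem_nhds 1 hδ₀))
    (inter_mem (hψc.preimage_mem_nhds (by rw [hψa]; exact isOpen_ball.mem_nhds haρ))
      (hGc.preimage_mem_nhds (by rw [hG1]; exact ball_mem_nhds (g a) hs))))
  have hδρ : ∀ c ∈ closedBall 1 δ, ψ c ∈ ball 0 ρ := fun c hc => (hδsub hc).2.1
  have hδG : ∀ c ∈ closedBall 1 δ, G c ∈ ball (g a) s := fun c hc => (hδsub hc).2.2
  have hfG : ∀ c ∈ closedBall 1 δ, f (G c) = c := fun c hc => hψr c (hδsub hc).1.2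
  have hGd : ContinuousOn G (closedBall 1 δ) := h.differentiableOn.continuousOn.comp
    (hψd.continuousOn.mono fun c hc => (hδsub hc).1.2) hδρ
  have hBsub : ball (1 : ℂ) δ ⊆ closedBall 1 δ := ball_subset_closedBall
  have hGdiff : DifferentiableOn ℂ G (ball 1 δ) := h.differentiableOn.comp
    (hψd.mono fun c hc => (hδsub (hBsub hc)).1.2) fun c hc => hδρ c (hBsub hc)
  have hGinj : InjOn G (ball 1 δ) := fun c hc c' hc' he => by
    rw [← hfG c (hBsub hc), he, hfG c' (hBsub hc')]
  set Z := X ∩ closedBall (g a) s with hZ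
  have hZc : IsCompact Z := hXc.inter_right isClosed_closedBall
  have hZdom : ∀ x ∈ Z, f x ∈ ball 1 δ → DominatedNear Z x := by
    rintro x ⟨hx, hxs⟩ hxB
    have hxs' : x ∈ ball (g a) s := lt_of_le_of_ne hxs fun he =>
      (hδsub (hBsub hxB)).1.1 ⟨x, ⟨hx, he⟩, rfl⟩
    have hxL : x ∉ L := disjoint_left.1 hs₀L (hsub hxs)
    exact (dominatedNear_entireHull hLc hx hxL).mono_nhds (isOpen_ball.mem_nhds hxs')
      (inter_subset_inter_right _ ball_subset_closedBall)
  set Z' := Z ∪ G '' closedBall 1 δ with hZ'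
  have hZ'c : IsCompact Z' := hZc.union ((isCompact_closedBall _ _).image_of_continuousOn hGd)
  have hZ'dom : ∀ x ∈ Z', f x ∈ ball 1 δ → DominatedNear Z' x := by
    rintro x (hx | ⟨c, hc, rfl⟩) hxB
    · exact (hZdom x hx hxB).mono subset_union_left
    · rw [hfG c hc] at hxB
      obtain ⟨η, hη, hηB⟩ := Metric.isOpen_iff.1 isOpen_ball c hxB
      refine dominatedNear_of_disc hη (hGdiff.mono hηB) (hGinj.mono hηB) ?_
      exact (image_mono (hηB.trans hBsub)).trans subset_union_right
  have hbdd : ∃ k : ℕ, ∀ c ∈ ball (1 : ℂ) δ, (Z' ∩ f ⁻¹' {c}).encard ≤ k := by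
    refine ⟨k₀ + 1, fun c hc => ?_⟩
    have hsub' : Z' ∩ f ⁻¹' {c} ⊆
        ((X \ g '' closedBall 0 R) ∩ N₀ ∩ f ⁻¹' {c}) ∪ {G c} := by
      rintro x ⟨hx | ⟨c', hc', rfl⟩, hxc⟩ <;> rw [mem_preimage, mem_singleton_iff] at hxc
      · rcases hsplit x hx.1 (hsub hx.2) with hx' | hx'
        · exact Or.inl ⟨hx', hxc⟩
        · right
          rwa [hxc] at hx'
      · right
        rw [hfG c' hc'] at hxc
        rw [hxc]
        rfl
    push_cast
    refine (encard_le_encard hsub').trans ((encard_union_le _ _).trans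
      (add_le_add (hk₀ c) ?_))
    rw [encard_singleton]
  classical
  set k := Nat.find hbdd with hk
  have hkle := Nat.find_spec hbdd
  rw [← hk] at hkle
  have h1B : (1 : ℂ) ∈ ball (1 : ℂ) δ := mem_ball_self hδ
  obtain ⟨j, hj⟩ : ∃ j, k = j + 1 := by
    refine Nat.exists_eq_succ_of_ne_zero fun h0 => ?_
    have := hkle 1 h1B
    rw [h0, Nat.cast_zero, nonpos_iff_eq_zero, encard_eq_zero] at this
    exact notMem_empty (G 1) (this ▸ ⟨Or.inr ⟨1, hBsub h1B, rfl⟩, hfG 1 (hBsub h1B)⟩)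
  have hjn : ¬ ∀ c ∈ ball (1 : ℂ) δ, (Z' ∩ f ⁻¹' {c}).encard ≤ j :=
    Nat.find_min hbdd (by omega)
  have hnear : ∀ᶠ z in 𝓝 a, ψ (f (g z)) = z ∧ f (g z) ∈ ball (1 : ℂ) δ := by
    refine hψl.and (hφan.continuousAt.eventually_mem ?_)
    rw [hfa]
    exact ball_mem_nhds _ hδ
  have hψB : ContinuousOn ψ (ball 1 δ) := hψd.continuousOn.mono fun c hc => (hδsub (hBsub hc)).1.2
  -- over some value the full fibre count is attained inside the hull
  obtain ⟨c₁, hc₁, hjc₁⟩ : ∃ c₁ ∈ ball (1 : ℂ) δ, j < (Z ∩ f ⁻¹' {c₁}).encard := by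
    by_contra! hall
    refine hjn fun c hc => encard_inter_preimage_le hZ'c hf hZ'dom isOpen_ball
      (convex_ball _ _).isPreconnected
      (hψB.isOpen_inter_preimage isOpen_ball (isOpen_interior (s := g ⁻¹' X))) ?_
      inter_subset_left (fun b hb => ?_) hc
    · obtain ⟨z, ⟨hz, hzB⟩, hzE⟩ := mem_closure_iff_nhds.1 hcl _ hnear
      exact ⟨f (g z), hzB, by rwa [mem_preimage, hz]⟩
    · refine (encard_le_encard ?_).trans (hall b hb.1)
      rintro x ⟨hx | ⟨c', hc', rfl⟩, hxb⟩
      · exact ⟨hx, hxb⟩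
      · refine ⟨⟨?_, ball_subset_closedBall (hδG c' hc')⟩, hxb⟩
        rw [mem_preimage, mem_singleton_iff, hfG c' hc'] at hxb
        rw [hxb]
        exact interior_subset (s := g ⁻¹' X) hb.2
  have hGX : ∀ c ∈ ball (1 : ℂ) δ, G c ∈ X := by
    by_contra! hex
    obtain ⟨c₂, hc₂, hc₂X⟩ := hex
    refine absurd (encard_inter_preimage_le hZc hf hZdom isOpen_ball
      (convex_ball _ _).isPreconnected
      (hGdiff.continuousOn.isOpen_inter_preimage isOpen_ball hXc.isClosed.isOpen_compl)
      ⟨c₂, hc₂, hc₂X⟩ inter_subset_left (fun b hb => ?_) hc₁) (not_le.2 hjc₁)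
    have hins : insert (G b) (Z ∩ f ⁻¹' {b}) ⊆ Z' ∩ f ⁻¹' {b} := by
      refine insert_subset ⟨Or.inr ⟨b, hBsub hb.1, rfl⟩, hfG b (hBsub hb.1)⟩ ?_
      exact inter_subset_inter_left _ subset_union_left
    have := (encard_le_encard hins).trans (hkle b hb.1)
    rw [encard_insert_of_notMem fun hm => hb.2 hm.1.1, hj] at this
    push_cast at this
    exact (ENat.add_le_add_iff_right ENat.one_ne_top).1 this
  filter_upwards [hnear] with z ⟨hz, hzB⟩
  have := hGX _ hzB
  simp only [hG, hz] at this
  exact this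
end

theorem isPreconnected_annulus {R : ℝ} (hR : 0 < R) : IsPreconnected {z : ℂ | 1 < ‖z‖ ∧ ‖z‖ < R} := by
  have hconv : Convex ℝ (Complex.re ⁻¹' Ioo 0 (Real.log R)) :=
    (convex_Ioo _ _).linear_preimage Complex.reLm
  convert hconv.isPreconnected.image Complex.exp Complex.continuous_exp.continuousOn using 1
  ext z
  constructor
  · rintro ⟨h1, h2⟩
    have hz : z ≠ 0 := by
      rw [← norm_pos_iff]; linarith
    refine ⟨Complex.log z, ?_, Complex.exp_log hz⟩
    rw [mem_preimage, Complex.log_re]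
    exact ⟨Real.log_pos h1, Real.log_lt_log (by linarith) h2⟩
  · rintro ⟨w, ⟨h1, h2⟩, rfl⟩
    rw [mem_ofPred_eq, Complex.norm_exp]
    exact ⟨Real.one_lt_exp_iff.2 h1, (Real.lt_log_iff_exp_lt hR).1 h2⟩

section
variable {m : ℕ} {g : ℂ → Fin m → ℂ} {K : Set (Fin m → ℂ)} {ρ : ℝ}

theorem entireHull_union_subset (h : IsEmbeddedDisc g ρ) (hρ : 1 < ρ) (hK : IsCompact K)
    (hKc : entireHull K ⊆ K) (hgK : ∀ z ∈ ball 0 ρ, g z ∉ K) :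
    entireHull (K ∪ g '' closedBall 0 1) ⊆ K ∪ g '' closedBall 0 1 := by
  obtain ⟨R, hR1, hR⟩ := exists_between hρ
  set L := K ∪ g '' closedBall 0 1 with hL
  set X := entireHull L with hX
  have hLc : IsCompact L := hK.union (h.isCompact_image hρ)
  have hXc : IsCompact X := hLc.entireHull
  set A : Set ℂ := {z : ℂ | 1 < ‖z‖ ∧ ‖z‖ < R} with hA
  have hAR : ∀ z ∈ A, z ∈ ball (0 : ℂ) R := fun z hz => mem_ball_zero_iff.2 hz.2
  rcases (A ∩ interior (g ⁻¹' X)).eq_empty_or_nonempty with he | hne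
  · -- the hull meets the annulus only along the closure of its part off the larger disc
    have hEA : ∀ z ∈ A, g z ∈ X → g z ∈ closure (X \ g '' closedBall 0 R) := by
      intro z hz hzX
      by_contra hcl
      have := mem_nhds_of_notMem_closure_diff h hK hR1.le hR (hAR z hz) hz.1
        (hgK z (ball_subset_ball hR.le (hAR z hz))) hzX hcl
      exact notMem_empty z (he ▸ ⟨hz, mem_interior_iff_mem_nhds.2 this⟩)
    set X' := closure (X \ g '' closedBall 0 1) with hX'
    have hX'X : X' ⊆ X := closure_minimal sdiff_subset hXc.isClosed
    have hX'c : IsCompact X' := hXc.of_isClosed_subset isClosed_closure hX'X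
    have hsc : IsClosed (g '' sphere 0 R) := ((isCompact_sphere _ _).image_of_continuousOn
      ((h.continuousOn_closedBall hR).mono sphere_subset_closedBall)).isClosed
    have hcover : X' ⊆ closure (X \ g '' closedBall 0 R) ∪ g '' sphere 0 R := by
      refine closure_minimal ?_ (isClosed_closure.union hsc)
      rintro x ⟨hx, hx1⟩
      by_cases hxR : x ∈ g '' closedBall 0 R
      · obtain ⟨z, hz, rfl⟩ := hxR
        rw [mem_closedBall_zero_iff] at hz
        have hz1 : 1 < ‖z‖ := by
          by_contra! hle
          exact hx1 ⟨z, mem_closedBall_zero_iff.2 hle, rfl⟩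
        rcases hz.lt_or_eq with hlt | heq
        · exact Or.inl (hEA z ⟨hz1, hlt⟩ hx)
        · exact Or.inr ⟨z, mem_sphere_zero_iff_norm.2 heq, rfl⟩
      · exact Or.inl (subset_closure ⟨hx, hxR⟩)
    have hdom : ∀ x ∈ X', x ∉ K → DominatedNear X' x := by
      intro x hx hxK
      by_cases hxg : x ∈ g '' closedBall 0 1
      · obtain ⟨z, hz, rfl⟩ := hxg
        have hzR : z ∈ ball 0 R := closedBall_subset_ball hR1 hz
        have hcl : g z ∈ closure (X \ g '' closedBall 0 R) := by
          rcases hcover hx with hx' | ⟨w, hw, hwz⟩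
          · exact hx'
          · rw [h.injOn (closedBall_subset_ball hR (sphere_subset_closedBall hw))
              (ball_subset_ball hR.le hzR) hwz, mem_sphere_zero_iff_norm] at hw
            rw [mem_ball_zero_iff] at hzR
            linarith
        refine (dominatedNear_closure_diff h hK hR1.le hR hzR hxK hcl).mono (closure_mono ?_)
        exact sdiff_subset_sdiff_right (image_mono (closedBall_subset_closedBall hR1.le))
      · have hxL : x ∉ L := fun hxL => hxL.elim hxK hxg
        exact (dominatedNear_entireHull hLc (hX'X hx) hxL).mono_nhds
          ((h.isCompact_image hρ).isClosed.isOpen_compl.mem_nhds hxg)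
          fun z hz => subset_closure hz
    have hX'K : X' ⊆ K := ((subset_entireHull_of_dominatedNear hX'c hdom).trans
      (entireHull_mono inter_subset_right)).trans hKc
    intro x hx
    by_cases hxg : x ∈ g '' closedBall 0 1
    · exact Or.inr hxg
    · exact Or.inl (hX'K (subset_closure ⟨hx, hxg⟩))
  · have hsub : A ⊆ interior (g ⁻¹' X) := by
      refine (isPreconnected_annulus (by linarith)).subset_of_closure_inter_subset isOpen_interior hne ?_
      rintro z ⟨hzc, hzA⟩
      exact mem_interior_iff_mem_nhds.2
        (mem_nhds_of_mem_closure_interior h hK hKc hR1 hR hgK (hAR z hzA) hzA.1 hzc)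
    have hdisc : g '' ball 0 R ⊆ X := by
      rintro _ ⟨z, hz, rfl⟩
      rcases le_or_gt ‖z‖ 1 with hz1 | hz1
      · exact subset_entireHull L (Or.inr ⟨z, mem_closedBall_zero_iff.2 hz1, rfl⟩)
      · exact interior_subset (s := g ⁻¹' X) (hsub ⟨hz1, mem_ball_zero_iff.1 hz⟩)
    have hdom : ∀ x ∈ X, x ∉ K → DominatedNear X x := by
      intro x hx hxK
      by_cases hxg : x ∈ g '' closedBall 0 1
      · obtain ⟨z, hz, rfl⟩ := hxg
        obtain ⟨η, hη, hηR⟩ := Metric.isOpen_iff.1 isOpen_ball z (closedBall_subset_ball hR1 hz)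
        have hηρ := hηR.trans (ball_subset_ball hR.le)
        exact dominatedNear_of_disc hη (h.differentiableOn.mono hηρ) (h.injOn.mono hηρ)
          ((image_mono hηR).trans hdisc)
      · exact dominatedNear_entireHull hLc hx fun hxL => hxL.elim hxK hxg
    have hXK : X ⊆ K := ((subset_entireHull_of_dominatedNear hXc hdom).trans
      (entireHull_mono inter_subset_right)).trans hKc
    exact hXK.trans subset_union_left
end

section
variable {n : ℕ}

theorem le_sSup_norm_image {K : Set (EuclideanSpace ℂ (Fin n))} (hK : IsCompact K)
    {f : EuclideanSpace ℂ (Fin n) → ℂ} (hf : Differentiable ℂ f) {w : EuclideanSpace ℂ (Fin n)}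
    (hw : w ∈ K) : ‖f w‖ ≤ sSup ((fun w => ‖f w‖) '' K) :=
  le_csSup (hK.image hf.continuous.norm).bddAbove ⟨w, hw, rfl⟩

theorem subset_holomorphicHull {K : Set (EuclideanSpace ℂ (Fin n))} (hK : IsCompact K) :
    K ⊆ holomorphicHull K := fun _ hw _ hf => le_sSup_norm_image hK hf hw

theorem entireHull_image_subset {K : Set (EuclideanSpace ℂ (Fin n))} (hK : IsCompact K) :
    entireHull (EuclideanSpace.equiv (Fin n) ℂ '' K) ⊆
      EuclideanSpace.equiv (Fin n) ℂ '' holomorphicHull K := by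
  intro y hy
  refine ⟨(EuclideanSpace.equiv (Fin n) ℂ).symm y, fun f hf => ?_,
    (EuclideanSpace.equiv (Fin n) ℂ).apply_symm_apply y⟩
  obtain ⟨_, ⟨w, hw, rfl⟩, hle⟩ := hy (fun x => f ((EuclideanSpace.equiv (Fin n) ℂ).symm x))
    (hf.comp (EuclideanSpace.equiv (Fin n) ℂ).symm.differentiable)
  rw [ContinuousLinearEquiv.symm_apply_apply] at hle
  exact hle.trans (le_sSup_norm_image hK hf hw)

theorem image_holomorphicHull_subset {K : Set (EuclideanSpace ℂ (Fin n))} (hK : IsCompact K)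
    (hne : K.Nonempty) : EuclideanSpace.equiv (Fin n) ℂ '' holomorphicHull K ⊆
      entireHull (EuclideanSpace.equiv (Fin n) ℂ '' K) := by
  rintro _ ⟨z, hz, rfl⟩ F hF
  have hd : Differentiable ℂ fun x => F (EuclideanSpace.equiv (Fin n) ℂ x) :=
    hF.comp (EuclideanSpace.equiv (Fin n) ℂ).differentiable
  obtain ⟨w, hw, hmax⟩ := hK.exists_isMaxOn hne hd.continuous.norm.continuousOn
  refine ⟨_, ⟨w, hw, rfl⟩, (hz _ hd).trans (csSup_le (hne.image _) ?_)⟩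
  rintro _ ⟨v, hv, rfl⟩
  exact hmax hv

theorem holomorphicHull_union_image_closedBall {K : Set (EuclideanSpace ℂ (Fin n))}
    (hK : IsCompact K) (hKconv : holomorphicHull K = K) {D : Set ℂ} (hD : IsOpen D)
    (hDdisk : closedBall (0 : ℂ) 1 ⊆ D) {g : ℂ → EuclideanSpace ℂ (Fin n)}
    (hghol : DifferentiableOn ℂ g D) (hginj : InjOn g D) (hgderiv : ∀ z ∈ D, fderiv ℂ g z ≠ 0)
    (hgK : Disjoint (g '' D) K) :
    holomorphicHull (K ∪ g '' closedBall 0 1) = K ∪ g '' closedBall 0 1 := by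
  set e := EuclideanSpace.equiv (Fin n) ℂ with he
  obtain ⟨δ, hδ, hδD⟩ := (isCompact_closedBall (0 : ℂ) 1).exists_thickening_subset_open hD hDdisk
  rw [thickening_closedBall hδ zero_le_one] at hδD
  have hdisc : IsEmbeddedDisc (fun z => e (g z)) (δ + 1) := by
    refine ⟨e.differentiable.comp_differentiableOn (hghol.mono hδD),
      e.injective.comp_injOn (hginj.mono hδD), fun z hz h0 => hgderiv z (hδD hz) ?_⟩
    have hd : HasDerivAt g (deriv g z) z :=
      (hghol.differentiableAt (hD.mem_nhds (hδD hz))).hasDerivAt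
    have hed : HasDerivAt (fun z => e (g z)) (e (deriv g z)) z :=
      e.toContinuousLinearMap.hasFDerivAt.comp_hasDerivAt z hd
    rw [hed.deriv, map_eq_zero_iff _ e.injective] at h0
    rw [hd.hasFDerivAt.fderiv, h0]
    ext
    simp
  have hLc : IsCompact (K ∪ g '' closedBall 0 1) := hK.union
    ((isCompact_closedBall _ _).image_of_continuousOn (hghol.continuousOn.mono hDdisk))
  have himg : e '' (K ∪ g '' closedBall 0 1) = e '' K ∪ (fun z => e (g z)) '' closedBall 0 1 := by
    rw [image_union, image_image]
  have hmain := entireHull_union_subset hdisc (by linarith) (hK.image e.continuous)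
    ((entireHull_image_subset hK).trans (by rw [hKconv])) (by
      rintro z hz ⟨w, hw, hwz⟩
      rw [e.injective hwz] at hw
      exact disjoint_left.1 hgK ⟨z, hδD hz, rfl⟩ hw)
  rw [← himg] at hmain
  refine Subset.antisymm ?_ (subset_holomorphicHull hLc)
  exact (image_subset_image_iff e.injective).1 ((image_holomorphicHull_subset hLc
    ⟨g 0, Or.inr ⟨0, mem_closedBall_self zero_le_one, rfl⟩⟩).trans hmain)

end

end

/-- **Attaching an embedded closed disk to a holomorphically convex compact set
preserves holomorphic convexity.**  If `K ⊆ ℂⁿ` is compact and `O(ℂⁿ)`-convex,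
`D ⊆ ℂ` is an open neighborhood of the closed unit disk, and `g : D → ℂⁿ` is an
injective holomorphic map with nowhere-vanishing derivative whose image misses
`K`, then `K ∪ g(𝔻̄)` is `O(ℂⁿ)`-convex. -/
theorem hull_union_embedded_disk
    (n : ℕ) (hn : 1 ≤ n)
    (K : Set (EuclideanSpace ℂ (Fin n))) (hK : IsCompact K)
    (hKconv : holomorphicHull K = K)
    (D : Set ℂ) (hD : IsOpen D) (hDdisk : Metric.closedBall (0:ℂ) 1 ⊆ D)
    (g : ℂ → EuclideanSpace ℂ (Fin n))
    (hghol : DifferentiableOn ℂ g D)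
    (hginj : Set.InjOn g D)
    (hgderiv : ∀ z ∈ D, fderiv ℂ g z ≠ 0)
    (hgK : Disjoint (g '' D) K) :
    holomorphicHull (K ∪ g '' Metric.closedBall (0:ℂ) 1)
      = K ∪ g '' Metric.closedBall (0:ℂ) 1 := by
  exact holomorphicHull_union_image_closedBall hK hKconv hD hDdisk hghol hginj hgderiv hgK
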